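/- arXiv:0810.5219 — 2 statements merged into one kernel-verified Lean document; each statement's English description precedes it below -/
import Mathlib

section
/- Let q ≥ 1 be an integer and let Q1, Q2, P1, P2 be real numbers with 0 ≤ P1, P2 ≤ q. Then the number Φ of pairs of integers (u, v) with Q1 < u ≤ Q1 + P1, Q2 < v ≤ Q2 + P2, and uv ≡ 1 (mod q), satisfies Φ = (φ(q)/q²)·P1·P2 + O(σ_0(q)·log²(q+1)·q^{1/2}), with an absolute implied constant. -/
/-- Number of integer points `(u,v)` in the box `(Q1, Q1+P1] × (Q2, Q2+P2]`
with `u v ≡ 1 (mod q)`. -/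
noncomputable def boxCount (q : ℕ) (Q1 Q2 P1 P2 : ℝ) : ℕ :=
  Set.ncard {p : ℤ × ℤ | Q1 < (p.1 : ℝ) ∧ (p.1 : ℝ) ≤ Q1 + P1 ∧
    Q2 < (p.2 : ℝ) ∧ (p.2 : ℝ) ≤ Q2 + P2 ∧ p.1 * p.2 ≡ 1 [ZMOD q]}

/-!
Expanding the indicators of both intervals in additive characters modulo `q` turns the count into
`q⁻² ∑ A(h) B(k) S(h, k)`, where `S` is the Kloosterman sum modulo `q` and
`|A(h)|, |B(h)| ≤ q (1/h + 1/(q - h))` for `0 < h < q`. The zero frequency is the main term, since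
`S(0, 0) = φ(q)`. On the axes `S(h, 0)` is a Ramanujan sum, at most `gcd(h, q)` in absolute value.
At the other frequencies `|S(h, k)| ≤ σ₀(q) √q √gcd(h, q)` up to an absolute factor, and the weights
`1/h` cost one logarithm for each coordinate; the factor `√gcd(h, q)` is harmless because
`∑ √d / d²` converges.

The bound for `S` reduces by the Chinese remainder theorem to prime powers. Modulo `p ^ k` with
`2 ≤ k` it is a stationary phase computation: averaging over the units congruent to `1` modulo
`p ^ ⌈k/2⌉` leaves the solutions of `a x² ≡ b`, and for odd `k` a quadratic Gauss sum. Modulo `p`,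
the `L`-function of the sum is a quadratic polynomial, so the sums over the extensions of degree
`n` are `-(α ^ n + β ^ n)`; Stepanov's method shows that the fibres of the trace of `a x + b / x`
are equidistributed with square-root error, which forces `|α|, |β| ≤ √p`.
-/

namespace Kloosterman

open Polynomial

/-! ### Stepanov's method -/

section Stepanov

theorem linearIndependent_X_pow_mul {R : Type*} [CommRing R] [NoZeroDivisors R] {V : ℕ → R[X]}
    (hV : ∀ e, (V e).coeff 0 ≠ 0) : LinearIndependent R fun e => X ^ e * V e := by
  rw [linearIndependent_iff']
  intro s g hg e
  induction e using Nat.strong_induction_on with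
  | _ e ih =>
    intro he
    have hcoeff : ∑ i ∈ s, g i * (X ^ i * V i).coeff e = 0 := by
      simpa [finsetSum_coeff] using congrArg (fun f => coeff f e) hg
    rw [Finset.sum_eq_single_of_mem e he, coeff_X_pow_mul', if_pos le_rfl, Nat.sub_self] at hcoeff
    · exact (mul_eq_zero.mp hcoeff).resolve_right (hV e)
    · intro i hi hne
      rcases hne.lt_or_gt with hlt | hgt
      · rw [ih i hlt hi, zero_mul]
      · rw [coeff_X_pow_mul', if_neg hgt.not_ge, mul_zero]

theorem not_linearIndependent_of_degree_lt {K ι : Type*} [Field K] [Fintype ι] {M : ℕ}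
    (hM : M < Fintype.card ι) {v : ι → K[X]} (hv : ∀ i, (v i).degree < M) :
    ¬ LinearIndependent K v := by
  intro h
  have := Module.Finite.equiv (degreeLTEquiv K M).symm
  have hle := (LinearIndependent.of_comp (degreeLT K M).subtype
    (v := fun i => (⟨v i, mem_degreeLT.mpr (hv i)⟩ : degreeLT K M)) h).fintype_card_le_finrank
  rw [(degreeLTEquiv K M).finrank_eq, Module.finrank_fin_fun] at hle
  exact hM.not_ge hle

variable {F : Type*} [Field F] [Fintype F]

local notation "q" => Fintype.card F

/-- The polynomial `X ^ q ^ n * ∑ i ≤ n, (a X + b X⁻¹) ^ q ^ i` over `𝔽_q`. The inner sum is one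
half of the trace of `a x + b x⁻¹` from an extension of degree `2 (n + 1)`. -/
noncomputable def halfTrace (a b : F) (n : ℕ) : F[X] :=
  ∑ i ∈ Finset.range (n + 1), (C a * X ^ (q ^ n + q ^ i) + C b * X ^ (q ^ n - q ^ i))

theorem coeff_zero_halfTrace (a b : F) (n : ℕ) : (halfTrace a b n).coeff 0 = b := by
  have hlt (i : ℕ) (hi : i < n) : q ^ i < q ^ n := Nat.pow_lt_pow_right Fintype.one_lt_card hi
  have hterm (i : ℕ) : (C a * X ^ (q ^ n + q ^ i) + C b * X ^ (q ^ n - q ^ i)).coeff 0 =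
      if q ^ n ≤ q ^ i then b else 0 := by
    simp [coeff_X_pow, eq_comm (a := 0), Nat.sub_eq_zero_iff_le]
  rw [halfTrace, finsetSum_coeff, Finset.sum_range_succ, hterm, if_pos le_rfl,
    Finset.sum_eq_zero, zero_add]
  intro i hi
  rw [hterm, if_neg (hlt i (Finset.mem_range.mp hi)).not_ge]

theorem natDegree_halfTrace_le (a b : F) (n : ℕ) : (halfTrace a b n).natDegree ≤ 2 * q ^ n := by
  refine natDegree_sum_le_of_forall_le _ _ fun i hi => ?_
  have hle : q ^ i ≤ q ^ n :=
    Nat.pow_le_pow_right Fintype.card_pos (Finset.mem_range_succ_iff.mp hi)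
  refine (natDegree_add_le _ _).trans (max_le ?_ ?_) <;>
    exact (natDegree_C_mul_X_pow_le _ _).trans (by lia)

variable {L : Type*} [Field L] [Algebra F L]

/-- The function `x ↦ a x + b x⁻¹` on an `F`-algebra; its composites with additive characters are
the summands of Kloosterman sums. Its junk value at `0` is `0`. -/
def phase (a b : F) (x : L) : L := a • x + b • x⁻¹

theorem frobeniusAlgHom_pow_apply (K : Type*) {A : Type*} [Field K] [Fintype K] [CommRing A]
    [Algebra K A] (m : ℕ) (y : A) :
    (FiniteField.frobeniusAlgHom K A ^ m) y = y ^ Fintype.card K ^ m := by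
  rw [AlgHom.coe_pow, FiniteField.coe_frobeniusAlgHom, pow_iterate]

theorem sum_pow_card_pow (K : Type*) {A ι : Type*} [Field K] [Fintype K] [CommRing A] [Algebra K A]
    (s : Finset ι) (f : ι → A) (m : ℕ) :
    (∑ i ∈ s, f i) ^ Fintype.card K ^ m = ∑ i ∈ s, f i ^ Fintype.card K ^ m := by
  simp only [← frobeniusAlgHom_pow_apply, map_sum]

theorem phase_pow_card_pow (a b : F) (x : L) (m : ℕ) :
    phase a b x ^ q ^ m = phase a b (x ^ q ^ m) := by
  simp only [phase, ← frobeniusAlgHom_pow_apply, map_add, map_smul, map_inv₀]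

theorem aeval_halfTrace (a b : F) (n : ℕ) {x : L} (hx : x ≠ 0) :
    aeval x (halfTrace a b n) =
      x ^ q ^ n * ∑ i ∈ Finset.range (n + 1), phase a b x ^ q ^ i := by
  simp only [halfTrace, map_sum, Finset.mul_sum]
  refine Finset.sum_congr rfl fun i hi => ?_
  have hle : q ^ i ≤ q ^ n :=
    Nat.pow_le_pow_right Fintype.card_pos (Finset.mem_range_succ_iff.mp hi)
  rw [phase_pow_card_pow]
  simp only [phase, map_add, map_mul, map_pow, aeval_C, aeval_X,
    Algebra.smul_def, pow_add, pow_sub₀ x hx hle]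
  ring

theorem algebraMap_trace_eq_add_pow [Finite L] {m : ℕ} (hm : Module.finrank F L = 2 * m) (x : L) :
    algebraMap F L (Algebra.trace F L x) = ∑ i ∈ Finset.range m, x ^ q ^ i +
      (∑ i ∈ Finset.range m, x ^ q ^ i) ^ q ^ m := by
  rw [FiniteField.algebraMap_trace_eq_sum_pow, hm, two_mul, Finset.sum_range_add,
    Nat.card_eq_fintype_card, sum_pow_card_pow F]
  simp only [← pow_mul, ← pow_add, add_comm m]

/-- The exponent of the half trace in the `e`-th Stepanov summand: `q - 1` minus the middle digit of
`e = i + q ^ n * j + q ^ (n + 1) * k`, where `i < q ^ n` and `j < q`. -/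
def stepanovExponent (F : Type*) [Fintype F] (n e : ℕ) : ℕ :=
  Fintype.card F - 1 - e / Fintype.card F ^ n % Fintype.card F

/-- The `e`-th building block of Stepanov's auxiliary polynomial. -/
noncomputable def stepanovSummand (a b : F) (n e : ℕ) : F[X] :=
  X ^ e * halfTrace a b n ^ stepanovExponent F n e

/-- A polynomial of small degree that agrees, up to a factor independent of `e`, with the
`q ^ (n + 1)`-th power of `stepanovSummand a b n e` at the points where `phase a b` has trace `c`.
The exponents of `X` come from the digits of `e`, as `x ^ q ^ (2 (n + 1)) = x`. -/
noncomputable def reducedSummand (a b c : F) (n e : ℕ) : F[X] :=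
  X ^ (q ^ (n + 1) * (e % q ^ n) + e / q ^ (n + 1) + q ^ n * (e / q ^ n % q)) *
    (C c * X ^ q ^ n - halfTrace a b n) ^ stepanovExponent F n e

theorem div_mod_add_stepanovExponent (n e : ℕ) :
    e / q ^ n % q + stepanovExponent F n e = q - 1 := by
  have := Nat.mod_lt (e / q ^ n) (Fintype.card_pos (α := F))
  rw [stepanovExponent]
  lia

theorem natDegree_stepanovSummand_le (a b : F) (n e : ℕ) :
    (stepanovSummand a b n e).natDegree ≤ e + 2 * q ^ (n + 1) := by
  refine natDegree_mul_le.trans (add_le_add (natDegree_X_pow_le _) ?_)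
  calc _ ≤ stepanovExponent F n e * (2 * q ^ n) :=
        natDegree_pow_le.trans (Nat.mul_le_mul_left _ (natDegree_halfTrace_le a b n))
    _ ≤ q * (2 * q ^ n) := by
        gcongr
        exact (Nat.sub_le _ _).trans (Nat.sub_le _ _)
    _ = _ := by ring

theorem natDegree_reducedSummand_lt (a b c : F) {n N e : ℕ} (he : e < N * q ^ (n + 1)) :
    (reducedSummand a b c n e).natDegree < (q ^ n + 1) * q ^ (n + 1) + N := by
  have hpos : 0 < q := Fintype.card_pos
  have hbase : (C c * X ^ q ^ n - halfTrace a b n).natDegree ≤ 2 * q ^ n :=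
    (natDegree_sub_le _ _).trans (max_le ((natDegree_C_mul_X_pow_le _ _).trans (by lia))
      (natDegree_halfTrace_le a b n))
  have hpow : ((C c * X ^ q ^ n - halfTrace a b n) ^ stepanovExponent F n e).natDegree ≤
      stepanovExponent F n e * (2 * q ^ n) := natDegree_pow_le.trans (Nat.mul_le_mul_left _ hbase)
  have hlow : q ^ (n + 1) * (e % q ^ n) + q ^ (n + 1) ≤ q ^ (n + 1) * q ^ n := by
    rw [← Nat.mul_succ]
    exact Nat.mul_le_mul_left _ (Nat.mod_lt _ (by positivity))
  have hhigh : e / q ^ (n + 1) < N := (Nat.div_lt_iff_lt_mul (by positivity)).mpr he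
  have hmid : q ^ n * (e / q ^ n % q) + stepanovExponent F n e * (2 * q ^ n) ≤
      2 * q ^ (n + 1) := by
    have hsum := div_mod_add_stepanovExponent (F := F) n e
    calc _ ≤ 2 * q ^ n * (e / q ^ n % q + stepanovExponent F n e) := by
          nlinarith [Nat.zero_le (q ^ n * (e / q ^ n % q))]
      _ ≤ 2 * q ^ n * q := Nat.mul_le_mul_left _ (by lia)
      _ = _ := by ring
  refine (natDegree_mul_le.trans (add_le_add (natDegree_X_pow_le _) hpow)).trans_lt ?_
  linarith

theorem pow_pow_card_pow_eq {n : ℕ} [Finite L] (hL : Module.finrank F L = 2 * (n + 1)) (x : L)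
    (e : ℕ) :
    (x ^ e) ^ q ^ (n + 1) = x ^ (q ^ (n + 1) * (e % q ^ n)) *
      x ^ (q ^ n * q ^ (n + 1) * (e / q ^ n % q)) * x ^ (e / q ^ (n + 1)) := by
  have := Fintype.ofFinite L
  have hfix : x ^ (q ^ (n + 1) * q ^ (n + 1)) = x := by
    rw [← pow_add, ← two_mul, ← hL, ← Module.card_eq_pow_finrank]
    exact FiniteField.pow_card x
  have hdigits : e = e % q ^ n + q ^ n * (e / q ^ n % q) + q ^ (n + 1) * (e / q ^ (n + 1)) := by
    have hmod := Nat.mod_add_div e (q ^ (n + 1))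
    rwa [pow_succ, Nat.mod_mul, ← pow_succ, eq_comm] at hmod
  calc (x ^ e) ^ q ^ (n + 1)
      = x ^ (q ^ (n + 1) * (e % q ^ n)) * x ^ (q ^ n * q ^ (n + 1) * (e / q ^ n % q)) *
          (x ^ (q ^ (n + 1) * q ^ (n + 1))) ^ (e / q ^ (n + 1)) := by
        conv_lhs => rw [hdigits]
        ring
    _ = _ := by rw [hfix]

theorem aeval_stepanovSummand_pow {n : ℕ} [Finite L] (hL : Module.finrank F L = 2 * (n + 1))
    (a b : F) {x : L} (hx : x ≠ 0) (e : ℕ) :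
    aeval x (stepanovSummand a b n e) ^ q ^ (n + 1) * x ^ (q ^ n * (q - 1)) =
      x ^ (q ^ n * q ^ (n + 1) * (q - 1)) *
        aeval x (reducedSummand a b (Algebra.trace F L (phase a b x)) n e) := by
  set U := ∑ i ∈ Finset.range (n + 1), phase a b x ^ q ^ i with hU
  set c := Algebra.trace F L (phase a b x)
  have hUpow (k : ℕ) : (U ^ k) ^ q ^ (n + 1) = (algebraMap F L c - U) ^ k := by
    rw [pow_right_comm, algebraMap_trace_eq_add_pow hL, ← hU, add_sub_cancel_left]
  have hbase : aeval x (C c * X ^ q ^ n - halfTrace a b n) =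
      x ^ q ^ n * (algebraMap F L c - U) := by
    rw [map_sub, aeval_halfTrace a b n hx, map_mul, aeval_C, map_pow, aeval_X, ← hU]
    ring
  simp only [stepanovSummand, reducedSummand, map_mul, map_pow, aeval_X, hbase,
    aeval_halfTrace a b n hx, ← hU, mul_pow, pow_pow_card_pow_eq hL x e,
    hUpow, ← div_mod_add_stepanovExponent (F := F) n e]
  ring

/-- Fewer coefficients have to vanish in `∑ e, s e • reducedSummand a b c n e` than there are
unknowns `s e`, while the lowest coefficient shows `∑ e, s e • stepanovSummand a b n e ≠ 0`. -/
theorem exists_ne_zero_forall_aeval_eq_zero {n : ℕ} [Finite L]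
    (hL : Module.finrank F L = 2 * (n + 1)) (a : F) {b : F} (hb : b ≠ 0) (c : F) :
    ∃ G : F[X], G ≠ 0 ∧ G.natDegree ≤ (q ^ n + 6) * q ^ (n + 1) ∧
      ∀ x : L, x ≠ 0 → Algebra.trace F L (phase a b x) = c → aeval x G = 0 := by
  set N := (q ^ n + 4) * q ^ (n + 1) with hN
  have hM : (q ^ n + 1) * q ^ (n + 1) + (q ^ n + 4) < N := by
    have hq : 1 < q := Fintype.one_lt_card
    nlinarith [Nat.mul_le_mul (pow_pos (zero_lt_one.trans hq) n) hq, pow_succ q n]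
  have hdep := not_linearIndependent_of_degree_lt (v := fun e : Fin N => reducedSummand a b c n e)
    (hM.trans_eq (Fintype.card_fin N).symm) fun e =>
      degree_le_natDegree.trans_lt (mod_cast natDegree_reducedSummand_lt a b c e.2)
  obtain ⟨s, hrel, e₀, he₀⟩ := Fintype.not_linearIndependent_iff.mp hdep
  have hind : LinearIndependent F fun e => stepanovSummand a b n e :=
    linearIndependent_X_pow_mul fun e => by
      rw [coeff_zero_eq_eval_zero, eval_pow, ← coeff_zero_eq_eval_zero, coeff_zero_halfTrace]
      exact pow_ne_zero _ hb
  refine ⟨∑ e : Fin N, s e • stepanovSummand a b n e, fun h => he₀ ?_, ?_, fun x hx hc => ?_⟩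
  · exact Fintype.linearIndependent_iff.mp (hind.comp _ Fin.val_injective) s h e₀
  · refine natDegree_sum_le_of_forall_le _ _ fun e _ => (natDegree_smul_le _ _).trans
      ((natDegree_stepanovSummand_le a b n e).trans ?_)
    linarith [e.2]
  · have hmul : aeval x (∑ e : Fin N, s e • stepanovSummand a b n e) ^ q ^ (n + 1) *
        x ^ (q ^ n * (q - 1)) = 0 := by
      have hs (e : Fin N) : s e ^ q ^ (n + 1) = s e := FiniteField.pow_card_pow _ _
      simp only [map_sum, map_smul, sum_pow_card_pow F, _root_.smul_pow, hs, Finset.sum_mul,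
        smul_mul_assoc, aeval_stepanovSummand_pow hL a b hx, hc, ← mul_smul_comm, ← Finset.mul_sum]
      simp only [← map_smul, ← map_sum, hrel, map_zero, mul_zero]
    exact eq_zero_of_pow_eq_zero
      ((mul_eq_zero.mp hmul).resolve_right (pow_ne_zero _ hx))

theorem card_trace_phase_eq_le {n : ℕ} [Fintype L] [DecidableEq L] [DecidableEq F]
    (hL : Module.finrank F L = 2 * (n + 1)) (a : F) {b : F} (hb : b ≠ 0) (c : F) :
    (Finset.univ.filter fun x : L => x ≠ 0 ∧ Algebra.trace F L (phase a b x) = c).card ≤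
      (q ^ n + 6) * q ^ (n + 1) := by
  obtain ⟨G, hG, hdeg, hroot⟩ := exists_ne_zero_forall_aeval_eq_zero (L := L) hL a hb c
  refine le_trans (card_le_degree_of_subset_roots (p := G.map (algebraMap F L)) fun x hx => ?_)
    ((natDegree_map _).trans_le hdeg)
  obtain ⟨hx0, hxc⟩ : x ≠ 0 ∧ Algebra.trace F L (phase a b x) = c := by simpa using hx
  rw [mem_roots (map_ne_zero hG), IsRoot.def, eval_map_algebraMap]
  exact hroot x hx0 hxc

end Stepanov

/-! ### Newton's identities for multiplicative functions on monic polynomials -/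

section NewtonIdentities

variable (F : Type*) [Field F] [Finite F]

theorem finite_setOf_monic_natDegree_eq (d : ℕ) :
    {f : F[X] | f.Monic ∧ f.natDegree = d}.Finite := by
  have : Finite (degreeLT F d) := Finite.of_equiv _ (degreeLTEquiv F d).toEquiv.symm
  exact Set.finite_coe_iff.mp (Finite.of_equiv _ (monicEquivDegreeLT d).symm)

/-- The monic polynomials of degree `d` over a finite field. -/
noncomputable def monics (d : ℕ) : Finset F[X] := (finite_setOf_monic_natDegree_eq F d).toFinset

open Classical in
/-- The monic irreducible polynomials whose degree divides `k`: the minimal polynomials of the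
elements of the extension of degree `k`. For `k = 0` this is empty. -/
noncomputable def irreduciblesDvd (k : ℕ) : Finset F[X] :=
  k.divisors.biUnion fun d => (monics F d).filter Irreducible

variable {F}

theorem mem_monics {d : ℕ} {f : F[X]} : f ∈ monics F d ↔ f.Monic ∧ f.natDegree = d := by
  simp [monics]

theorem mem_irreduciblesDvd {k : ℕ} {f : F[X]} :
    f ∈ irreduciblesDvd F k ↔ f.Monic ∧ Irreducible f ∧ f.natDegree ∣ k ∧ k ≠ 0 := by
  simp only [irreduciblesDvd, Finset.mem_biUnion, Finset.mem_filter, Nat.mem_divisors, mem_monics]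
  constructor
  · rintro ⟨d, hd, ⟨hmonic, rfl⟩, hirr⟩
    exact ⟨hmonic, hirr, hd⟩
  · rintro ⟨hmonic, hirr, hd⟩
    exact ⟨_, hd, ⟨hmonic, rfl⟩, hirr⟩

open Classical UniqueFactorizationMonoid in
theorem pow_dvd_iff_le_count_normalizedFactors {K : Type*} [Field K]
    {f P : K[X]} (hf : f ≠ 0) (hP : P.Monic) (hirr : Irreducible P) (j : ℕ) :
    P ^ j ∣ f ↔ j ≤ (normalizedFactors f).count P := by
  rw [pow_dvd_iff_le_emultiplicity, emultiplicity_eq_count_normalizedFactors hirr hf,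
    hP.normalize_eq_self, Nat.cast_le]

open Classical UniqueFactorizationMonoid in
theorem sum_count_mul_natDegree_normalizedFactors {K : Type*} [Field K] {f : K[X]} (hf : f.Monic) :
    ∑ P ∈ (normalizedFactors f).toFinset, (normalizedFactors f).count P * P.natDegree =
      f.natDegree := by
  have hmonic (P) (hP : P ∈ normalizedFactors f) : P.Monic := by
    rw [← normalize_normalized_factor P hP]
    exact monic_normalize (irreducible_of_normalized_factor P hP).ne_zero
  conv_rhs => rw [← hf.normalize_eq_self, ← prod_normalizedFactors_eq hf.ne_zero,
    natDegree_multiset_prod_of_monic _ hmonic, Finset.sum_multiset_map_count]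
  rfl

open Classical UniqueFactorizationMonoid in
/-- The identity `∑ Λ(g) = log f`, over the monic divisors `g` of `f`, for polynomials. -/
theorem sum_natDegree_of_prime_pow_dvd {f : F[X]} (hf : f.Monic) :
    ∑ k ∈ Finset.Icc 1 f.natDegree,
      ∑ P ∈ irreduciblesDvd F k with P ^ (k / P.natDegree) ∣ f, P.natDegree = f.natDegree := by
  conv_rhs => rw [← sum_count_mul_natDegree_normalizedFactors hf]
  have hsum (P : F[X]) : (normalizedFactors f).count P * P.natDegree =
      ∑ _j ∈ Finset.Icc 1 ((normalizedFactors f).count P), P.natDegree := by simp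
  have hfac {P : F[X]} (hP : P ∈ normalizedFactors f) : P.Monic ∧ Irreducible P := by
    have hirr := irreducible_of_normalized_factor P hP
    exact ⟨normalize_normalized_factor P hP ▸ monic_normalize hirr.ne_zero, hirr⟩
  simp only [hsum]
  rw [Finset.sum_sigma', Finset.sum_sigma']
  refine Finset.sum_bij' (fun x _ => ⟨x.2, x.1 / x.2.natDegree⟩)
    (fun y _ => ⟨y.2 * y.1.natDegree, y.1⟩) ?_ ?_ ?_ ?_ fun _ _ => rfl
  · rintro ⟨k, P⟩ h
    simp only [Finset.mem_sigma, Finset.mem_filter, mem_irreduciblesDvd, Finset.mem_Icc,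
      Multiset.mem_toFinset] at h ⊢
    obtain ⟨⟨hk, -⟩, ⟨hP, hirr, hdvd, -⟩, hpow⟩ := h
    have hj : 1 ≤ k / P.natDegree := Nat.div_pos (Nat.le_of_dvd hk hdvd) hirr.natDegree_pos
    rw [pow_dvd_iff_le_count_normalizedFactors hf.ne_zero hP hirr] at hpow
    exact ⟨Multiset.count_pos.mp (hj.trans hpow), hj, hpow⟩
  · rintro ⟨P, j⟩ h
    simp only [Finset.mem_sigma, Finset.mem_filter, mem_irreduciblesDvd, Finset.mem_Icc,
      Multiset.mem_toFinset] at h ⊢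
    obtain ⟨hmem, hj, hcount⟩ := h
    obtain ⟨hP, hirr⟩ := hfac hmem
    have hpow := (pow_dvd_iff_le_count_normalizedFactors hf.ne_zero hP hirr j).mpr hcount
    have hpos : 0 < j * P.natDegree := Nat.mul_pos hj hirr.natDegree_pos
    refine ⟨⟨hpos, ?_⟩, ⟨hP, hirr, dvd_mul_left _ _, hpos.ne'⟩, ?_⟩
    · rw [← natDegree_pow]
      exact natDegree_le_of_dvd hpow hf.ne_zero
    · rwa [Nat.mul_div_cancel _ hirr.natDegree_pos]
  · rintro ⟨k, P⟩ h
    simp only [Finset.mem_sigma, Finset.mem_filter, mem_irreduciblesDvd] at h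
    rw [Nat.div_mul_cancel h.2.1.2.2.1]
  · rintro ⟨P, j⟩ h
    simp only [Finset.mem_sigma, Multiset.mem_toFinset] at h
    rw [Nat.mul_div_cancel _ (hfac h.1).2.natDegree_pos]

variable {R : Type*} [CommRing R] (χ : F[X] → R)

/-- The coefficient of `T ^ d` in the `L`-function `∑ χ(f) T ^ deg f`, over monic `f`. -/
noncomputable def coeffSum (d : ℕ) : R := ∑ f ∈ monics F d, χ f

/-- The sum of `Λ(f) χ(f)` over the monic `f` of degree `k`, where `Λ(P ^ j) = deg P`. -/
noncomputable def mangoldtSum (k : ℕ) : R :=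
  ∑ P ∈ irreduciblesDvd F k, (P.natDegree : R) * χ P ^ (k / P.natDegree)

theorem coeffSum_zero : coeffSum χ 0 = χ 1 := by
  have hmonics : monics F 0 = {1} := by
    ext f
    rw [mem_monics, Finset.mem_singleton]
    exact ⟨fun h => h.1.natDegree_eq_zero.mp h.2, fun h => by simp [h]⟩
  rw [coeffSum, hmonics, Finset.sum_singleton]

variable {χ}

open Classical in
theorem sum_monics_dvd (hmul : ∀ f g : F[X], f.Monic → g.Monic → χ (f * g) = χ f * χ g)
    {g : F[X]} (hg : g.Monic) {d : ℕ} (hd : g.natDegree ≤ d) :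
    ∑ f ∈ monics F d with g ∣ f, χ f = χ g * coeffSum χ (d - g.natDegree) := by
  rw [coeffSum, Finset.mul_sum]
  symm
  refine Finset.sum_bij (fun h _ => g * h) (fun h hh => ?_) (fun h _ h' _ => ?_) (fun f hf => ?_)
    (fun h hh => (hmul g h hg (mem_monics.mp hh).1).symm)
  · obtain ⟨hmonic, hdeg⟩ := mem_monics.mp hh
    rw [Finset.mem_filter, mem_monics, hg.natDegree_mul hmonic, hdeg]
    exact ⟨⟨hg.mul hmonic, Nat.add_sub_cancel' hd⟩, dvd_mul_right _ _⟩
  · exact mul_left_cancel₀ hg.ne_zero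
  · rw [Finset.mem_filter, mem_monics] at hf
    obtain ⟨⟨hmonic, hdeg⟩, h, rfl⟩ := hf
    have hh : h.Monic := hg.of_mul_monic_left hmonic
    rw [hg.natDegree_mul hh] at hdeg
    exact ⟨h, mem_monics.mpr ⟨hh, by lia⟩, rfl⟩

theorem map_pow_of_monic {A M : Type*} [Semiring A] [Monoid M] {χ : A[X] → M} (hone : χ 1 = 1)
    (hmul : ∀ f g : A[X], f.Monic → g.Monic → χ (f * g) = χ f * χ g) {f : A[X]} (hf : f.Monic)
    (j : ℕ) : χ (f ^ j) = χ f ^ j := by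
  induction j with
  | zero => rw [pow_zero, pow_zero, hone]
  | succ j ih => rw [pow_succ, hmul _ _ (hf.pow j) hf, ih, pow_succ]

theorem mul_coeffSum_eq_sum_mangoldtSum_mul (hone : χ 1 = 1)
    (hmul : ∀ f g : F[X], f.Monic → g.Monic → χ (f * g) = χ f * χ g) (d : ℕ) :
    (d : R) * coeffSum χ d = ∑ k ∈ Finset.Icc 1 d, mangoldtSum χ k * coeffSum χ (d - k) := by
  classical
  have hlog (f) (hf : f ∈ monics F d) : (d : R) * χ f = ∑ k ∈ Finset.Icc 1 d,
      ∑ P ∈ irreduciblesDvd F k,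
        (P.natDegree : R) * if P ^ (k / P.natDegree) ∣ f then χ f else 0 := by
    obtain ⟨hmonic, rfl⟩ := mem_monics.mp hf
    conv_lhs => rw [← sum_natDegree_of_prime_pow_dvd hmonic]
    simp only [Finset.sum_filter, Nat.cast_sum, Nat.cast_ite, Nat.cast_zero, Finset.sum_mul,
      ite_mul, zero_mul, mul_ite, mul_zero]
  rw [coeffSum, Finset.mul_sum, Finset.sum_congr rfl hlog, Finset.sum_comm]
  refine Finset.sum_congr rfl fun k hk => ?_
  rw [Finset.sum_comm, mangoldtSum, Finset.sum_mul]
  refine Finset.sum_congr rfl fun P hP => ?_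
  obtain ⟨hmonic, -, hdvd, -⟩ := mem_irreduciblesDvd.mp hP
  have hdeg : (P ^ (k / P.natDegree)).natDegree = k := by
    rw [natDegree_pow, Nat.div_mul_cancel hdvd]
  rw [← Finset.mul_sum, ← Finset.sum_filter, sum_monics_dvd hmul (hmonic.pow _)
    (hdeg.trans_le (Finset.mem_Icc.mp hk).2), hdeg, map_pow_of_monic hone hmul hmonic, mul_assoc]

end NewtonIdentities

/-! ### The `L`-function of a Kloosterman sum -/

section LFunction

variable {F R : Type*} [Field F] [CommRing R]

/-- The multiplicative function on monic polynomials with `χ(X - u) = ψ(a u + b u⁻¹)` for `u ≠ 0`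
and `χ(X) = 0`. Its generating series is the `L`-function of the Kloosterman sum. -/
noncomputable def polyChar (ψ : AddChar F R) (a b : F) (f : F[X]) : R :=
  open Classical in
  if f.coeff 0 = 0 then 0 else ψ (-(a * f.nextCoeff) - b * (f.coeff 1 / f.coeff 0))

variable {ψ : AddChar F R} {a b : F}

theorem polyChar_one : polyChar ψ a b 1 = 1 := by
  have hnext : (1 : F[X]).nextCoeff = 0 := nextCoeff_C_eq_zero 1
  simp [polyChar, hnext, coeff_one]

theorem polyChar_mul (f g : F[X]) (hf : f.Monic) (hg : g.Monic) :
    polyChar ψ a b (f * g) = polyChar ψ a b f * polyChar ψ a b g := by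
  by_cases hf0 : f.coeff 0 = 0
  · simp [polyChar, hf0]
  by_cases hg0 : g.coeff 0 = 0
  · simp [polyChar, hg0]
  rw [polyChar, polyChar, polyChar, mul_coeff_zero, if_neg (mul_ne_zero hf0 hg0), if_neg hf0,
    if_neg hg0, ← AddChar.map_add_eq_mul, hf.nextCoeff_mul hg, mul_coeff_one]
  congr 1
  field_simp
  ring

theorem monic_and_natDegree_add_C_mul_X_pow {f : F[X]} (hf : f.Monic) {d : ℕ}
    (hd : f.natDegree = d + 1) (t : F) :
    (f + C t * X ^ d).Monic ∧ (f + C t * X ^ d).natDegree = d + 1 := by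
  have hlt : (C t * X ^ d).degree < f.degree := by
    rw [degree_eq_natDegree hf.ne_zero, hd]
    exact (degree_C_mul_X_pow_le _ _).trans_lt (mod_cast d.lt_succ_self)
  exact ⟨hf.add_of_left hlt, (natDegree_add_eq_left_of_degree_lt hlt).trans hd⟩

theorem polyChar_add_C_mul_X_pow {f : F[X]} (hf : f.Monic) {d : ℕ} (hd : f.natDegree = d + 1)
    (hd2 : 2 ≤ d) (t : F) :
    polyChar ψ a b (f + C t * X ^ d) = ψ (-a * t) * polyChar ψ a b f := by
  have hdeg := (monic_and_natDegree_add_C_mul_X_pow hf hd t).2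
  have hnext : (f + C t * X ^ d).nextCoeff = f.nextCoeff + t := by
    rw [nextCoeff_of_natDegree_pos (by lia), nextCoeff_of_natDegree_pos (by lia), hd, hdeg]
    simp
  have hcoeff {i : ℕ} (hi : i ≤ 1) : (f + C t * X ^ d).coeff i = f.coeff i := by
    rw [coeff_add, coeff_C_mul_X_pow, if_neg (by lia), add_zero]
  rw [polyChar, polyChar, hnext, hcoeff zero_le_one, hcoeff le_rfl]
  split_ifs
  · rw [mul_zero]
  · rw [← AddChar.map_add_eq_mul]
    ring_nf

open Classical in
theorem polyChar_quadratic (s t : F) : polyChar ψ a b (X ^ 2 + C s * X + C t) =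
    if t = 0 then 0 else ψ (s * -(a + b / t)) := by
  have hdeg : (X ^ 2 + C s * X + C t).natDegree = 2 := by compute_degree!
  have hnext : (X ^ 2 + C s * X + C t).nextCoeff = s := by
    rw [nextCoeff_of_natDegree_pos (by lia), hdeg]
    simp [coeff_C]
  have hcoeff : (X ^ 2 + C s * X + C t).coeff 0 = t ∧ (X ^ 2 + C s * X + C t).coeff 1 = s := by
    simp [coeff_C]
  rw [polyChar, hnext, hcoeff.1, hcoeff.2]
  refine if_congr Iff.rfl rfl (congrArg ψ ?_)
  ring

theorem exists_map_mul_ne_one (hψ : ψ ≠ 1) (ha : a ≠ 0) : ∃ t, ψ (a * t) ≠ 1 := by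
  obtain ⟨t, ht⟩ := AddChar.ne_one_iff.mp hψ
  exact ⟨a⁻¹ * t, by rwa [mul_inv_cancel_left₀ ha]⟩

/-- Adding `t X ^ d` to a polynomial permutes the monic polynomials of degree `d + 1` and multiplies
`polyChar` by `ψ (-a t)`. -/
theorem coeffSum_polyChar_eq_zero [Finite F] [IsDomain R] (hψ : ψ ≠ 1) (ha : a ≠ 0) {d : ℕ}
    (hd : 2 ≤ d) : coeffSum (polyChar ψ a b) (d + 1) = 0 := by
  obtain ⟨t, ht⟩ := exists_map_mul_ne_one hψ (neg_ne_zero.mpr ha)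
  have hshift : ψ (-a * t) * coeffSum (polyChar ψ a b) (d + 1) =
      coeffSum (polyChar ψ a b) (d + 1) := by
    have hmem (u : F) (f) (hf : f ∈ monics F (d + 1)) : f + C u * X ^ d ∈ monics F (d + 1) :=
      let ⟨hmonic, hdeg⟩ := mem_monics.mp hf
      mem_monics.mpr (monic_and_natDegree_add_C_mul_X_pow hmonic hdeg u)
    rw [coeffSum, Finset.mul_sum]
    refine Finset.sum_bij' (fun f _ => f + C t * X ^ d) (fun f _ => f + C (-t) * X ^ d)
      (hmem t) (hmem (-t)) (fun f _ => by simp) (fun f _ => by simp) fun f hf => ?_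
    obtain ⟨hmonic, hdeg⟩ := mem_monics.mp hf
    exact (polyChar_add_C_mul_X_pow hmonic hdeg hd t).symm
  have hzero : (ψ (-a * t) - 1) * coeffSum (polyChar ψ a b) (d + 1) = 0 := by
    rw [sub_mul, hshift, one_mul, sub_self]
  exact (mul_eq_zero.mp hzero).resolve_left (sub_ne_zero.mpr ht)

theorem coeffSum_two [Fintype F] (χ : F[X] → R) :
    coeffSum χ 2 = ∑ t, ∑ s, χ (X ^ 2 + C s * X + C t) := by
  rw [← Finset.sum_product', coeffSum]
  symm
  refine Finset.sum_bij (fun v _ => X ^ 2 + C v.2 * X + C v.1) (fun v _ => ?_)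
    (fun v _ w _ h => ?_) (fun f hf => ?_) fun _ _ => rfl
  · exact mem_monics.mpr ⟨by monicity!, by compute_degree!⟩
  · have hcoeff (i : ℕ) := congrArg (fun f => coeff f i) h
    exact Prod.ext (by simpa using hcoeff 0) (by simpa [coeff_C] using hcoeff 1)
  · obtain ⟨hmonic, hdeg⟩ := mem_monics.mp hf
    refine ⟨(f.coeff 0, f.coeff 1), Finset.mem_univ _, ?_⟩
    conv_rhs => rw [hmonic.as_sum, hdeg]
    simp only [Finset.sum_range_succ, Finset.sum_range_zero, pow_zero, pow_one, mul_one]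
    ring

theorem coeffSum_polyChar_two [Fintype F] [IsDomain R] (hψ : ψ ≠ 1) (ha : a ≠ 0) (hb : b ≠ 0) :
    coeffSum (polyChar ψ a b) 2 = Fintype.card F := by
  classical
  have hsum (t : F) : ∑ s, polyChar ψ a b (X ^ 2 + C s * X + C t) =
      if t = -b / a then (Fintype.card F : R) else 0 := by
    simp only [polyChar_quadratic]
    rcases eq_or_ne t 0 with rfl | ht
    · rw [if_neg (div_ne_zero (neg_ne_zero.mpr hb) ha).symm]
      simp
    · have hiff : -(a + b / t) = 0 ↔ t = -b / a := by
        rw [neg_eq_zero, eq_div_iff ha, add_div' _ _ _ ht, div_eq_zero_iff, or_iff_left ht,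
          eq_neg_iff_add_eq_zero, mul_comm]
      simp only [if_neg ht, AddChar.sum_mulShift _ (AddChar.IsPrimitive.of_ne_one hψ), hiff,
        Nat.cast_ite, Nat.cast_zero]
  simp only [coeffSum_two, hsum, Finset.sum_ite_eq', Finset.mem_univ, if_true]

end LFunction

/-! ### Weil's bound -/

section Minpoly

variable {F L : Type*} [Field F] [Field L] [Algebra F L]

open IntermediateField in
theorem adjoin_simple_inv (x : L) : F⟮x⁻¹⟯ = F⟮x⟯ := by
  have hle (y : L) : F⟮y⁻¹⟯ ≤ F⟮y⟯ :=
    adjoin_simple_le_iff.mpr (inv_mem (mem_adjoin_simple_self F y))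
  exact (hle x).antisymm (by simpa using hle x⁻¹)

theorem minpoly_inv {x : L} (hxint : IsIntegral F x) (hx : x ≠ 0) :
    minpoly F x⁻¹ = C ((minpoly F x).coeff 0)⁻¹ * (minpoly F x).reverse := by
  have hxint' : IsIntegral F x⁻¹ := hxint.inv
  have h0 : (minpoly F x).coeff 0 ≠ 0 := minpoly.coeff_zero_ne_zero hxint hx
  have hmonic : (C ((minpoly F x).coeff 0)⁻¹ * (minpoly F x).reverse).Monic := by
    refine monic_C_mul_of_mul_leadingCoeff_eq_one ?_
    rw [reverse_leadingCoeff, trailingCoeff_eq_coeff_zero h0, inv_mul_cancel₀ h0]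
  have hroot : aeval x⁻¹ (minpoly F x).reverse = 0 := by
    let _ : Invertible x := invertibleOfNonzero hx
    have h := (eval₂_reverse_eq_zero_iff (algebraMap F L) x (minpoly F x)).mpr (minpoly.aeval F x)
    rwa [invOf_eq_inv] at h
  refine (eq_of_monic_of_dvd_of_natDegree_le (minpoly.monic hxint') hmonic
    (minpoly.dvd _ _ (by rw [map_mul, hroot, mul_zero])) ?_).symm
  rw [natDegree_C_mul (inv_ne_zero h0), ← IntermediateField.adjoin.finrank hxint',
    adjoin_simple_inv, IntermediateField.adjoin.finrank hxint]
  exact reverse_natDegree_le _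

theorem nextCoeff_minpoly_inv {x : L} (hxint : IsIntegral F x) (hx : x ≠ 0) :
    (minpoly F x⁻¹).nextCoeff = (minpoly F x).coeff 1 / (minpoly F x).coeff 0 := by
  have h0 : (minpoly F x).coeff 0 ≠ 0 := minpoly.coeff_zero_ne_zero hxint hx
  have hpos := minpoly.natDegree_pos hxint
  have hdeg : (minpoly F x).reverse.natDegree = (minpoly F x).natDegree := by
    rw [reverse_natDegree, natTrailingDegree_eq_zero.mpr (Or.inr h0), Nat.sub_zero]
  rw [minpoly_inv hxint hx, nextCoeff_C_mul, nextCoeff_of_natDegree_pos (hdeg ▸ hpos), hdeg,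
    coeff_reverse, revAt_le (Nat.sub_le _ _), Nat.sub_sub_self hpos, inv_mul_eq_div]

theorem finrank_div_natDegree_minpoly {x : L} (hxint : IsIntegral F x) :
    Module.finrank F L / (minpoly F x).natDegree =
      Module.finrank (IntermediateField.adjoin F {x}) L := by
  rw [← IntermediateField.adjoin.finrank hxint,
    ← Module.finrank_mul_finrank F (IntermediateField.adjoin F {x}) L]
  refine Nat.mul_div_cancel_left _ ?_
  rw [IntermediateField.adjoin.finrank hxint]
  exact minpoly.natDegree_pos hxint

theorem map_trace_phase_eq_polyChar_pow [FiniteDimensional F L] {R : Type*} [CommRing R]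
    (ψ : AddChar F R) (a b : F) {x : L} (hx : x ≠ 0) :
    ψ (Algebra.trace F L (phase a b x)) =
      polyChar ψ a b (minpoly F x) ^ (Module.finrank F L / (minpoly F x).natDegree) := by
  have hxint : IsIntegral F x := Algebra.IsIntegral.isIntegral x
  rw [phase, map_add, map_smul, map_smul, trace_eq_finrank_mul_minpoly_nextCoeff,
    trace_eq_finrank_mul_minpoly_nextCoeff, nextCoeff_minpoly_inv hxint hx, adjoin_simple_inv,
    finrank_div_natDegree_minpoly hxint, polyChar,
    if_neg (minpoly.coeff_zero_ne_zero hxint hx), ← AddChar.map_nsmul_eq_pow]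
  congr 1
  simp only [smul_eq_mul, nsmul_eq_mul]
  ring

end Minpoly

section ExtensionSum

variable {F L R : Type*} [Field F] [Finite F] [Field L] [Fintype L] [Algebra F L] [CommRing R]

open Classical in
theorem card_filter_minpoly_eq {P : F[X]} (hP : P ∈ irreduciblesDvd F (Module.finrank F L)) :
    (Finset.univ.filter fun x : L => minpoly F x = P).card = P.natDegree := by
  let _ := Fintype.ofFinite F
  obtain ⟨hmonic, hirr, hdvd, -⟩ := mem_irreduciblesDvd.mp hP
  have hdvd_sub : P ∣ X ^ Fintype.card L - X := by
    rw [← Nat.card_eq_fintype_card, Module.natCard_eq_pow_finrank (K := F)]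
    exact hirr.natDegree_dvd_iff_dvd_X_pow_card_pow_sub_X.mp hdvd
  have hsplits : (P.map (algebraMap F L)).Splits :=
    (FiniteField.isSplittingField_sub L F).splits.of_dvd
      (map_ne_zero (FiniteField.X_pow_card_sub_X_ne_zero F Fintype.one_lt_card))
      (map_dvd (mapRingHom (algebraMap F L)) hdvd_sub)
  rw [← card_rootSet_eq_natDegree (PerfectField.separable_of_irreducible hirr) hsplits,
    ← Set.toFinset_card]
  congr 1
  ext x
  rw [Finset.mem_filter_univ, Set.mem_toFinset, mem_rootSet_of_ne hmonic.ne_zero]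
  exact ⟨fun h => h ▸ minpoly.aeval F x,
    fun h => (minpoly.eq_of_irreducible_of_monic hirr h hmonic).symm⟩

theorem sum_comp_minpoly (f : F[X] → R) :
    ∑ x : L, f (minpoly F x) =
      ∑ P ∈ irreduciblesDvd F (Module.finrank F L), (P.natDegree : R) * f P := by
  classical
  have hmaps (x : L) (_ : x ∈ Finset.univ) :
      minpoly F x ∈ irreduciblesDvd F (Module.finrank F L) := by
    have hxint : IsIntegral F x := Algebra.IsIntegral.isIntegral x
    exact mem_irreduciblesDvd.mpr ⟨minpoly.monic hxint, minpoly.irreducible hxint,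
      minpoly.degree_dvd hxint, Module.finrank_pos.ne'⟩
  rw [← Finset.sum_fiberwise_of_maps_to' hmaps f]
  refine Finset.sum_congr rfl fun P hP => ?_
  rw [Finset.sum_const, card_filter_minpoly_eq hP, nsmul_eq_mul]

theorem mangoldtSum_polyChar_eq_sum [DecidableEq L] (ψ : AddChar F R) (a b : F) :
    mangoldtSum (polyChar ψ a b) (Module.finrank F L) =
      ∑ x : L with x ≠ 0, ψ (Algebra.trace F L (phase a b x)) := by
  rw [mangoldtSum, ← sum_comp_minpoly (L := L)
    fun P => polyChar ψ a b P ^ (Module.finrank F L / P.natDegree), Finset.sum_filter]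
  refine Finset.sum_congr rfl fun x _ => ?_
  split_ifs with hx
  · exact (map_trace_phase_eq_polyChar_pow ψ a b hx).symm
  · rw [not_not.mp hx, minpoly.zero, natDegree_X, Nat.div_one, polyChar, if_pos coeff_X_zero,
      zero_pow Module.finrank_pos.ne']

end ExtensionSum

section PowerSums

/-- As `∑ c, ψ c = 0`, the fibre sizes may be replaced by their nonnegative deficits from `B`. -/
theorem norm_sum_addChar_le_of_card_fiber_le {ι G : Type*} [AddCommGroup G] [Fintype G]
    [DecidableEq G] {ψ : AddChar G ℂ} (hψ : ψ ≠ 1) (s : Finset ι) (f : ι → G) {B : ℕ}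
    (hB : ∀ c, (s.filter fun i => f i = c).card ≤ B) :
    ‖∑ i ∈ s, ψ (f i)‖ ≤ Fintype.card G * B - s.card := by
  have hsum : ∑ i ∈ s, ψ (f i) = ∑ c, ((s.filter fun i => f i = c).card : ℂ) * ψ c := by
    rw [← Finset.sum_fiberwise' s f ψ]
    simp only [Finset.sum_const, nsmul_eq_mul]
  have hcompl : ∑ i ∈ s, ψ (f i) =
      -∑ c, ((B - (s.filter fun i => f i = c).card : ℕ) : ℂ) * ψ c := by
    simp only [hsum, Nat.cast_sub (hB _), sub_mul, Finset.sum_sub_distrib, ← Finset.mul_sum,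
      AddChar.sum_eq_zero_of_ne_one hψ, mul_zero, zero_sub, neg_neg]
  rw [hcompl, norm_neg]
  refine (norm_sum_le _ _).trans_eq ?_
  simp only [norm_mul, AddChar.norm_apply, mul_one, Complex.norm_natCast]
  simp only [Nat.cast_sub (hB _), Finset.sum_sub_distrib, Finset.sum_const, Finset.card_univ,
    nsmul_eq_mul]
  rw [Finset.card_eq_sum_card_fiberwise fun i _ => Finset.mem_univ (f i), Nat.cast_sum]

theorem norm_le_sqrt_of_norm_power_sum_le {r C : ℝ} (hr : 0 < r) {α β : ℂ}
    (hαβ : ‖α‖ * ‖β‖ = r)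
    (h : ∀ n : ℕ, ‖α ^ (2 * (n + 1)) + β ^ (2 * (n + 1))‖ ≤ C * r ^ (n + 1)) :
    ‖α‖ ≤ √r := by
  by_contra! hlt
  have hα : r < ‖α‖ ^ 2 := (Real.sqrt_lt' ((Real.sqrt_nonneg r).trans_lt hlt)).mp hlt
  have hβ : ‖β‖ ^ 2 ≤ r := by
    refine le_of_mul_le_mul_left ?_ hr
    calc r * ‖β‖ ^ 2 ≤ ‖α‖ ^ 2 * ‖β‖ ^ 2 := by gcongr
      _ = r * r := by rw [← hαβ]; ring
  have hbound (n : ℕ) : (‖α‖ ^ 2 / r) ^ (n + 1) ≤ C + 1 := by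
    rw [div_pow, div_le_iff₀ (by positivity), add_mul, one_mul]
    calc (‖α‖ ^ 2) ^ (n + 1) = ‖α ^ (2 * (n + 1)) + β ^ (2 * (n + 1)) - β ^ (2 * (n + 1))‖ := by
          rw [add_sub_cancel_right, norm_pow, pow_mul]
      _ ≤ ‖α ^ (2 * (n + 1)) + β ^ (2 * (n + 1))‖ + (‖β‖ ^ 2) ^ (n + 1) := by
          rw [← pow_mul, ← norm_pow]
          exact norm_sub_le _ _
      _ ≤ C * r ^ (n + 1) + r ^ (n + 1) := by gcongr; exact h n
  have hone : 1 < ‖α‖ ^ 2 / r := (one_lt_div hr).mpr hα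
  obtain ⟨n, hn⟩ := pow_unbounded_of_one_lt (C + 1) hone
  exact (hn.trans_le (pow_le_pow_right₀ hone.le n.le_succ)).not_ge (hbound n)

theorem exists_power_sums {S : ℕ → ℂ} {r : ℂ} (h2 : 2 * r = S 1 * S 1 + S 2)
    (h : ∀ n, S (n + 3) = -(S (n + 2) * S 1 + S (n + 1) * r)) :
    ∃ α β : ℂ, α * β = r ∧ ∀ n, S (n + 1) = -(α ^ (n + 1) + β ^ (n + 1)) := by
  obtain ⟨D, hD⟩ := IsAlgClosed.exists_eq_mul_self (S 1 ^ 2 - 4 * r)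
  obtain ⟨α, β, hsum, hprod⟩ : ∃ α β : ℂ, S 1 = -(α + β) ∧ α * β = r :=
    ⟨(-S 1 + D) / 2, (-S 1 - D) / 2, by ring, by linear_combination hD / 4⟩
  refine ⟨α, β, hprod, fun n => ?_⟩
  suffices hpair : S (n + 1) = -(α ^ (n + 1) + β ^ (n + 1)) ∧
      S (n + 2) = -(α ^ (n + 2) + β ^ (n + 2)) from hpair.1
  induction n with
  | zero =>
    refine ⟨by rw [hsum]; ring, ?_⟩
    rw [hsum] at h2
    linear_combination -h2 - 2 * hprod
  | succ n ih =>
    refine ⟨ih.2, ?_⟩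
    rw [h n, ih.1, ih.2, hsum, ← hprod]
    ring

end PowerSums

section WeilBound

/-- The Kloosterman sum of an additive character over the units of a finite ring. -/
noncomputable def kloosterman {R : Type*} [CommRing R] [Fintype Rˣ] (ψ : AddChar R ℂ) (m n : R) :
    ℂ :=
  ∑ u : Rˣ, ψ (m * u + n * (u⁻¹ : Rˣ))

variable {F : Type*} [Field F] {ψ : AddChar F ℂ} {a b : F}

theorem mangoldtSum_polyChar_one [Finite F] [Fintype Fˣ] :
    mangoldtSum (polyChar ψ a b) 1 = kloosterman ψ a b := by
  classical
  let _ := Fintype.ofFinite F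
  have h := mangoldtSum_polyChar_eq_sum (L := F) ψ a b
  rw [Module.finrank_self] at h
  rw [h, kloosterman]
  refine (Finset.sum_bij (fun u _ => u.val) (fun u _ => by simp)
    (fun u _ v _ huv => Units.ext huv) (fun x hx => ?_) fun u _ => ?_).symm
  · exact ⟨Units.mk0 x (Finset.mem_filter.mp hx).2, Finset.mem_univ _, rfl⟩
  · rw [Algebra.trace_self_apply, phase, smul_eq_mul, smul_eq_mul, Units.val_inv_eq_inv_val]

theorem mul_coeffSum_polyChar [Finite F] (d : ℕ) : (d : ℂ) * coeffSum (polyChar ψ a b) d =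
    ∑ k ∈ Finset.Icc 1 d,
      mangoldtSum (polyChar ψ a b) k * coeffSum (polyChar ψ a b) (d - k) :=
  mul_coeffSum_eq_sum_mangoldtSum_mul polyChar_one polyChar_mul d

theorem coeffSum_polyChar_one [Finite F] :
    coeffSum (polyChar ψ a b) 1 = mangoldtSum (polyChar ψ a b) 1 := by
  simpa [coeffSum_zero, polyChar_one] using mul_coeffSum_polyChar (ψ := ψ) (a := a) (b := b) 1

variable [Fintype F]

theorem mangoldtSum_polyChar_two (hψ : ψ ≠ 1) (ha : a ≠ 0) (hb : b ≠ 0) :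
    2 * (Fintype.card F : ℂ) = mangoldtSum (polyChar ψ a b) 1 * mangoldtSum (polyChar ψ a b) 1 +
      mangoldtSum (polyChar ψ a b) 2 := by
  have h := mul_coeffSum_polyChar (ψ := ψ) (a := a) (b := b) 2
  rw [coeffSum_polyChar_two hψ ha hb, Finset.sum_Icc_succ_top (by norm_num)] at h
  simpa [coeffSum_zero, polyChar_one, coeffSum_polyChar_one] using h

theorem mangoldtSum_polyChar_add_three (hψ : ψ ≠ 1) (ha : a ≠ 0) (hb : b ≠ 0) (n : ℕ) :
    mangoldtSum (polyChar ψ a b) (n + 3) =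
      -(mangoldtSum (polyChar ψ a b) (n + 2) * mangoldtSum (polyChar ψ a b) 1 +
        mangoldtSum (polyChar ψ a b) (n + 1) * Fintype.card F) := by
  have h := mul_coeffSum_polyChar (ψ := ψ) (a := a) (b := b) (n + 3)
  rw [coeffSum_polyChar_eq_zero hψ ha (by lia), mul_zero, Finset.sum_Icc_succ_top (by lia),
    Finset.sum_Icc_succ_top (by lia), Finset.sum_Icc_succ_top (by lia), Finset.sum_eq_zero] at h
  · rw [show n + 3 - (n + 1) = 2 by lia, show n + 3 - (n + 1 + 1) = 1 by lia, Nat.sub_self,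
      coeffSum_zero, polyChar_one, coeffSum_polyChar_one, coeffSum_polyChar_two hψ ha hb] at h
    linear_combination -h
  · intro k hk
    obtain ⟨d, hd⟩ : ∃ d, n + 3 - k = d + 1 + 2 := ⟨n - k, by
      have := Finset.mem_Icc.mp hk
      lia⟩
    rw [hd, coeffSum_polyChar_eq_zero hψ ha (by lia), mul_zero]

theorem norm_mangoldtSum_polyChar_le (hψ : ψ ≠ 1) (hb : b ≠ 0) (n : ℕ) :
    ‖mangoldtSum (polyChar ψ a b) (2 * (n + 1))‖ ≤
      (6 * Fintype.card F + 1) * (Fintype.card F : ℝ) ^ (n + 1) := by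
  classical
  obtain ⟨p, hp⟩ := CharP.exists F
  have : Fact p.Prime := ⟨CharP.char_is_prime F p⟩
  let L := FiniteField.Extension F p (2 * (n + 1))
  let _ : Fintype L := Fintype.ofFinite L
  have hL : Module.finrank F L = 2 * (n + 1) := FiniteField.finrank_extension F p _
  have hcard : ((Finset.univ.filter fun x : L => x ≠ 0).card : ℝ) =
      (Fintype.card F : ℝ) ^ (2 * (n + 1)) - 1 := by
    rw [Finset.filter_ne', Finset.card_erase_of_mem (Finset.mem_univ _), Finset.card_univ,
      Nat.cast_pred Fintype.card_pos, Module.card_eq_pow_finrank (K := F), hL, Nat.cast_pow]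
  have hbound := norm_sum_addChar_le_of_card_fiber_le hψ (Finset.univ.filter fun x : L => x ≠ 0)
    (fun x => Algebra.trace F L (phase a b x)) fun c => by
      rw [Finset.filter_filter]
      exact card_trace_phase_eq_le hL a hb c
  rw [← hL, mangoldtSum_polyChar_eq_sum]
  refine hbound.trans ?_
  have hone : 1 ≤ (Fintype.card F : ℝ) ^ (n + 1) :=
    one_le_pow₀ (Nat.one_le_cast.mpr Fintype.card_pos)
  rw [hcard]
  push_cast
  linear_combination hone

/-- The `L`-function is `1 + K T + |F| T ^ 2 = (1 - α T) (1 - β T)`; the estimate for the sums over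
all extensions of even degree forces `|α|, |β| ≤ √|F|`. -/
theorem norm_kloosterman_le_two_mul_sqrt [Fintype Fˣ] (hψ : ψ ≠ 1) (ha : a ≠ 0) (hb : b ≠ 0) :
    ‖kloosterman ψ a b‖ ≤ 2 * √(Fintype.card F) := by
  obtain ⟨α, β, hprod, hpow⟩ := exists_power_sums (mangoldtSum_polyChar_two hψ ha hb)
    (mangoldtSum_polyChar_add_three hψ ha hb)
  have hnorm : ‖α‖ * ‖β‖ = Fintype.card F := by rw [← norm_mul, hprod, Complex.norm_natCast]
  have hbound (n : ℕ) : ‖α ^ (2 * (n + 1)) + β ^ (2 * (n + 1))‖ ≤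
      (6 * Fintype.card F + 1) * (Fintype.card F : ℝ) ^ (n + 1) := by
    rw [← norm_neg]
    exact hpow (2 * n + 1) ▸ norm_mangoldtSum_polyChar_le hψ hb n
  have hcard : 0 < (Fintype.card F : ℝ) := Nat.cast_pos.mpr Fintype.card_pos
  have hα := norm_le_sqrt_of_norm_power_sum_le hcard hnorm hbound
  have hβ := norm_le_sqrt_of_norm_power_sum_le hcard ((mul_comm _ _).trans hnorm)
    fun n => add_comm (α ^ _) _ ▸ hbound n
  rw [← mangoldtSum_polyChar_one, hpow 0, norm_neg, zero_add, pow_one, pow_one]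
  linarith [norm_add_le α β]

end WeilBound

/-! ### Kloosterman sums over finite rings -/

section General

variable {R S T : Type*} [CommRing R] [CommRing S] [CommRing T]

theorem norm_kloosterman_le_card [Finite R] [Fintype Rˣ] (ψ : AddChar R ℂ) (m n : R) :
    ‖kloosterman ψ m n‖ ≤ Fintype.card Rˣ := by
  refine (norm_sum_le _ _).trans_eq ?_
  simp only [AddChar.norm_apply, Finset.sum_const, Finset.card_univ, nsmul_eq_mul, mul_one]

theorem kloosterman_comm [Fintype Rˣ] (ψ : AddChar R ℂ) (m n : R) :
    kloosterman ψ m n = kloosterman ψ n m :=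
  Fintype.sum_equiv (Equiv.inv Rˣ) _ _ fun u => by rw [Equiv.inv_apply, inv_inv, add_comm]

theorem kloosterman_zero_left {F : Type*} [Field F] [Finite F] [Fintype Fˣ] {ψ : AddChar F ℂ}
    (hψ : ψ ≠ 1) {n : F} (hn : n ≠ 0) : kloosterman ψ 0 n = -1 := by
  classical
  let _ := Fintype.ofFinite F
  have hsum : ∑ x, ψ (x * n) = 0 := by
    rw [AddChar.sum_mulShift n (.of_ne_one hψ), if_neg hn, Nat.cast_zero]
  rw [← Finset.add_sum_erase _ _ (Finset.mem_univ 0), zero_mul, AddChar.map_zero_eq_one] at hsum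
  rw [eq_neg_iff_add_eq_zero, add_comm, ← hsum, kloosterman_comm]
  congr 1
  refine Finset.sum_bij (fun u _ => u.val) (fun u _ => by simp) (fun u _ v _ h => Units.ext h)
    (fun x hx => ⟨Units.mk0 x (Finset.ne_of_mem_erase hx), Finset.mem_univ _, rfl⟩) fun u _ => ?_
  rw [zero_mul, add_zero, mul_comm]

/-- The restriction of a character of `R ≃ S × T` to the first factor. -/
def charFst (e : R ≃+* S × T) (ψ : AddChar R ℂ) : AddChar S ℂ :=
  ψ.compAddMonoidHom (e.symm.toAddMonoidHom.comp (AddMonoidHom.inl S T))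

theorem charFst_apply (e : R ≃+* S × T) (ψ : AddChar R ℂ) (s : S) :
    charFst e ψ s = ψ (e.symm (s, 0)) := rfl

theorem charFst_prodComm_apply (e : R ≃+* S × T) (ψ : AddChar R ℂ) (t : T) :
    charFst (e.trans RingEquiv.prodComm) ψ t = ψ (e.symm (0, t)) := rfl

theorem isPrimitive_charFst (e : R ≃+* S × T) {ψ : AddChar R ℂ} (hψ : ψ.IsPrimitive) :
    (charFst e ψ).IsPrimitive := by
  intro a ha hone
  refine hψ (a := e.symm (a, 0)) (by simpa using ha) ?_
  ext x
  have h := DFunLike.congr_fun hone (e x).1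
  rw [AddChar.mulShift_apply, charFst_apply] at h
  rw [AddChar.mulShift_apply, ← e.symm_apply_apply x, ← map_mul, Prod.mul_def, zero_mul]
  exact h

theorem kloosterman_eq_mul [Fintype Rˣ] [Fintype Sˣ] [Fintype Tˣ] (e : R ≃+* S × T)
    (ψ : AddChar R ℂ) (m n : R) :
    kloosterman ψ m n = kloosterman (charFst e ψ) (e m).1 (e n).1 *
      kloosterman (charFst (e.trans RingEquiv.prodComm) ψ) (e m).2 (e n).2 := by
  rw [kloosterman, kloosterman, kloosterman, Finset.sum_mul_sum, ← Fintype.sum_prod_type']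
  refine Fintype.sum_equiv
    ((Units.mapEquiv e.toMulEquiv).trans MulEquiv.prodUnits).toEquiv _ _ fun u => ?_
  rw [charFst_apply, charFst_prodComm_apply, ← AddChar.map_add_eq_mul, ← map_add]
  refine congrArg ψ (e.injective ?_)
  rw [e.apply_symm_apply, map_add, map_mul, map_mul]
  ext <;> simp <;> rfl

theorem card_mul_sum_comp_of_surjective {G H : Type*} [Group G] [Group H] [Fintype G] [Fintype H]
    {φ : G →* H} (hφ : Function.Surjective φ) (f : H → ℂ) :
    (Fintype.card H : ℂ) * ∑ g, f (φ g) = Fintype.card G * ∑ h, f h := by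
  classical
  have hfiber (h : H) : (Finset.univ.filter fun g => φ g = h).card =
      (Finset.univ.filter fun g => φ g = 1).card :=
    MonoidHom.card_fiber_eq_of_mem_range φ (hφ h) (hφ 1)
  have hcard : Fintype.card G =
      Fintype.card H * (Finset.univ.filter fun g => φ g = 1).card := by
    rw [← Finset.card_univ, Finset.card_eq_sum_card_fiberwise fun g _ => Finset.mem_univ (φ g)]
    simp only [hfiber, Finset.sum_const, Finset.card_univ, smul_eq_mul]
  rw [← Finset.sum_fiberwise' Finset.univ φ f]
  simp only [Finset.sum_const, hfiber, nsmul_eq_mul, ← Finset.mul_sum]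
  rw [hcard, Nat.cast_mul, mul_assoc]

end General

section Modulus

theorem exists_isPrimitive_mul_left {q d r : ℕ} [NeZero q] [NeZero r] (h : q = d * r)
    {ψ : AddChar (ZMod q) ℂ} (hψ : ψ.IsPrimitive) :
    ∃ ψ' : AddChar (ZMod r) ℂ, ψ'.IsPrimitive ∧
      ∀ x, ψ (d * x) = ψ' (ZMod.castHom (h ▸ dvd_mul_left r d) (ZMod r) x) := by
  have hpow (n : ℕ) : ψ d ^ n = ψ ((d * n : ℕ) : ZMod q) := by
    rw [← AddChar.map_nsmul_eq_pow, nsmul_eq_mul, Nat.cast_mul, mul_comm]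
  have hroot : ψ d ^ r = 1 := by rw [hpow, ← h, ZMod.natCast_self, AddChar.map_zero_eq_one]
  refine ⟨AddChar.zmodChar r hroot, ?_, fun x => ?_⟩
  · refine AddChar.zmod_char_primitive_of_eq_one_only_at_zero _ _ fun a ha => ?_
    have hd : 0 < d := Nat.pos_of_ne_zero fun hd => NeZero.ne q (by rw [h, hd, zero_mul])
    rw [← ZMod.natCast_zmod_val a, AddChar.zmodChar_apply', hpow, hψ.zmod_char_eq_one_iff,
      ZMod.natCast_eq_zero_iff] at ha
    rw [← ZMod.natCast_zmod_val a, ZMod.natCast_eq_zero_iff]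
    exact Nat.dvd_of_mul_dvd_mul_left hd (h ▸ ha)
  · rw [← ZMod.natCast_zmod_val x, map_natCast (ZMod.castHom _ (ZMod r)),
      AddChar.zmodChar_apply', hpow, Nat.cast_mul]

theorem exists_totient_mul_kloosterman_eq {q d r : ℕ} [NeZero q] [NeZero r] (h : q = d * r)
    {ψ : AddChar (ZMod q) ℂ} (hψ : ψ.IsPrimitive) :
    ∃ ψ' : AddChar (ZMod r) ℂ, ψ'.IsPrimitive ∧ ∀ m n : ℕ,
      (r.totient : ℂ) * kloosterman ψ (d * m : ℕ) (d * n : ℕ) =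
        q.totient * kloosterman ψ' m n := by
  obtain ⟨ψ', hψ', hmul⟩ := exists_isPrimitive_mul_left h hψ
  refine ⟨ψ', hψ', fun m n => ?_⟩
  have hdvd : r ∣ q := h ▸ dvd_mul_left r d
  have hsum := card_mul_sum_comp_of_surjective (ZMod.unitsMap_surjective hdvd)
    fun u => ψ' (m * u + n * (u⁻¹ : (ZMod r)ˣ))
  rw [ZMod.card_units_eq_totient, ZMod.card_units_eq_totient] at hsum
  rw [kloosterman, kloosterman, ← hsum]
  congr 1
  refine Finset.sum_congr rfl fun u _ => ?_
  have hu := hmul (m * u + n * (u⁻¹ : (ZMod q)ˣ))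
  simp only [map_add (ZMod.castHom hdvd _), map_mul (ZMod.castHom hdvd _),
    map_natCast (ZMod.castHom hdvd _), ZMod.castHom_apply] at hu
  rw [← map_inv, ZMod.unitsMap_val, ZMod.unitsMap_val, ← hu]
  congr 1
  push_cast
  ring

theorem totient_prime_mul_le {p : ℕ} (hp : p.Prime) (r : ℕ) :
    (p * r).totient ≤ p * r.totient := by
  by_cases h : p ∣ r
  · exact (Nat.totient_mul_of_prime_of_dvd hp h).le
  · rw [Nat.totient_mul_of_prime_of_not_dvd hp h]
    exact Nat.mul_le_mul_right _ (Nat.sub_le p 1)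

theorem exists_norm_kloosterman_prime_mul_le {p : ℕ} [hp : Fact p.Prime] {k : ℕ}
    {ψ : AddChar (ZMod (p ^ (k + 1))) ℂ} (hψ : ψ.IsPrimitive) :
    ∃ ψ' : AddChar (ZMod (p ^ k)) ℂ, ψ'.IsPrimitive ∧ ∀ m n : ℕ,
      ‖kloosterman ψ (p * m : ℕ) (p * n : ℕ)‖ ≤ p * ‖kloosterman ψ' m n‖ := by
  obtain ⟨ψ', hψ', heq⟩ := exists_totient_mul_kloosterman_eq (pow_succ' p k) hψ
  refine ⟨ψ', hψ', fun m n => ?_⟩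
  have hpos : 0 < ((p ^ k).totient : ℝ) :=
    Nat.cast_pos.mpr (Nat.totient_pos.mpr (pow_pos hp.out.pos k))
  have htotient : ((p ^ (k + 1)).totient : ℝ) ≤ p * (p ^ k).totient := by
    rw [pow_succ']
    exact_mod_cast totient_prime_mul_le hp.out (p ^ k)
  have hnorm := congrArg norm (heq m n)
  rw [norm_mul, norm_mul, Complex.norm_natCast, Complex.norm_natCast] at hnorm
  refine le_of_mul_le_mul_left ?_ hpos
  calc ((p ^ k).totient : ℝ) * ‖kloosterman ψ (p * m : ℕ) (p * n : ℕ)‖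
      ≤ p * (p ^ k).totient * ‖kloosterman ψ' m n‖ := by rw [hnorm]; gcongr
    _ = (p ^ k).totient * (p * ‖kloosterman ψ' m n‖) := by ring

theorem norm_kloosterman_le_of_prime_pow {m n : ℕ} {f : ℕ → ℝ}
    (hmul : ∀ a b : ℕ, a.Coprime b → f (a * b) = f a * f b)
    (hpow : ∀ (p k : ℕ) [Fact p.Prime] {ψ : AddChar (ZMod (p ^ k)) ℂ}, ψ.IsPrimitive →
      ‖kloosterman ψ m n‖ ≤ f (p ^ k))
    (q : ℕ) [NeZero q] {ψ : AddChar (ZMod q) ℂ} (hψ : ψ.IsPrimitive) :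
    ‖kloosterman ψ m n‖ ≤ f q := by
  have hle : ∀ q ≠ 0, ∀ [NeZero q] (ψ : AddChar (ZMod q) ℂ), ψ.IsPrimitive →
      ‖kloosterman ψ m n‖ ≤ f q := by
    intro q hq
    induction q using Nat.recOnPosPrimePosCoprime with
    | prime_pow p k hp =>
      have : Fact p.Prime := ⟨hp⟩
      exact fun _ _ hψ => hpow p k hψ
    | zero => exact absurd rfl hq
    | one =>
      have : Fact (2 : ℕ).Prime := ⟨Nat.prime_two⟩
      exact fun _ _ hψ => hpow 2 0 hψ
    | coprime a b ha hb hab iha ihb =>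
      have : NeZero a := ⟨by lia⟩
      have : NeZero b := ⟨by lia⟩
      intro _ ψ hψ
      let e := ZMod.chineseRemainder hab
      have hcast (j : ℕ) : (e j).1 = j ∧ (e j).2 = j := by simp
      rw [kloosterman_eq_mul e, hmul a b hab, norm_mul, (hcast m).1, (hcast m).2, (hcast n).1,
        (hcast n).2]
      have hfst := iha (NeZero.ne a) _ (isPrimitive_charFst e hψ)
      exact mul_le_mul hfst
        (ihb (NeZero.ne b) _ (isPrimitive_charFst (e.trans RingEquiv.prodComm) hψ))
        (norm_nonneg _) ((norm_nonneg _).trans hfst)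
  exact hle q (NeZero.ne q) ψ hψ

end Modulus

/-! ### Stationary phase -/

section StationaryPhase

variable {R : Type*} [CommRing R]

/-- The unit `1 + c z`, for `c` nilpotent of order at most three. -/
def onePlus {c : R} (hc : c ^ 3 = 0) (z : R) : Rˣ where
  val := 1 + c * z
  inv := 1 - c * z + c ^ 2 * z ^ 2
  val_inv := by linear_combination z ^ 3 * hc
  inv_val := by linear_combination z ^ 3 * hc

variable [Fintype R] [DecidableEq R]

/-- The stationary points at scale `d` of the phase `m y + n / y`: the zeros of `d` times its
logarithmic derivative. -/
def stationary (d m n : R) : Finset Rˣ := {y | d * (m * y - n * (y⁻¹ : Rˣ)) = 0}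

theorem mem_stationary {d m n : R} {y : Rˣ} :
    y ∈ stationary d m n ↔ d * (m * y - n * (y⁻¹ : Rˣ)) = 0 := by
  rw [stationary, Finset.mem_filter_univ]

/-- Averaging over the substitutions `y ↦ (1 + d z) y` kills the non-stationary terms. -/
theorem kloosterman_eq_sum_stationary {ψ : AddChar R ℂ} (hψ : ψ.IsPrimitive) {d : R}
    (hd : d ^ 2 = 0) (m n : R) :
    kloosterman ψ m n = ∑ y ∈ stationary d m n, ψ (m * y + n * (y⁻¹ : Rˣ)) := by
  have hd3 : d ^ 3 = 0 := by rw [pow_succ, hd, zero_mul]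
  have hshift (z : R) : kloosterman ψ m n =
      ∑ y : Rˣ, ψ (m * y + n * (y⁻¹ : Rˣ)) * ψ (z * (d * (m * y - n * (y⁻¹ : Rˣ)))) := by
    rw [kloosterman, ← Equiv.sum_comp (Equiv.mulRight (onePlus hd3 z))]
    refine Finset.sum_congr rfl fun y _ => ?_
    rw [← AddChar.map_add_eq_mul]
    congr 1
    simp only [Equiv.coe_mulRight, mul_inv, Units.val_mul, onePlus, Units.inv_mk]
    linear_combination n * (y⁻¹ : Rˣ) * z ^ 2 * hd
  refine mul_left_cancel₀ (Nat.cast_ne_zero.mpr (Fintype.card_ne_zero (α := R))) ?_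
  calc (Fintype.card R : ℂ) * kloosterman ψ m n = ∑ _z : R, kloosterman ψ m n := by
        rw [Finset.sum_const, Finset.card_univ, nsmul_eq_mul]
    _ = ∑ y : Rˣ, ψ (m * y + n * (y⁻¹ : Rˣ)) *
        ∑ z : R, ψ (z * (d * (m * y - n * (y⁻¹ : Rˣ)))) := by
      simp only [Finset.mul_sum]
      rw [Finset.sum_comm]
      exact Finset.sum_congr rfl fun z _ => hshift z
    _ = Fintype.card R * ∑ y ∈ stationary d m n, ψ (m * y + n * (y⁻¹ : Rˣ)) := by
      simp only [AddChar.sum_mulShift _ hψ, stationary, Finset.sum_filter, Finset.mul_sum,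
        Nat.cast_ite, Nat.cast_zero, mul_ite, mul_zero]
      exact Finset.sum_congr rfl fun y _ => if_congr Iff.rfl (mul_comm _ _) rfl

theorem norm_kloosterman_le_card_stationary {ψ : AddChar R ℂ} (hψ : ψ.IsPrimitive) {d : R}
    (hd : d ^ 2 = 0) (m n : R) : ‖kloosterman ψ m n‖ ≤ (stationary d m n).card := by
  rw [kloosterman_eq_sum_stationary hψ hd]
  refine (norm_sum_le _ _).trans_eq ?_
  simp only [AddChar.norm_apply, Finset.sum_const, nsmul_eq_mul, mul_one]

theorem norm_sum_quadratic_sq_le {ψ : AddChar R ℂ} (hψ : ψ.IsPrimitive) (w c : R) :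
    ‖∑ z, ψ (w * z + c * z ^ 2)‖ ^ 2 ≤
      Fintype.card R * (Finset.univ.filter fun h => 2 * c * h = 0).card := by
  have hsq : (∑ z, ψ (w * z + c * z ^ 2)) * (starRingEnd ℂ) (∑ z, ψ (w * z + c * z ^ 2)) =
      ∑ h, ψ (w * h + c * h ^ 2) * ∑ z, ψ (z * (2 * c * h)) := by
    rw [map_sum, Finset.sum_mul_sum, Finset.sum_comm]
    simp only [Finset.mul_sum]
    rw [Finset.sum_comm (γ := R) (f := fun h z => ψ (w * h + c * h ^ 2) * ψ (z * (2 * c * h)))]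
    refine Finset.sum_congr rfl fun z _ => ?_
    rw [← Equiv.sum_comp (Equiv.addRight z)]
    refine Finset.sum_congr rfl fun h _ => ?_
    rw [← AddChar.map_neg_eq_conj, ← AddChar.map_add_eq_mul, ← AddChar.map_add_eq_mul,
      Equiv.coe_addRight]
    ring_nf
  calc ‖∑ z, ψ (w * z + c * z ^ 2)‖ ^ 2
      = ‖∑ h, ψ (w * h + c * h ^ 2) * ∑ z, ψ (z * (2 * c * h))‖ := by
        rw [← hsq, norm_mul, RCLike.norm_conj, sq]
    _ ≤ ∑ h, ‖ψ (w * h + c * h ^ 2) * ∑ z, ψ (z * (2 * c * h))‖ := norm_sum_le _ _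
    _ = Fintype.card R * (Finset.univ.filter fun h => 2 * c * h = 0).card := by
        simp only [AddChar.sum_mulShift _ hψ, norm_mul, AddChar.norm_apply, one_mul,
          Complex.norm_natCast]
        rw [← Nat.cast_sum, ← Finset.sum_filter, Finset.sum_const, smul_eq_mul, Nat.cast_mul,
          mul_comm]

theorem mul_onePlus_mem_stationary_iff {c d : R} (hc : c ^ 3 = 0) (hdc : d * c = 0) {m n : R}
    (z : R) {y : Rˣ} : y * onePlus hc z ∈ stationary d m n ↔ y ∈ stationary d m n := by
  have heq : d * (m * (y * (1 + c * z)) - n * ((y⁻¹ : Rˣ) * (1 - c * z + c ^ 2 * z ^ 2))) =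
      d * (m * y - n * (y⁻¹ : Rˣ)) := by
    linear_combination (m * y * z + n * (y⁻¹ : Rˣ) * z - n * (y⁻¹ : Rˣ) * z ^ 2 * c) * hdc
  rw [mem_stationary, mem_stationary, ← heq]
  simp only [mul_inv, Units.val_mul, onePlus, Units.inv_mk]

/-- Averaging the stationary points over the substitutions `y ↦ (1 + c z) y` produces quadratic
Gauss sums. -/
theorem card_mul_norm_kloosterman_le {ψ : AddChar R ℂ} (hψ : ψ.IsPrimitive) {c d : R}
    (hd : d ^ 2 = 0) (hc : c ^ 3 = 0) (hdc : d * c = 0) (m n : R) :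
    Fintype.card R * ‖kloosterman ψ m n‖ ≤ ∑ y ∈ stationary d m n,
      ‖∑ z, ψ (c * (m * y - n * (y⁻¹ : Rˣ)) * z + c ^ 2 * n * (y⁻¹ : Rˣ) * z ^ 2)‖ := by
  have hshift (z : R) : kloosterman ψ m n = ∑ y ∈ stationary d m n,
      ψ (m * y + n * (y⁻¹ : Rˣ)) *
        ψ (c * (m * y - n * (y⁻¹ : Rˣ)) * z + c ^ 2 * n * (y⁻¹ : Rˣ) * z ^ 2) := by
    rw [kloosterman_eq_sum_stationary hψ hd]
    refine (Finset.sum_equiv (Equiv.mulRight (onePlus hc z))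
      (fun y => (mul_onePlus_mem_stationary_iff hc hdc z).symm) fun y _ => ?_).symm
    rw [← AddChar.map_add_eq_mul]
    congr 1
    simp only [Equiv.coe_mulRight, mul_inv, Units.val_mul, onePlus, Units.inv_mk]
    ring
  have hsum : (Fintype.card R : ℂ) * kloosterman ψ m n = ∑ y ∈ stationary d m n,
      ψ (m * y + n * (y⁻¹ : Rˣ)) *
        ∑ z, ψ (c * (m * y - n * (y⁻¹ : Rˣ)) * z + c ^ 2 * n * (y⁻¹ : Rˣ) * z ^ 2) := by
    simp only [Finset.mul_sum]
    rw [Finset.sum_comm, ← nsmul_eq_mul, ← Finset.card_univ, ← Finset.sum_const]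
    exact Finset.sum_congr rfl fun z _ => hshift z
  rw [← Complex.norm_natCast, ← norm_mul, hsum]
  refine (norm_sum_le _ _).trans_eq (Finset.sum_congr rfl fun y _ => ?_)
  rw [norm_mul, AddChar.norm_apply, one_mul]

end StationaryPhase

/-! ### The Weil–Estermann bound -/

section PrimePower

theorem card_filter_natCast_mul_eq_zero_le {q c : ℕ} [NeZero q] (hc : 0 < c) :
    (Finset.univ.filter fun t : ZMod q => c * t = 0).card ≤ c := by
  simpa only [nsmul_eq_mul] using IsAddCyclic.card_nsmul_eq_zero_le (α := ZMod q) hc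

theorem card_filter_natCast_mul_add_eq_zero_le {q c : ℕ} [NeZero q] (hc : 0 < c) (a : ZMod q) :
    (Finset.univ.filter fun t : ZMod q => c * (t + a) = 0).card ≤ c :=
  (Finset.card_equiv (Equiv.addRight a) fun t => by
    simp only [Finset.mem_filter_univ, Equiv.coe_addRight]).trans_le
      (card_filter_natCast_mul_eq_zero_le hc)

theorem natCast_pow_eq_zero {p k j : ℕ} (h : k ≤ j) : (p : ZMod (p ^ k)) ^ j = 0 := by
  rw [← Nat.cast_pow, ZMod.natCast_eq_zero_iff]
  exact pow_dvd_pow p h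

/-- Two integers with sum `2 Y`, where `p ∤ Y`, share at most a single factor `2`. -/
theorem pow_dvd_or_of_dvd_mul {p : ℕ} (hp : p.Prime) {l : ℕ} {A B Y : ℤ} (hAB : A + B = 2 * Y)
    (hY : ¬ (p : ℤ) ∣ Y) (h : (p : ℤ) ^ l ∣ A * B) :
    (p : ℤ) ^ l ∣ Nat.gcd 2 p * A ∨ (p : ℤ) ^ l ∣ Nat.gcd 2 p * B := by
  have hp' : Prime (p : ℤ) := Nat.prime_iff_prime_int.mp hp
  by_cases hA : (p : ℤ) ∣ A
  swap
  · exact Or.inr ((hp'.pow_dvd_of_dvd_mul_left l hA h).mul_left _)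
  by_cases hB : (p : ℤ) ∣ B
  swap
  · exact Or.inl ((hp'.pow_dvd_of_dvd_mul_right l hB h).mul_left _)
  obtain rfl : p = 2 := by
    refine (Nat.prime_dvd_prime_iff_eq hp Nat.prime_two).mp (Int.natCast_dvd_natCast.mp ?_)
    exact (hp'.dvd_or_dvd (hAB ▸ dvd_add hA hB)).resolve_right hY
  obtain ⟨A, rfl⟩ := hA
  obtain ⟨B, rfl⟩ := hB
  have hsum : A + B = Y := by lia
  rw [Nat.gcd_self]
  have hregA : (2 : ℕ) * A * ((2 : ℕ) * B) = A * ((2 : ℕ) * ((2 : ℕ) * B)) := by ring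
  have hregB : (2 : ℕ) * A * ((2 : ℕ) * B) = B * ((2 : ℕ) * ((2 : ℕ) * A)) := by ring
  by_cases hA : ((2 : ℕ) : ℤ) ∣ A
  · have hB : ¬ ((2 : ℕ) : ℤ) ∣ B := fun hB => hY (hsum ▸ dvd_add hA hB)
    exact Or.inl (hp'.pow_dvd_of_dvd_mul_left l hB (hregB ▸ h))
  · exact Or.inr (hp'.pow_dvd_of_dvd_mul_left l hA (hregA ▸ h))

theorem sqrt_gcd_mul_sqrt_pow_succ (p m n k : ℕ) :
    √(Nat.gcd (Nat.gcd (p * m) (p * n)) (p ^ (k + 1)) : ℝ) * √((p ^ (k + 1) : ℕ) : ℝ) =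
      p * (√(Nat.gcd (Nat.gcd m n) (p ^ k)) * √((p ^ k : ℕ) : ℝ)) := by
  have hp0 : (0 : ℝ) ≤ p := Nat.cast_nonneg p
  rw [Nat.gcd_mul_left, pow_succ', Nat.gcd_mul_left, Nat.cast_mul, Nat.cast_mul,
    Real.sqrt_mul hp0, Real.sqrt_mul hp0, mul_mul_mul_comm, Real.mul_self_sqrt hp0]

variable {p : ℕ} [hp : Fact p.Prime]

theorem isUnit_natCast_of_not_dvd {k a : ℕ} (h : ¬ p ∣ a) : IsUnit (a : ZMod (p ^ k)) := by
  rw [ZMod.isUnit_iff_coprime]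
  exact (((Nat.Prime.coprime_iff_not_dvd hp.out).mpr h).pow_left k).symm

theorem not_dvd_val_unit {k : ℕ} (hk : k ≠ 0) (u : (ZMod (p ^ k))ˣ) :
    ¬ (p : ℤ) ∣ ((u : ZMod (p ^ k)).val : ℤ) := by
  rw [Int.natCast_dvd_natCast, ← hp.out.coprime_iff_not_dvd,
    ← Nat.coprime_pow_left_iff (Nat.pos_of_ne_zero hk)]
  exact (ZMod.val_coe_unit_coprime u).symm

theorem pow_mul_intCast_eq_zero_iff {l s : ℕ} {A : ℤ} :
    (p : ZMod (p ^ (l + s))) ^ s * A = 0 ↔ (p : ℤ) ^ l ∣ A := by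
  have hcast : (p : ZMod (p ^ (l + s))) ^ s * A = ((p : ℤ) ^ s * A : ℤ) := by push_cast; rfl
  rw [hcast, ZMod.intCast_zmod_eq_zero_iff_dvd, Nat.cast_pow, add_comm, pow_add]
  exact mul_dvd_mul_iff_left (pow_ne_zero s (Int.natCast_ne_zero.mpr hp.out.ne_zero))

theorem mul_sub_eq_zero_or_mul_add_eq_zero {l s : ℕ} (hl : l ≠ 0) {u v : (ZMod (p ^ (l + s)))ˣ}
    (h : (p : ZMod (p ^ (l + s))) ^ s * ((u - v) * (u + v)) = 0) :
    ((Nat.gcd 2 p * p ^ s : ℕ) : ZMod (p ^ (l + s))) * (u - v) = 0 ∨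
      ((Nat.gcd 2 p * p ^ s : ℕ) : ZMod (p ^ (l + s))) * (u + v) = 0 := by
  have hcast (w : (ZMod (p ^ (l + s)))ˣ) :
      (((w : ZMod (p ^ (l + s))).val : ℤ) : ZMod (p ^ (l + s))) = w := by
    rw [Int.cast_natCast, ZMod.natCast_zmod_val]
  have hdvd : (p : ℤ) ^ l ∣ ((u : ZMod (p ^ (l + s))).val - (v : ZMod (p ^ (l + s))).val) *
      ((u : ZMod (p ^ (l + s))).val + (v : ZMod (p ^ (l + s))).val) := by
    rw [← pow_mul_intCast_eq_zero_iff (s := s), Int.cast_mul, Int.cast_sub, Int.cast_add,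
      hcast, hcast, h]
  refine (pow_dvd_or_of_dvd_mul hp.out (by ring) (not_dvd_val_unit (by lia) u) hdvd).imp ?_ ?_ <;>
  · intro hdvd
    rw [← pow_mul_intCast_eq_zero_iff (s := s)] at hdvd
    simp only [Int.cast_mul, Int.cast_sub, Int.cast_add, Int.cast_natCast (Nat.gcd 2 p),
      hcast] at hdvd
    rw [Nat.cast_mul, Nat.cast_pow, mul_assoc, mul_left_comm, hdvd]

theorem card_stationary_le {l s : ℕ} (hl : l ≠ 0) (m : ZMod (p ^ (l + s)))
    {n : ZMod (p ^ (l + s))} (hn : IsUnit n) :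
    (stationary ((p : ZMod (p ^ (l + s))) ^ s) m n).card ≤ 2 * (Nat.gcd 2 p * p ^ s) := by
  rcases (stationary ((p : ZMod (p ^ (l + s))) ^ s) m n).eq_empty_or_nonempty with h | ⟨v, hv⟩
  · simp only [h, Finset.card_empty, Nat.zero_le]
  have hc : 0 < Nat.gcd 2 p * p ^ s :=
    Nat.mul_pos (Nat.gcd_pos_of_pos_left _ two_pos) (pow_pos hp.out.pos _)
  let T (a : ZMod (p ^ (l + s))) : Finset (ZMod (p ^ (l + s))) :=
    {t | ((Nat.gcd 2 p * p ^ s : ℕ) : ZMod (p ^ (l + s))) * (t + a) = 0}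
  have hmem (u : (ZMod (p ^ (l + s)))ˣ) (hu : u ∈ stationary ((p : ZMod (p ^ (l + s))) ^ s) m n) :
      ((u⁻¹ : (ZMod (p ^ (l + s)))ˣ) : ZMod (p ^ (l + s))) ∈
        T (-(v⁻¹ : (ZMod (p ^ (l + s)))ˣ)) ∪ T (v⁻¹ : (ZMod (p ^ (l + s)))ˣ) := by
    rw [mem_stationary] at hu hv
    rw [Finset.mem_union, Finset.mem_filter_univ, Finset.mem_filter_univ, ← sub_eq_add_neg]
    refine mul_sub_eq_zero_or_mul_add_eq_zero hl (hn.mul_left_cancel ?_)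
    linear_combination (v⁻¹ : (ZMod (p ^ (l + s)))ˣ) * hv - (u⁻¹ : (ZMod (p ^ (l + s)))ˣ) * hu +
      (p : ZMod (p ^ (l + s))) ^ s * m * (u.mul_inv - v.mul_inv)
  calc (stationary ((p : ZMod (p ^ (l + s))) ^ s) m n).card
      ≤ (T (-(v⁻¹ : (ZMod (p ^ (l + s)))ˣ)) ∪ T (v⁻¹ : (ZMod (p ^ (l + s)))ˣ)).card :=
        Finset.card_le_card_of_injOn (fun u => ((u⁻¹ : (ZMod (p ^ (l + s)))ˣ) : ZMod _))
          (fun u hu => hmem u hu)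
          fun u _ w _ h => inv_injective (Units.ext h)
    _ ≤ (T (-(v⁻¹ : (ZMod (p ^ (l + s)))ˣ))).card + (T (v⁻¹ : (ZMod (p ^ (l + s)))ˣ)).card :=
        Finset.card_union_le _ _
    _ ≤ 2 * (Nat.gcd 2 p * p ^ s) := by
        rw [two_mul]
        exact add_le_add (card_filter_natCast_mul_add_eq_zero_le hc _)
          (card_filter_natCast_mul_add_eq_zero_le hc _)

theorem norm_kloosterman_le_two_mul {l s : ℕ} (hl : l ≠ 0) (hs : l ≤ s)
    {ψ : AddChar (ZMod (p ^ (l + s))) ℂ} (hψ : ψ.IsPrimitive) (m : ZMod (p ^ (l + s)))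
    {n : ZMod (p ^ (l + s))} (hn : IsUnit n) :
    ‖kloosterman ψ m n‖ ≤ 2 * (Nat.gcd 2 p * p ^ s) := by
  have hd : ((p : ZMod (p ^ (l + s))) ^ s) ^ 2 = 0 := by
    rw [← pow_mul]
    exact natCast_pow_eq_zero (by lia)
  exact (norm_kloosterman_le_card_stationary hψ hd m n).trans
    (by exact_mod_cast card_stationary_le hl m hn)

theorem norm_sum_quadratic_prime_pow_le {l : ℕ} (h2 : p ≠ 2)
    {ψ : AddChar (ZMod (p ^ (l + (l + 1)))) ℂ} (hψ : ψ.IsPrimitive)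
    (w : ZMod (p ^ (l + (l + 1)))) {a : ZMod (p ^ (l + (l + 1)))} (ha : IsUnit a) :
    ‖∑ z, ψ (w * z + (p ^ l) ^ 2 * a * z ^ 2)‖ ≤ p ^ (2 * l) * √p := by
  have htwo : IsUnit ((2 : ℕ) : ZMod (p ^ (l + (l + 1)))) :=
    isUnit_natCast_of_not_dvd fun h => h2 ((Nat.prime_dvd_prime_iff_eq hp.out Nat.prime_two).mp h)
  have hsubset : (Finset.univ.filter fun h : ZMod (p ^ (l + (l + 1))) =>
      2 * ((p ^ l) ^ 2 * a) * h = 0) ⊆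
        Finset.univ.filter fun h => ((p ^ (2 * l) : ℕ) : ZMod (p ^ (l + (l + 1)))) * h = 0 := by
    intro h hh
    rw [Finset.mem_filter_univ] at hh ⊢
    refine (htwo.mul ha).mul_left_cancel ?_
    rw [mul_zero, ← hh]
    push_cast
    ring
  have hcard := (Finset.card_le_card hsubset).trans
    (card_filter_natCast_mul_eq_zero_le (pow_pos hp.out.pos _))
  refine (sq_le_sq₀ (norm_nonneg _) (by positivity)).mp
    ((norm_sum_quadratic_sq_le hψ w _).trans ?_)
  rw [ZMod.card]
  calc ((p ^ (l + (l + 1)) : ℕ) : ℝ) * _ ≤ (p ^ (l + (l + 1)) : ℕ) * (p ^ (2 * l) : ℕ) := by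
        gcongr
    _ = (p ^ (2 * l) * √p) ^ 2 := by
        rw [mul_pow, Real.sq_sqrt (Nat.cast_nonneg p)]
        push_cast
        ring

theorem norm_kloosterman_odd_prime_pow_le_of_ne_two {l : ℕ} (hl : l ≠ 0) (h2 : p ≠ 2)
    {ψ : AddChar (ZMod (p ^ (l + (l + 1)))) ℂ} (hψ : ψ.IsPrimitive) (m : ZMod (p ^ (l + (l + 1))))
    {n : ZMod (p ^ (l + (l + 1)))} (hn : IsUnit n) :
    ‖kloosterman ψ m n‖ ≤ 2 * (p ^ l * √p) := by
  have hp0 : 0 < (p : ℝ) := Nat.cast_pos.mpr hp.out.pos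
  have hcard : ((stationary ((p : ZMod (p ^ (l + (l + 1)))) ^ (l + 1)) m n).card : ℝ) ≤
      2 * p ^ (l + 1) := by
    have hle := card_stationary_le (s := l + 1) hl m hn
    rw [(Nat.coprime_primes Nat.prime_two hp.out).mpr h2.symm, one_mul] at hle
    exact_mod_cast hle
  have hmain := card_mul_norm_kloosterman_le hψ (c := (p : ZMod (p ^ (l + (l + 1)))) ^ l)
    (d := (p : ZMod (p ^ (l + (l + 1)))) ^ (l + 1))
    (by rw [← pow_mul]; exact natCast_pow_eq_zero (by lia))
    (by rw [← pow_mul]; exact natCast_pow_eq_zero (by lia))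
    (by rw [← pow_add]; exact natCast_pow_eq_zero (by lia)) m n
  rw [ZMod.card, Nat.cast_pow] at hmain
  refine le_of_mul_le_mul_left ?_ (pow_pos hp0 (l + (l + 1)))
  calc (p : ℝ) ^ (l + (l + 1)) * ‖kloosterman ψ m n‖
      ≤ (stationary ((p : ZMod (p ^ (l + (l + 1)))) ^ (l + 1)) m n).card *
          (p ^ (2 * l) * √p) := by
        rw [← nsmul_eq_mul]
        refine hmain.trans (Finset.sum_le_card_nsmul _ _ _ fun y _ => ?_)
        simp only [mul_assoc _ n]
        exact norm_sum_quadratic_prime_pow_le h2 hψ _ (hn.mul y⁻¹.isUnit)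
    _ ≤ 2 * p ^ (l + 1) * (p ^ (2 * l) * √p) := by gcongr
    _ = p ^ (l + (l + 1)) * (2 * (p ^ l * √p)) := by ring

theorem norm_kloosterman_prime_le {ψ : AddChar (ZMod p) ℂ} (hψ : ψ.IsPrimitive) (m : ZMod p)
    {n : ZMod p} (hn : IsUnit n) : ‖kloosterman ψ m n‖ ≤ 2 * √p := by
  have hψ' : ψ ≠ 1 := fun h => hψ one_ne_zero (by rw [AddChar.mulShift_one, h])
  rcases eq_or_ne m 0 with rfl | hm
  · rw [kloosterman_zero_left hψ' hn.ne_zero, norm_neg, norm_one]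
    have : 1 ≤ √(p : ℝ) := Real.one_le_sqrt.mpr (Nat.one_le_cast.mpr hp.out.one_le)
    linarith
  · simpa only [ZMod.card] using norm_kloosterman_le_two_mul_sqrt hψ' hm hn.ne_zero

theorem norm_kloosterman_even_prime_pow_le {l : ℕ} (hl : l ≠ 0)
    {ψ : AddChar (ZMod (p ^ (l + l))) ℂ} (hψ : ψ.IsPrimitive) (m : ZMod (p ^ (l + l)))
    {n : ZMod (p ^ (l + l))} (hn : IsUnit n) :
    ‖kloosterman ψ m n‖ ≤ Nat.gcd 2 p * ((l + l : ℕ) + 1) * √((p ^ (l + l) : ℕ) : ℝ) := by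
  have hsqrt : √((p ^ (l + l) : ℕ) : ℝ) = p ^ l := by
    rw [Nat.cast_pow, pow_add, Real.sqrt_mul_self (by positivity)]
  have htwo : (2 : ℝ) ≤ (l + l : ℕ) + 1 := by exact_mod_cast (by lia : 2 ≤ l + l + 1)
  calc ‖kloosterman ψ m n‖ ≤ Nat.gcd 2 p * 2 * p ^ l :=
        (norm_kloosterman_le_two_mul hl le_rfl hψ m hn).trans_eq (by ring)
    _ ≤ Nat.gcd 2 p * ((l + l : ℕ) + 1) * √((p ^ (l + l) : ℕ) : ℝ) := by
        rw [hsqrt]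
        gcongr

theorem norm_kloosterman_odd_prime_pow_le {l : ℕ} {ψ : AddChar (ZMod (p ^ (l + (l + 1)))) ℂ}
    (hψ : ψ.IsPrimitive) (m : ZMod (p ^ (l + (l + 1)))) {n : ZMod (p ^ (l + (l + 1)))}
    (hn : IsUnit n) :
    ‖kloosterman ψ m n‖ ≤
      Nat.gcd 2 p * ((l + (l + 1) : ℕ) + 1) * √((p ^ (l + (l + 1)) : ℕ) : ℝ) := by
  have hgcd : (1 : ℝ) ≤ Nat.gcd 2 p := by exact_mod_cast Nat.gcd_pos_of_pos_left p two_pos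
  rcases eq_or_ne l 0 with rfl | hl
  · have : Fact (p ^ (0 + (0 + 1))).Prime := ⟨by simpa using hp.out⟩
    refine (norm_kloosterman_prime_le hψ m hn).trans ?_
    push_cast
    gcongr
    linarith
  have hsqrt : √((p ^ (l + (l + 1)) : ℕ) : ℝ) = p ^ l * √p := by
    rw [Nat.cast_pow, show (p : ℝ) ^ (l + (l + 1)) = (p ^ l) ^ 2 * p by ring,
      Real.sqrt_mul (by positivity), Real.sqrt_sq (by positivity)]
  have hfour : (4 : ℝ) ≤ (l + (l + 1) : ℕ) + 1 := by
    exact_mod_cast (by lia : 4 ≤ l + (l + 1) + 1)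
  rw [hsqrt]
  rcases eq_or_ne p 2 with rfl | h2
  · refine (norm_kloosterman_le_two_mul hl (Nat.le_succ l) hψ m hn).trans ?_
    have hsqrt2 : (1 : ℝ) ≤ √2 := Real.one_le_sqrt.mpr one_le_two
    calc (2 : ℝ) * (Nat.gcd 2 2 * (2 : ℕ) ^ (l + 1)) = Nat.gcd 2 2 * 4 * (2 ^ l * 1) := by
          push_cast; ring
      _ ≤ Nat.gcd 2 2 * ((l + (l + 1) : ℕ) + 1) * ((2 : ℕ) ^ l * √(2 : ℕ)) := by
          push_cast at hfour ⊢
          gcongr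
  · refine (norm_kloosterman_odd_prime_pow_le_of_ne_two hl h2 hψ m hn).trans ?_
    gcongr
    nlinarith

theorem norm_kloosterman_prime_pow_le_of_isUnit {k : ℕ} (hk : k ≠ 0)
    {ψ : AddChar (ZMod (p ^ k)) ℂ} (hψ : ψ.IsPrimitive) (m : ZMod (p ^ k))
    {n : ZMod (p ^ k)} (hn : IsUnit n) :
    ‖kloosterman ψ m n‖ ≤ Nat.gcd 2 p * (k + 1) * √((p ^ k : ℕ) : ℝ) := by
  obtain ⟨l, rfl | rfl⟩ : ∃ l, k = l + l ∨ k = l + (l + 1) := ⟨k / 2, by lia⟩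
  · exact norm_kloosterman_even_prime_pow_le (by lia) hψ m hn
  · exact norm_kloosterman_odd_prime_pow_le hψ m hn

theorem norm_kloosterman_prime_pow_le_of_not_dvd {k : ℕ} (hk : k ≠ 0)
    {ψ : AddChar (ZMod (p ^ k)) ℂ} (hψ : ψ.IsPrimitive) {m n : ℕ} (hmn : ¬ (p ∣ m ∧ p ∣ n)) :
    ‖kloosterman ψ m n‖ ≤ Nat.gcd 2 p * (k + 1) * √((p ^ k : ℕ) : ℝ) := by
  rcases not_and_or.mp hmn with hm | hn
  · rw [kloosterman_comm]
    exact norm_kloosterman_prime_pow_le_of_isUnit hk hψ n (isUnit_natCast_of_not_dvd hm)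
  · exact norm_kloosterman_prime_pow_le_of_isUnit hk hψ m (isUnit_natCast_of_not_dvd hn)

theorem norm_kloosterman_prime_pow_le {k : ℕ} {ψ : AddChar (ZMod (p ^ k)) ℂ}
    (hψ : ψ.IsPrimitive) (m n : ℕ) :
    ‖kloosterman ψ m n‖ ≤ Nat.gcd 2 (p ^ k) * (k + 1) *
      (√(Nat.gcd (Nat.gcd m n) (p ^ k)) * √((p ^ k : ℕ) : ℝ)) := by
  induction k generalizing m n with
  | zero =>
    refine (norm_kloosterman_le_card ψ _ _).trans ?_
    rw [ZMod.card_units_eq_totient]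
    simp
  | succ k ih =>
    by_cases hmn : p ∣ m ∧ p ∣ n
    · obtain ⟨⟨m, rfl⟩, ⟨n, rfl⟩⟩ := hmn
      obtain ⟨ψ', hψ', hle⟩ := exists_norm_kloosterman_prime_mul_le hψ
      have hgcd : Nat.gcd 2 (p ^ k) ≤ Nat.gcd 2 (p ^ (k + 1)) :=
        Nat.le_of_dvd (Nat.gcd_pos_of_pos_left _ two_pos)
          (Nat.gcd_dvd_gcd_of_dvd_right 2 (pow_dvd_pow p k.le_succ))
      rw [sqrt_gcd_mul_sqrt_pow_succ]
      calc ‖kloosterman ψ (p * m : ℕ) (p * n : ℕ)‖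
          ≤ p * (Nat.gcd 2 (p ^ k) * (k + 1) *
              (√(Nat.gcd (Nat.gcd m n) (p ^ k)) * √((p ^ k : ℕ) : ℝ))) :=
            (hle m n).trans (mul_le_mul_of_nonneg_left (ih hψ' m n) p.cast_nonneg)
        _ = Nat.gcd 2 (p ^ k) * (k + 1) *
              (p * (√(Nat.gcd (Nat.gcd m n) (p ^ k)) * √((p ^ k : ℕ) : ℝ))) := by ring
        _ ≤ _ := by
            gcongr
            exact k.le_succ
    · have hgcd : Nat.gcd 2 p ≤ Nat.gcd 2 (p ^ (k + 1)) :=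
        Nat.le_of_dvd (Nat.gcd_pos_of_pos_left _ two_pos)
          (Nat.gcd_dvd_gcd_of_dvd_right 2 (dvd_pow_self p k.succ_ne_zero))
      have hsqrt : 1 ≤ √(Nat.gcd (Nat.gcd m n) (p ^ (k + 1)) : ℝ) :=
        Real.one_le_sqrt.mpr
          (Nat.one_le_cast.mpr (Nat.gcd_pos_of_pos_right _ (pow_pos hp.out.pos _)))
      refine (norm_kloosterman_prime_pow_le_of_not_dvd k.succ_ne_zero hψ hmn).trans ?_
      gcongr
      exact le_mul_of_one_le_left (Real.sqrt_nonneg _) hsqrt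

end PrimePower

/-- The **Weil–Estermann bound**. -/
theorem norm_kloosterman_le {q : ℕ} [NeZero q] {ψ : AddChar (ZMod q) ℂ} (hψ : ψ.IsPrimitive)
    (m n : ℕ) : ‖kloosterman ψ m n‖ ≤
      2 * q.divisors.card * √(Nat.gcd (Nat.gcd m n) q) * √q := by
  have hle : ‖kloosterman ψ m n‖ ≤
      Nat.gcd 2 q * q.divisors.card * (√(Nat.gcd (Nat.gcd m n) q) * √q) := by
    refine norm_kloosterman_le_of_prime_pow (m := m) (n := n) (f := fun q =>
      Nat.gcd 2 q * q.divisors.card * (√(Nat.gcd (Nat.gcd m n) q) * √q))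
      (fun a b hab => ?_) (fun p k _ _ hψ => ?_) q hψ
    · simp only [hab.card_divisors_mul, hab.gcd_mul, Nat.cast_mul,
        Real.sqrt_mul (Nat.cast_nonneg _)]
      ring
    · refine (norm_kloosterman_prime_pow_le hψ m n).trans_eq ?_
      rw [Nat.divisors_prime_pow Fact.out, Finset.card_map, Finset.card_range, Nat.cast_succ]
  rw [mul_assoc]
  refine hle.trans ?_
  gcongr
  exact_mod_cast Nat.gcd_le_left q two_pos

theorem norm_kloosterman_zero_prime_pow_le_one {p : ℕ} [hp : Fact p.Prime] {k : ℕ}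
    {ψ : AddChar (ZMod (p ^ (k + 1))) ℂ} (hψ : ψ.IsPrimitive) {m : ZMod (p ^ (k + 1))}
    (hm : IsUnit m) : ‖kloosterman ψ m 0‖ ≤ 1 := by
  rcases eq_or_ne k 0 with rfl | hk
  · have : Fact (p ^ (0 + 1)).Prime := ⟨by simpa using hp.out⟩
    have hψ' : ψ ≠ 1 := fun h => hψ one_ne_zero (by rw [AddChar.mulShift_one, h])
    rw [kloosterman_comm, kloosterman_zero_left hψ' hm.ne_zero, norm_neg, norm_one]
  have hd : ((p : ZMod (p ^ (k + 1))) ^ k) ^ 2 = 0 := by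
    rw [← pow_mul]
    exact natCast_pow_eq_zero (by lia)
  have hempty : stationary ((p : ZMod (p ^ (k + 1))) ^ k) m 0 = ∅ := by
    refine Finset.eq_empty_of_forall_notMem fun y hy => ?_
    rw [mem_stationary, zero_mul, sub_zero, (hm.mul y.isUnit).mul_left_eq_zero,
      ← Nat.cast_pow, ZMod.natCast_eq_zero_iff, Nat.pow_dvd_pow_iff_le_right hp.out.one_lt] at hy
    lia
  refine (norm_kloosterman_le_card_stationary hψ hd _ _).trans ?_
  rw [hempty, Finset.card_empty, Nat.cast_zero]
  exact zero_le_one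

theorem norm_kloosterman_zero_prime_pow_le {p : ℕ} [hp : Fact p.Prime] {k : ℕ}
    {ψ : AddChar (ZMod (p ^ k)) ℂ} (hψ : ψ.IsPrimitive) (m : ℕ) :
    ‖kloosterman ψ m (0 : ℕ)‖ ≤ Nat.gcd m (p ^ k) := by
  induction k generalizing m with
  | zero =>
    refine (norm_kloosterman_le_card ψ _ _).trans ?_
    rw [ZMod.card_units_eq_totient]
    simp
  | succ k ih =>
    by_cases hm : p ∣ m
    · obtain ⟨m, rfl⟩ := hm
      obtain ⟨ψ', hψ', hle⟩ := exists_norm_kloosterman_prime_mul_le hψ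
      have hgcd : (Nat.gcd (p * m) (p ^ (k + 1)) : ℝ) = p * Nat.gcd m (p ^ k) := by
        rw [pow_succ', Nat.gcd_mul_left, Nat.cast_mul]
      rw [hgcd]
      exact (hle m 0).trans (mul_le_mul_of_nonneg_left (ih hψ' m) p.cast_nonneg)
    · have hgcd : (1 : ℝ) ≤ Nat.gcd m (p ^ (k + 1)) :=
        Nat.one_le_cast.mpr (Nat.gcd_pos_of_pos_right _ (pow_pos hp.out.pos _))
      refine le_trans ?_ hgcd
      rw [Nat.cast_zero]
      exact norm_kloosterman_zero_prime_pow_le_one hψ (isUnit_natCast_of_not_dvd hm)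

/-- `kloosterman ψ m 0` is a Ramanujan sum. -/
theorem norm_kloosterman_zero_le {q : ℕ} [NeZero q] {ψ : AddChar (ZMod q) ℂ}
    (hψ : ψ.IsPrimitive) (m : ℕ) : ‖kloosterman ψ (m : ZMod q) 0‖ ≤ Nat.gcd m q := by
  rw [← Nat.cast_zero]
  exact norm_kloosterman_le_of_prime_pow (f := fun q => Nat.gcd m q)
    (fun a b hab => by rw [hab.gcd_mul, Nat.cast_mul])
    (fun p k _ _ hψ => norm_kloosterman_zero_prime_pow_le hψ m) q hψ

/-! ### Completion -/

section Weights

/-- The weight `1/h + 1/(q-h)` dominating the Fourier coefficients of an interval modulo `q`. -/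
noncomputable def weight (q h : ℕ) : ℝ := (h : ℝ)⁻¹ + ((q : ℝ) - h)⁻¹

theorem weight_nonneg {q h : ℕ} (hh : h ≤ q) : 0 ≤ weight q h :=
  add_nonneg (inv_nonneg.mpr h.cast_nonneg)
    (inv_nonneg.mpr (sub_nonneg.mpr (Nat.cast_le.mpr hh)))

theorem sum_inv_dvd_le {q d : ℕ} (hd : d ∣ q) (hq : q ≠ 0) :
    ∑ h ∈ Finset.Ico 1 q with d ∣ h, (h : ℝ)⁻¹ ≤ (1 + Real.log q) / d := by
  obtain ⟨r, rfl⟩ := hd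
  have hd0 : 0 < d := Nat.pos_of_ne_zero (left_ne_zero_of_mul hq)
  have hr0 : 0 < r := Nat.pos_of_ne_zero (right_ne_zero_of_mul hq)
  have hsubset : (Finset.Ico 1 (d * r)).filter (d ∣ ·) ⊆ (Finset.Icc 1 r).image (d * ·) := by
    intro h hh
    rw [Finset.mem_filter, Finset.mem_Ico] at hh
    obtain ⟨⟨hpos, hlt⟩, j, rfl⟩ := hh
    exact Finset.mem_image.mpr ⟨j, Finset.mem_Icc.mpr
      ⟨Nat.pos_of_mul_pos_left hpos, (Nat.lt_of_mul_lt_mul_left hlt).le⟩, rfl⟩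
  calc ∑ h ∈ Finset.Ico 1 (d * r) with d ∣ h, (h : ℝ)⁻¹
      ≤ ∑ h ∈ (Finset.Icc 1 r).image (d * ·), (h : ℝ)⁻¹ :=
        Finset.sum_le_sum_of_subset_of_nonneg hsubset fun _ _ _ => by positivity
    _ = ∑ j ∈ Finset.Icc 1 r, ((d * j : ℕ) : ℝ)⁻¹ :=
        Finset.sum_image fun a _ b _ hab => Nat.eq_of_mul_eq_mul_left hd0 hab
    _ = (harmonic r : ℝ) / d := by
        rw [harmonic_eq_sum_Icc, Rat.cast_sum, Finset.sum_div]
        refine Finset.sum_congr rfl fun j _ => ?_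
        rw [Nat.cast_mul, mul_inv, mul_comm, div_eq_mul_inv, Rat.cast_inv, Rat.cast_natCast]
    _ ≤ (1 + Real.log (d * r : ℕ)) / d := by
        gcongr
        refine (harmonic_le_one_add_log r).trans ?_
        gcongr
        exact Nat.le_mul_of_pos_left r hd0

theorem sum_weight_dvd_le {q d : ℕ} (hd : d ∣ q) (hq : q ≠ 0) :
    ∑ h ∈ Finset.Ico 1 q with d ∣ h, weight q h ≤ 2 * (1 + Real.log q) / d := by
  have hmem (h : ℕ) : h ∈ (Finset.Ico 1 q).filter (d ∣ ·) ↔ (1 ≤ h ∧ h < q) ∧ d ∣ h := by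
    rw [Finset.mem_filter, Finset.mem_Ico]
  have hmaps : ∀ h ∈ (Finset.Ico 1 q).filter (d ∣ ·), q - h ∈ (Finset.Ico 1 q).filter (d ∣ ·) :=
    fun h hh => (hmem _).mpr ⟨by grind, Nat.dvd_sub hd ((hmem h).mp hh).2⟩
  have hinvol : ∀ h ∈ (Finset.Ico 1 q).filter (d ∣ ·), q - (q - h) = h := fun h hh =>
    Nat.sub_sub_self ((hmem h).mp hh).1.2.le
  have hreflect : ∑ h ∈ Finset.Ico 1 q with d ∣ h, ((q : ℝ) - h)⁻¹ =
      ∑ h ∈ Finset.Ico 1 q with d ∣ h, (h : ℝ)⁻¹ :=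
    Finset.sum_nbij' (q - ·) (q - ·) hmaps hmaps hinvol hinvol fun h hh => by
      rw [Nat.cast_sub ((hmem h).mp hh).1.2.le]
  simp only [weight]
  rw [Finset.sum_add_distrib, hreflect, ← two_mul, mul_div_assoc]
  exact mul_le_mul_of_nonneg_left (sum_inv_dvd_le hd hq) two_pos.le

theorem sum_weight_mul_gcd_le {q : ℕ} (hq : q ≠ 0) :
    ∑ h ∈ Finset.Ico 1 q, weight q h * Nat.gcd h q ≤
      2 * (1 + Real.log q) * q.divisors.card := by
  calc ∑ h ∈ Finset.Ico 1 q, weight q h * Nat.gcd h q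
      ≤ ∑ h ∈ Finset.Ico 1 q, ∑ d ∈ q.divisors, if d ∣ h then weight q h * d else 0 := by
        refine Finset.sum_le_sum fun h hh => ?_
        have hw := weight_nonneg (Finset.mem_Ico.mp hh).2.le
        rw [← Finset.sum_filter]
        exact Finset.single_le_sum (f := fun d : ℕ => weight q h * (d : ℝ))
          (fun d _ => by positivity) (Finset.mem_filter.mpr
            ⟨Nat.mem_divisors.mpr ⟨Nat.gcd_dvd_right h q, hq⟩, Nat.gcd_dvd_left h q⟩)
    _ = ∑ d ∈ q.divisors, (∑ h ∈ Finset.Ico 1 q with d ∣ h, weight q h) * d := by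
        rw [Finset.sum_comm]
        refine Finset.sum_congr rfl fun d _ => ?_
        rw [← Finset.sum_filter, Finset.sum_mul]
    _ ≤ ∑ _d ∈ q.divisors, 2 * (1 + Real.log q) := by
        refine Finset.sum_le_sum fun d hd => ?_
        rw [← le_div_iff₀ (Nat.cast_pos.mpr (Nat.pos_of_mem_divisors hd))]
        exact sum_weight_dvd_le (Nat.dvd_of_mem_divisors hd) hq
    _ = 2 * (1 + Real.log q) * q.divisors.card := by
        rw [Finset.sum_const, nsmul_eq_mul, mul_comm]

theorem summable_sqrt_div_sq : Summable fun d : ℕ => √(d : ℝ) / (d : ℝ) ^ 2 := by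
  refine ((Real.summable_one_div_nat_rpow (p := 3 / 2)).mpr (by norm_num)).congr fun d => ?_
  rcases d.eq_zero_or_pos with rfl | hd
  · norm_num
  · have hd0 : (0 : ℝ) < d := Nat.cast_pos.mpr hd
    rw [Real.sqrt_eq_rpow, ← Real.rpow_natCast, ← Real.rpow_sub hd0, one_div,
      ← Real.rpow_neg hd0.le]
    norm_num

theorem weight_mul_weight_mul_sqrt_gcd_le {q h k : ℕ} (hq : q ≠ 0) (hh : h ≤ q) (hk : k ≤ q) :
    weight q h * weight q k * √(Nat.gcd (Nat.gcd h k) q) ≤ ∑ d ∈ q.divisors,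
      √d * ((if d ∣ h then weight q h else 0) * (if d ∣ k then weight q k else 0)) := by
  have hnonneg (d i : ℕ) (hi : i ≤ q) : 0 ≤ if d ∣ i then weight q i else 0 :=
    ite_nonneg (weight_nonneg hi) le_rfl
  refine le_of_eq_of_le ?_ (Finset.single_le_sum (f := fun d : ℕ =>
    √d * ((if d ∣ h then weight q h else 0) * (if d ∣ k then weight q k else 0)))
    (fun d _ => mul_nonneg (Real.sqrt_nonneg _) (mul_nonneg (hnonneg d h hh) (hnonneg d k hk)))
    (Nat.mem_divisors.mpr ⟨Nat.gcd_dvd_right (Nat.gcd h k) q, hq⟩))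
  rw [if_pos ((Nat.gcd_dvd_left _ _).trans (Nat.gcd_dvd_left _ _)),
    if_pos ((Nat.gcd_dvd_left _ _).trans (Nat.gcd_dvd_right _ _)), mul_comm]

theorem sum_weight_mul_weight_mul_sqrt_gcd_le {q : ℕ} (hq : q ≠ 0) :
    ∑ h ∈ Finset.Ico 1 q, ∑ k ∈ Finset.Ico 1 q,
      weight q h * weight q k * √(Nat.gcd (Nat.gcd h k) q) ≤
        4 * (1 + Real.log q) ^ 2 * ∑' d : ℕ, √(d : ℝ) / (d : ℝ) ^ 2 := by
  calc ∑ h ∈ Finset.Ico 1 q, ∑ k ∈ Finset.Ico 1 q,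
        weight q h * weight q k * √(Nat.gcd (Nat.gcd h k) q)
      ≤ ∑ h ∈ Finset.Ico 1 q, ∑ k ∈ Finset.Ico 1 q, ∑ d ∈ q.divisors,
          √d * ((if d ∣ h then weight q h else 0) * (if d ∣ k then weight q k else 0)) :=
        Finset.sum_le_sum fun h hh => Finset.sum_le_sum fun k hk =>
          weight_mul_weight_mul_sqrt_gcd_le hq (Finset.mem_Ico.mp hh).2.le
            (Finset.mem_Ico.mp hk).2.le
    _ = ∑ d ∈ q.divisors, √d * (∑ h ∈ Finset.Ico 1 q with d ∣ h, weight q h) ^ 2 := by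
        simp_rw [Finset.sum_comm (s := Finset.Ico 1 q) (t := q.divisors)]
        refine Finset.sum_congr rfl fun d _ => ?_
        rw [sq, Finset.sum_filter, Finset.sum_mul_sum, Finset.mul_sum]
        exact Finset.sum_congr rfl fun h _ => (Finset.mul_sum _ _ _).symm
    _ ≤ ∑ d ∈ q.divisors, √d * (2 * (1 + Real.log q) / d) ^ 2 := by
        gcongr with d hd
        · exact Finset.sum_nonneg fun h hh =>
            weight_nonneg (Finset.mem_Ico.mp (Finset.mem_filter.mp hh).1).2.le
        · exact sum_weight_dvd_le (Nat.dvd_of_mem_divisors hd) hq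
    _ = 4 * (1 + Real.log q) ^ 2 * ∑ d ∈ q.divisors, √(d : ℝ) / (d : ℝ) ^ 2 := by
        rw [Finset.mul_sum]
        exact Finset.sum_congr rfl fun d _ => by ring
    _ ≤ 4 * (1 + Real.log q) ^ 2 * ∑' d : ℕ, √(d : ℝ) / (d : ℝ) ^ 2 := by
        gcongr
        exact summable_sqrt_div_sq.sum_le_tsum _ fun d _ => by positivity

end Weights

section ExponentialSum

theorem two_mul_mul_one_sub_le_sin {t : ℝ} (h0 : 0 ≤ t) (h1 : t ≤ 1) :
    2 * t * (1 - t) ≤ Real.sin (Real.pi * t) := by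
  have hhalf (s : ℝ) (hs0 : 0 ≤ s) (hs1 : s ≤ 1 / 2) :
      2 * s * (1 - s) ≤ Real.sin (Real.pi * s) := by
    have h := Real.mul_le_sin (x := Real.pi * s) (by positivity) (by nlinarith [Real.pi_pos])
    rw [← mul_assoc, div_mul_cancel₀ _ Real.pi_ne_zero] at h
    nlinarith
  rcases le_total t (1 / 2) with ht | ht
  · exact hhalf t h0 ht
  · have h := hhalf (1 - t) (by linarith) (by linarith)
    rw [show Real.pi * (1 - t) = Real.pi - Real.pi * t by ring, Real.sin_pi_sub] at h
    linarith

theorem norm_geom_sum_mul_le {ζ : ℂ} (hζ : ‖ζ‖ = 1) (N : ℕ) :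
    ‖∑ j ∈ Finset.range N, ζ ^ j‖ * ‖ζ - 1‖ ≤ 2 := by
  rw [← norm_mul, geom_sum_mul]
  refine (norm_sub_le _ _).trans ?_
  rw [norm_pow, hζ, one_pow, norm_one, one_add_one_eq_two]

theorem norm_stdAddChar_neg_sub_one (q : ℕ) [NeZero q] (h : ℕ) :
    ‖ZMod.stdAddChar (N := q) (-(h : ZMod q)) - 1‖ = 2 * |Real.sin (Real.pi * (h / q))| := by
  have hexp := ZMod.stdAddChar_coe (N := q) (-(h : ℤ))
  push_cast at hexp
  rw [hexp, show 2 * (Real.pi : ℂ) * Complex.I * -(h : ℂ) / q =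
    Complex.I * ((-(2 * Real.pi * h / q) : ℝ) : ℂ) by push_cast; ring,
    Complex.norm_exp_I_mul_ofReal_sub_one, Real.norm_eq_abs,
    show -(2 * Real.pi * (h : ℝ) / q) / 2 = -(Real.pi * (h / q)) by ring, Real.sin_neg, mul_neg,
    abs_neg, abs_mul, abs_two]

variable {q : ℕ} [NeZero q]

/-- The Fourier transform at frequency `h` of a finite set of integers reduced modulo `q`. -/
noncomputable def fourierSum (s : Finset ℤ) (h : ZMod q) : ℂ :=
  ∑ u ∈ s, ZMod.stdAddChar (-h * (u : ZMod q))

theorem fourierSum_zero (s : Finset ℤ) : fourierSum s (0 : ZMod q) = s.card := by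
  simp only [fourierSum, neg_zero, zero_mul, AddChar.map_zero_eq_one, Finset.sum_const,
    nsmul_eq_mul, mul_one]

theorem fourierSum_Ioc (a b : ℤ) (h : ZMod q) :
    fourierSum (Finset.Ioc a b) h = ZMod.stdAddChar (-h * ((a + 1 : ℤ) : ZMod q)) *
      ∑ j ∈ Finset.range (b - a).toNat, ZMod.stdAddChar (-h) ^ j := by
  rw [fourierSum, show Finset.Ioc a b = (Finset.range (b - a).toNat).map
    (Nat.castEmbedding.trans (addLeftEmbedding (a + 1))) from rfl, Finset.sum_map, Finset.mul_sum]
  refine Finset.sum_congr rfl fun j _ => ?_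
  rw [← AddChar.map_nsmul_eq_pow, ← AddChar.map_add_eq_mul]
  congr 1
  simp only [Function.Embedding.trans_apply, Nat.castEmbedding_apply, addLeftEmbedding_apply,
    nsmul_eq_mul]
  push_cast
  ring

theorem norm_fourierSum_Ioc_le (a b : ℤ) {h : ℕ} (hh : h ∈ Finset.Ico 1 q) :
    ‖fourierSum (Finset.Ioc a b) (h : ZMod q)‖ ≤ q / 2 * weight q h := by
  obtain ⟨h1, hq⟩ := Finset.mem_Ico.mp hh
  have hq0 : (0 : ℝ) < q := Nat.cast_pos.mpr (NeZero.pos q)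
  have : (0 : ℝ) < h := Nat.cast_pos.mpr h1
  have hsub : (0 : ℝ) < q - h := sub_pos.mpr (Nat.cast_lt.mpr hq)
  have hsin := two_mul_mul_one_sub_le_sin (t := h / q) (by positivity)
    ((div_le_one hq0).mpr (Nat.cast_le.mpr hq.le))
  have hgeom := norm_geom_sum_mul_le (AddChar.norm_apply ZMod.stdAddChar (-(h : ZMod q)))
    (b - a).toNat
  rw [norm_stdAddChar_neg_sub_one] at hgeom
  have hweight : q / 2 * weight q h = 2 / (2 * (2 * (h / q) * (1 - h / q))) := by
    rw [weight, one_sub_div hq0.ne']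
    field_simp
    ring
  rw [fourierSum_Ioc, norm_mul, AddChar.norm_apply, one_mul, hweight,
    le_div_iff₀ (by rw [one_sub_div hq0.ne']; positivity)]
  refine le_trans ?_ hgeom
  gcongr
  exact hsin.trans (le_abs_self _)

theorem mul_card_filter_intCast_eq (s : Finset ℤ) (x : ZMod q) :
    (q : ℂ) * (s.filter fun u : ℤ => (u : ZMod q) = x).card =
      ∑ h : ZMod q, fourierSum s h * ZMod.stdAddChar (h * x) := by
  simp_rw [fourierSum, Finset.sum_mul]
  rw [Finset.sum_comm, Finset.card_filter, Nat.cast_sum, Finset.mul_sum]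
  refine Finset.sum_congr rfl fun u _ => ?_
  calc (q : ℂ) * ((if (u : ZMod q) = x then 1 else 0 : ℕ) : ℂ)
      = ∑ h : ZMod q, ZMod.stdAddChar (h * (x - (u : ZMod q))) := by
        rw [AddChar.sum_mulShift _ (ZMod.isPrimitive_stdAddChar q), ZMod.card, Nat.cast_ite,
          Nat.cast_one, Nat.cast_zero, mul_ite, mul_one, mul_zero, Nat.cast_ite, Nat.cast_zero]
        exact if_congr (eq_comm.trans sub_eq_zero.symm) rfl rfl
    _ = ∑ h : ZMod q, ZMod.stdAddChar (-h * (u : ZMod q)) * ZMod.stdAddChar (h * x) := by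
        refine Finset.sum_congr rfl fun h _ => ?_
        rw [← AddChar.map_add_eq_mul]
        congr 1
        ring

theorem ite_mul_eq_one {M : Type*} [CommMonoid M] [DecidableEq M] [Fintype Mˣ] (r s : M) :
    (if r * s = 1 then 1 else 0 : ℕ) = ∑ x : Mˣ,
      (if r = x then 1 else 0) * (if s = (x⁻¹ : Mˣ) then 1 else 0) := by
  simp_rw [ite_zero_mul_ite_zero, mul_one]
  by_cases h : r * s = 1
  · rw [if_pos h, Finset.sum_eq_single (Units.mkOfMulEqOne r s h)]
    · exact (if_pos ⟨rfl, rfl⟩).symm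
    · exact fun x _ hx => if_neg fun hr => hx (Units.ext hr.1.symm)
    · exact fun hmem => absurd (Finset.mem_univ _) hmem
  · rw [if_neg h, Finset.sum_eq_zero]
    rintro x -
    exact if_neg fun hr => h (by rw [hr.1, hr.2, Units.mul_inv])

theorem card_filter_mul_eq_one_eq_sum (s t : Finset ℤ) :
    ((s ×ˢ t).filter fun p : ℤ × ℤ => (p.1 : ZMod q) * (p.2 : ZMod q) = 1).card =
      ∑ x : (ZMod q)ˣ, (s.filter fun u : ℤ => (u : ZMod q) = x).card *
        (t.filter fun v : ℤ => (v : ZMod q) = (x⁻¹ : (ZMod q)ˣ)).card := by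
  rw [Finset.card_filter, Finset.sum_product]
  simp_rw [ite_mul_eq_one, Finset.card_filter, Finset.sum_mul_sum]
  rw [Finset.sum_comm (s := Finset.univ)]
  exact Finset.sum_congr rfl fun u _ => Finset.sum_comm

theorem sq_mul_card_filter_mul_eq_one (s t : Finset ℤ) :
    (q : ℂ) ^ 2 *
        ((s ×ˢ t).filter fun p : ℤ × ℤ => (p.1 : ZMod q) * (p.2 : ZMod q) = 1).card =
      ∑ h : ZMod q, ∑ k : ZMod q,
        fourierSum s h * fourierSum t k * kloosterman ZMod.stdAddChar h k := by
  rw [card_filter_mul_eq_one_eq_sum, Nat.cast_sum, Finset.mul_sum]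
  simp_rw [kloosterman, Finset.mul_sum]
  simp_rw [Finset.sum_comm (s := (Finset.univ : Finset (ZMod q)))
    (t := (Finset.univ : Finset (ZMod q)ˣ))]
  refine Finset.sum_congr rfl fun x _ => ?_
  rw [Nat.cast_mul, sq, mul_mul_mul_comm, mul_card_filter_intCast_eq,
    mul_card_filter_intCast_eq, Finset.sum_mul_sum]
  refine Finset.sum_congr rfl fun h _ => Finset.sum_congr rfl fun k _ => ?_
  rw [AddChar.map_add_eq_mul, mul_mul_mul_comm]

end ExponentialSum

section Completion

theorem sum_zmod_eq_zero_add_sum_Ico {M : Type*} [AddCommMonoid M] {q : ℕ} [NeZero q]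
    (f : ZMod q → M) : ∑ h, f h = f 0 + ∑ h ∈ Finset.Ico 1 q, f (h : ZMod q) := by
  have hrange : ∑ h ∈ Finset.range q, f (h : ZMod q) = ∑ h, f h :=
    Finset.sum_nbij' (fun h => (h : ZMod q)) ZMod.val (fun _ _ => Finset.mem_univ _)
      (fun h _ => Finset.mem_range.mpr (ZMod.val_lt h))
      (fun h hh => ZMod.val_cast_of_lt (Finset.mem_range.mp hh))
      (fun h _ => ZMod.natCast_zmod_val h) (fun _ _ => rfl)
  rw [← hrange, Finset.range_eq_Ico, Finset.sum_eq_sum_Ico_succ_bot (NeZero.pos q), Nat.cast_zero]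

variable {q : ℕ} [NeZero q]

theorem kloosterman_zero_zero (ψ : AddChar (ZMod q) ℂ) : kloosterman ψ 0 0 = q.totient := by
  simp only [kloosterman, zero_mul, add_zero, AddChar.map_zero_eq_one, Finset.sum_const,
    Finset.card_univ, ZMod.card_units_eq_totient, nsmul_eq_mul, mul_one]

theorem sq_mul_card_filter_sub_eq (s t : Finset ℤ) :
    (q : ℂ) ^ 2 *
        ((s ×ˢ t).filter fun p : ℤ × ℤ => (p.1 : ZMod q) * (p.2 : ZMod q) = 1).card -
        s.card * t.card * q.totient =
      s.card * ∑ k ∈ Finset.Ico 1 q,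
          fourierSum t (k : ZMod q) * kloosterman ZMod.stdAddChar (k : ZMod q) 0 +
        t.card * ∑ h ∈ Finset.Ico 1 q,
          fourierSum s (h : ZMod q) * kloosterman ZMod.stdAddChar (h : ZMod q) 0 +
        ∑ h ∈ Finset.Ico 1 q, ∑ k ∈ Finset.Ico 1 q,
          fourierSum s (h : ZMod q) * fourierSum t (k : ZMod q) *
            kloosterman ZMod.stdAddChar (h : ZMod q) k := by
  rw [sq_mul_card_filter_mul_eq_one]
  simp_rw [sum_zmod_eq_zero_add_sum_Ico, fourierSum_zero,
    kloosterman_comm ZMod.stdAddChar (0 : ZMod q), mul_right_comm _ (t.card : ℂ)]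
  rw [Finset.sum_add_distrib, kloosterman_zero_zero, ← Finset.sum_mul]
  simp_rw [mul_assoc, ← Finset.mul_sum]
  ring

theorem norm_sum_fourierSum_mul_kloosterman_zero_le (a b : ℤ) :
    ‖∑ h ∈ Finset.Ico 1 q, fourierSum (Finset.Ioc a b) (h : ZMod q) *
      kloosterman ZMod.stdAddChar (h : ZMod q) 0‖ ≤
        q * (q.divisors.card * (1 + Real.log q)) := by
  calc ‖∑ h ∈ Finset.Ico 1 q, fourierSum (Finset.Ioc a b) (h : ZMod q) *
        kloosterman ZMod.stdAddChar (h : ZMod q) 0‖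
      ≤ ∑ h ∈ Finset.Ico 1 q, q / 2 * weight q h * Nat.gcd h q := by
        refine norm_sum_le_of_le _ fun h hh => ?_
        have hle := norm_fourierSum_Ioc_le a b hh
        rw [norm_mul]
        exact mul_le_mul hle (norm_kloosterman_zero_le (ZMod.isPrimitive_stdAddChar q) h)
          (norm_nonneg _) ((norm_nonneg _).trans hle)
    _ = q / 2 * ∑ h ∈ Finset.Ico 1 q, weight q h * Nat.gcd h q := by
        simp only [Finset.mul_sum, mul_assoc]
    _ ≤ q / 2 * (2 * (1 + Real.log q) * q.divisors.card) := by
        gcongr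
        exact sum_weight_mul_gcd_le (NeZero.ne q)
    _ = q * (q.divisors.card * (1 + Real.log q)) := by ring

theorem norm_sum_fourierSum_mul_fourierSum_mul_kloosterman_le (a b c d : ℤ) :
    ‖∑ h ∈ Finset.Ico 1 q, ∑ k ∈ Finset.Ico 1 q,
      fourierSum (Finset.Ioc a b) (h : ZMod q) * fourierSum (Finset.Ioc c d) (k : ZMod q) *
        kloosterman ZMod.stdAddChar (h : ZMod q) k‖ ≤
      q ^ 2 * (2 * (q.divisors.card * √q * (1 + Real.log q) ^ 2) *
        ∑' d : ℕ, √(d : ℝ) / (d : ℝ) ^ 2) := by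
  calc ‖∑ h ∈ Finset.Ico 1 q, ∑ k ∈ Finset.Ico 1 q,
        fourierSum (Finset.Ioc a b) (h : ZMod q) * fourierSum (Finset.Ioc c d) (k : ZMod q) *
          kloosterman ZMod.stdAddChar (h : ZMod q) k‖
      ≤ ∑ h ∈ Finset.Ico 1 q, ∑ k ∈ Finset.Ico 1 q,
          (q / 2 * weight q h) * (q / 2 * weight q k) *
            (2 * q.divisors.card * √(Nat.gcd (Nat.gcd h k) q) * √q) := by
        refine norm_sum_le_of_le _ fun h hh => norm_sum_le_of_le _ fun k hk => ?_
        have hleh := norm_fourierSum_Ioc_le a b hh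
        have hlek := norm_fourierSum_Ioc_le c d hk
        have hwh := (norm_nonneg _).trans hleh
        have hwk := (norm_nonneg _).trans hlek
        rw [norm_mul, norm_mul]
        gcongr
        exact norm_kloosterman_le (ZMod.isPrimitive_stdAddChar q) h k
    _ = q ^ 2 / 2 * q.divisors.card * √q * ∑ h ∈ Finset.Ico 1 q, ∑ k ∈ Finset.Ico 1 q,
          weight q h * weight q k * √(Nat.gcd (Nat.gcd h k) q) := by
        simp_rw [Finset.mul_sum]
        exact Finset.sum_congr rfl fun h _ => Finset.sum_congr rfl fun k _ => by ring
    _ ≤ q ^ 2 / 2 * q.divisors.card * √q *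
          (4 * (1 + Real.log q) ^ 2 * ∑' d : ℕ, √(d : ℝ) / (d : ℝ) ^ 2) := by
        gcongr
        exact sum_weight_mul_weight_mul_sqrt_gcd_le (NeZero.ne q)
    _ = _ := by ring

theorem abs_card_filter_mul_eq_one_sub_le {a b c d : ℤ} (hab : (Finset.Ioc a b).card ≤ q)
    (hcd : (Finset.Ioc c d).card ≤ q) :
    |((((Finset.Ioc a b) ×ˢ (Finset.Ioc c d)).filter
          fun p : ℤ × ℤ => (p.1 : ZMod q) * (p.2 : ZMod q) = 1).card : ℝ) -
        (q.totient : ℝ) / q ^ 2 * (Finset.Ioc a b).card * (Finset.Ioc c d).card| ≤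
      2 * (q.divisors.card * (1 + Real.log q)) +
        2 * (q.divisors.card * √q * (1 + Real.log q) ^ 2) *
          ∑' d : ℕ, √(d : ℝ) / (d : ℝ) ^ 2 := by
  have hq0 : (0 : ℝ) < q := Nat.cast_pos.mpr (NeZero.pos q)
  have haxis {s : Finset ℤ} (hs : s.card ≤ q) (a b : ℤ) :
      ‖(s.card : ℂ) * ∑ h ∈ Finset.Ico 1 q, fourierSum (Finset.Ioc a b) (h : ZMod q) *
        kloosterman ZMod.stdAddChar (h : ZMod q) 0‖ ≤
          q * (q * (q.divisors.card * (1 + Real.log q))) := by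
    rw [norm_mul, Complex.norm_natCast]
    exact mul_le_mul (Nat.cast_le.mpr hs) (norm_sum_fourierSum_mul_kloosterman_zero_le a b)
      (norm_nonneg _) hq0.le
  have hsplit := congrArg norm
    (sq_mul_card_filter_sub_eq (q := q) (Finset.Ioc a b) (Finset.Ioc c d))
  have hscale (N A B : ℕ) : (q : ℂ) ^ 2 * N - A * B * q.totient =
      (((q : ℝ) ^ 2 * (N - (q.totient : ℝ) / q ^ 2 * A * B) : ℝ) : ℂ) := by
    have hqc : (q : ℂ) ≠ 0 := Nat.cast_ne_zero.mpr (NeZero.ne q)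
    push_cast
    field_simp
  rw [hscale, Complex.norm_real, Real.norm_eq_abs, abs_mul, abs_of_pos (pow_pos hq0 2)] at hsplit
  refine le_of_mul_le_mul_left ?_ (pow_pos hq0 2)
  rw [hsplit]
  refine norm_add₃_le.trans ((add_le_add_three (haxis hab c d) (haxis hcd a b)
    (norm_sum_fourierSum_mul_fourierSum_mul_kloosterman_le a b c d)).trans_eq ?_)
  ring

end Completion

section Box

theorem card_Ioc_floor_le (Q : ℝ) {P : ℝ} {q : ℕ} (h : P ≤ q) :
    (Finset.Ioc ⌊Q⌋ ⌊Q + P⌋).card ≤ q := by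
  have hfloor : ⌊Q + P⌋ ≤ ⌊Q⌋ + q := by
    rw [← Int.floor_add_natCast]
    exact Int.floor_mono (by linarith)
  rw [Int.card_Ioc]
  lia

theorem abs_card_Ioc_floor_sub_le (Q : ℝ) {P : ℝ} (h : 0 ≤ P) :
    |((Finset.Ioc ⌊Q⌋ ⌊Q + P⌋).card : ℝ) - P| ≤ 1 := by
  have hcard : ((Finset.Ioc ⌊Q⌋ ⌊Q + P⌋).card : ℝ) = ⌊Q + P⌋ - ⌊Q⌋ := by
    exact_mod_cast Int.card_Ioc_of_le _ _ (Int.floor_mono (by linarith))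
  rw [hcard, abs_le]
  constructor <;> linarith [Int.floor_le Q, Int.lt_floor_add_one Q, Int.floor_le (Q + P),
    Int.lt_floor_add_one (Q + P)]

theorem boxCount_eq_card (q : ℕ) (Q1 Q2 P1 P2 : ℝ) :
    boxCount q Q1 Q2 P1 P2 = ((Finset.Ioc ⌊Q1⌋ ⌊Q1 + P1⌋ ×ˢ Finset.Ioc ⌊Q2⌋ ⌊Q2 + P2⌋).filter
      fun p : ℤ × ℤ => (p.1 : ZMod q) * (p.2 : ZMod q) = 1).card := by
  rw [boxCount, ← Set.ncard_coe_finset]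
  congr 1
  ext ⟨u, v⟩
  have hmod : u * v ≡ 1 [ZMOD q] ↔ (u : ZMod q) * (v : ZMod q) = 1 := by
    rw [← ZMod.intCast_eq_intCast_iff, Int.cast_mul, Int.cast_one]
  simp only [Set.mem_ofPred_eq, Finset.coe_filter, Finset.mem_product, Finset.mem_Ioc,
    Int.floor_lt, Int.le_floor, hmod, and_assoc]

theorem abs_totient_div_sq_mul_sub_le {q : ℕ} (hq : q ≠ 0) {M N P R : ℝ} (hP0 : 0 ≤ P)
    (hP : P ≤ q) (hN0 : 0 ≤ N) (hN : N ≤ q) (hM : |M - P| ≤ 1) (hR : |N - R| ≤ 1) :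
    |(q.totient : ℝ) / q ^ 2 * M * N - (q.totient : ℝ) / q ^ 2 * P * R| ≤ 2 := by
  have : (0 : ℝ) < q := Nat.cast_pos.mpr (Nat.pos_of_ne_zero hq)
  have hdiff : |M * N - P * R| ≤ 2 * q := by
    calc |M * N - P * R| = |(M - P) * N + P * (N - R)| := by ring_nf
      _ ≤ |M - P| * N + P * |N - R| := by
          refine (abs_add_le _ _).trans_eq ?_
          rw [abs_mul, abs_mul, abs_of_nonneg hP0, abs_of_nonneg hN0]
      _ ≤ 1 * q + q * 1 := by gcongr
      _ = 2 * q := by ring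
  rw [mul_assoc, mul_assoc, ← mul_sub, abs_mul, abs_of_nonneg (by positivity)]
  calc (q.totient : ℝ) / q ^ 2 * |M * N - P * R| ≤ q / q ^ 2 * (2 * q) := by
        gcongr
        exact Nat.totient_le q
    _ = 2 := by field_simp

theorem abs_boxCount_sub_le {q : ℕ} (hq : q ≠ 0) (Q1 Q2 : ℝ) {P1 P2 : ℝ} (hP1 : 0 ≤ P1)
    (hP1q : P1 ≤ q) (hP2 : 0 ≤ P2) (hP2q : P2 ≤ q) :
    |(boxCount q Q1 Q2 P1 P2 : ℝ) - (q.totient : ℝ) / q ^ 2 * P1 * P2| ≤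
      2 * (q.divisors.card * √q * (1 + Real.log q) ^ 2) *
        (2 + ∑' d : ℕ, √(d : ℝ) / (d : ℝ) ^ 2) := by
  have : NeZero q := ⟨hq⟩
  have hσ : (1 : ℝ) ≤ q.divisors.card :=
    Nat.one_le_cast.mpr (Finset.card_pos.mpr (Nat.nonempty_divisors.mpr hq))
  have hsqrt : 1 ≤ √(q : ℝ) :=
    Real.one_le_sqrt.mpr (Nat.one_le_cast.mpr (Nat.one_le_iff_ne_zero.mpr hq))
  have hlog : 1 ≤ 1 + Real.log q := le_add_of_nonneg_right (Real.log_natCast_nonneg q)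
  have hmain := abs_card_filter_mul_eq_one_sub_le (card_Ioc_floor_le Q1 hP1q)
    (card_Ioc_floor_le Q2 hP2q)
  rw [← boxCount_eq_card] at hmain
  have hround := abs_totient_div_sq_mul_sub_le hq hP1 hP1q (Nat.cast_nonneg _)
    (Nat.cast_le.mpr (card_Ioc_floor_le Q2 hP2q)) (abs_card_Ioc_floor_sub_le Q1 hP1)
    (abs_card_Ioc_floor_sub_le Q2 hP2)
  have haxis : q.divisors.card * (1 + Real.log q) ≤
      q.divisors.card * √q * (1 + Real.log q) ^ 2 := by
    gcongr
    · exact le_mul_of_one_le_right (by positivity) hsqrt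
    · exact le_self_pow₀ hlog two_ne_zero
  have hone : 1 ≤ q.divisors.card * √q * (1 + Real.log q) ^ 2 :=
    one_le_mul_of_one_le_of_one_le (one_le_mul_of_one_le_of_one_le hσ hsqrt) (one_le_pow₀ hlog)
  refine (abs_sub_le _ _ _).trans ((add_le_add hmain hround).trans ?_)
  linarith

theorem one_add_log_le_three_mul_log_add_one {x : ℝ} (hx : 1 ≤ x) :
    1 + Real.log x ≤ 3 * Real.log (x + 1) := by
  have hlog2 : Real.log 2 ≤ Real.log (x + 1) := Real.log_le_log two_pos (by linarith)
  have hlog : Real.log x ≤ Real.log (x + 1) := Real.log_le_log (by linarith) (by linarith)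
  linarith [Real.log_two_gt_d9]

end Box

end Kloosterman

theorem box_count_asymptotic :
    ∃ C : ℝ, 0 < C ∧ ∀ q : ℕ, 1 ≤ q → ∀ Q1 Q2 P1 P2 : ℝ,
      0 ≤ P1 → P1 ≤ q → 0 ≤ P2 → P2 ≤ q →
      |(boxCount q Q1 Q2 P1 P2 : ℝ) - (q.totient : ℝ) / q ^ 2 * P1 * P2| ≤
        C * q.divisors.card * Real.log (q + 1) ^ 2 * Real.sqrt q := by
  have : 0 ≤ ∑' d : ℕ, √(d : ℝ) / (d : ℝ) ^ 2 := tsum_nonneg fun d => by positivity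
  refine ⟨18 * (2 + ∑' d : ℕ, √(d : ℝ) / (d : ℝ) ^ 2), by positivity,
    fun q hq Q1 Q2 P1 P2 hP1 hP1q hP2 hP2q => ?_⟩
  have : 0 ≤ Real.log q := Real.log_natCast_nonneg q
  calc |(boxCount q Q1 Q2 P1 P2 : ℝ) - (q.totient : ℝ) / q ^ 2 * P1 * P2|
      ≤ 2 * (q.divisors.card * √q * (1 + Real.log q) ^ 2) *
          (2 + ∑' d : ℕ, √(d : ℝ) / (d : ℝ) ^ 2) :=
        Kloosterman.abs_boxCount_sub_le (Nat.one_le_iff_ne_zero.mp hq) Q1 Q2 hP1 hP1q hP2 hP2q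
    _ ≤ 2 * (q.divisors.card * √q * (3 * Real.log (q + 1)) ^ 2) *
          (2 + ∑' d : ℕ, √(d : ℝ) / (d : ℝ) ^ 2) := by
        gcongr
        exact Kloosterman.one_add_log_le_three_mul_log_add_one (Nat.one_le_cast.mpr hq)
    _ = 18 * (2 + ∑' d : ℕ, √(d : ℝ) / (d : ℝ) ^ 2) * q.divisors.card *
          Real.log (q + 1) ^ 2 * √q := by ring
end

section
/- Fix real parameters 0 < x1 ≤ 1 and 0 < x2, y1, y2 ≤ 1 with x2 ≤ y1·y2, and let N(R) = 2 Σ_{Q' ≥ R/y2} Σ_{1 ≤ Q ≤ min(x2 Q', y1 R), gcd(Q,Q')=1} x1/(Q'(Q' + x1 Q)). Then as R → ∞, N(R) = (2/ζ(2)) ( log(1 + x1 x2) log(y1 y2 / x2) - Li2(-x1 x2) ) + O(x1 log R / R). -/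
open Real

/-- The dilogarithm `Li₂(z) = ∑_{k ≥ 1} z^k / k²`. -/
noncomputable def Li2 (z : ℝ) : ℝ := ∑' k : ℕ, z ^ (k + 1) / ((k : ℝ) + 1) ^ 2

/-- `N(R) = 2 ∑_{Q' ≥ R/y₂} ∑_{1 ≤ Q ≤ min(x₂Q', y₁R), (Q,Q')=1} x₁/(Q'(Q'+x₁Q))`. -/
noncomputable def NN (x1 x2 y1 y2 R : ℝ) : ℝ :=
  2 * ∑' Q' : ℕ, if R / y2 ≤ (Q' : ℝ) then
    ∑ Q ∈ Finset.Icc 1 ⌊min (x2 * Q') (y1 * R)⌋₊,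
      if Nat.gcd Q Q' = 1 then x1 / ((Q' : ℝ) * ((Q' : ℝ) + x1 * Q)) else 0
  else 0

/-!
Möbius inversion over `d ∣ gcd(Q, Q')`, with `Q, Q'` rescaled by `d`, writes `N(R)` as
`2 ∑_{d ≤ y₁R} μ(d) d⁻² S(R / d)`, where `S` is the sum over all lattice points of the region.

Comparing sums of decreasing functions with integrals, the `Q`-sum in the row `Q' = t` is
`log (1 + min (x₁x₂) (x₁y₁R / t)) / t` up to `x₁ / t²`, and the sum over rows `t ≥ R / y₂` is the
corresponding integral up to `O(x₁ / R)`. Up to `t = y₁R / x₂` the minimum is constant and the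
integral gives `log (1 + x₁x₂) log (y₁y₂ / x₂)`; beyond, `Li₂(-x₁y₁R / t)` is a primitive and the
integral gives `-Li₂(-x₁x₂)`. The integral is thus independent of `R`, so the `d`-th error is
`O(x₁ d / R)`; weighted by `d⁻²` and summed over `d ≤ y₁R`, this is the source of `log R`.
-/

open Filter MeasureTheory Set Topology

lemma summable_ite {ι : Type*} {f : ι → ℝ} (hf : Summable f) (p : ι → Prop) [DecidablePred p] :
    Summable fun i => if p i then f i else 0 :=
  .of_norm_bounded hf.norm fun i => by split_ifs <;> simp

section SumIntegral

variable {f : ℝ → ℝ} {a : ℝ}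

lemma tsum_ite_le_natCast_eq_tsum_add_ceil {M : Type*} [AddCommMonoid M] [TopologicalSpace M]
    (f : ℕ → M) (a : ℝ) :
    ∑' n : ℕ, (if a ≤ n then f n else 0) = ∑' n : ℕ, f (n + ⌈a⌉₊) := by
  rw [← (add_left_injective ⌈a⌉₊).tsum_eq]
  · exact tsum_congr fun n => if_pos (Nat.ceil_le.1 (Nat.le_add_left _ _))
  · intro n hn
    have han : a ≤ n := by
      by_contra h
      exact hn (if_neg h)
    exact ⟨n - ⌈a⌉₊, Nat.sub_add_cancel (Nat.ceil_le.2 han)⟩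

lemma summable_ite_le_natCast_of_antitoneOn (hf : AntitoneOn f (Ici a))
    (hint : IntegrableOn f (Ioi a)) (hnonneg : ∀ t ∈ Ici a, 0 ≤ f t) :
    Summable fun n : ℕ => if a ≤ n then f n else 0 := by
  have hak : a ≤ ⌈a⌉₊ := Nat.le_ceil a
  have hsum : Summable fun n : ℕ => f n :=
    (hf.mono (Ici_subset_Ici.2 hak)).summable_of_integrableOn_Ioi
      (hint.mono_set (Ioi_subset_Ioi hak)) fun t ht => hnonneg t (hak.trans (le_of_lt ht))
  exact summable_ite hsum _

lemma abs_tsum_ite_le_natCast_sub_integral_le (ha : 0 ≤ a) (hf : AntitoneOn f (Ici a))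
    (hint : IntegrableOn f (Ioi a)) (hnonneg : ∀ t ∈ Ici a, 0 ≤ f t) :
    |∑' n : ℕ, (if a ≤ n then f n else 0) - ∫ t in Ioi a, f t| ≤ f a := by
  set k := ⌈a⌉₊
  have hak : a ≤ k := Nat.le_ceil a
  have hka : (k : ℝ) - a ≤ 1 := by linarith [Nat.ceil_lt_add_one ha]
  have hfk : AntitoneOn f (Ici (k : ℝ)) := hf.mono (Ici_subset_Ici.2 hak)
  have hintk : IntegrableOn f (Ioi (k : ℝ)) := hint.mono_set (Ioi_subset_Ioi hak)
  have hnonnegk : ∀ t ∈ Ioi (k : ℝ), 0 ≤ f t := fun t ht => hnonneg t (hak.trans (le_of_lt ht))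
  have hsum : Summable fun n : ℕ => f n := hfk.summable_of_integrableOn_Ioi hintk hnonnegk
  have hfka : f k ≤ f a := hf self_mem_Ici hak hak
  have hlower : ∫ t in Ioi (k : ℝ), f t ≤ ∑' n : ℕ, f (n + k : ℕ) :=
    hfk.integral_le_tsum_comp_add k hsum hnonnegk
  have hupper : ∑' n : ℕ, f (n + k : ℕ) ≤ f k + ∫ t in Ioi (k : ℝ), f t := by
    have hshift : ∑' n : ℕ, f (n + k : ℕ) = f k + ∑' n : ℕ, f (n + 1 + k : ℕ) := by
      simpa using ((summable_nat_add_iff k).2 hsum).tsum_eq_zero_add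
    have := hfk.tsum_comp_add_le_integral k hintk hnonnegk
    simp only [add_right_comm _ k 1] at this
    linarith
  have hintIoc : IntegrableOn f (Ioc a k) := hint.mono_set Ioc_subset_Ioi_self
  have hsplit : ∫ t in Ioi a, f t = (∫ t in Ioc a (k : ℝ), f t) + ∫ t in Ioi (k : ℝ), f t := by
    rw [← Ioc_union_Ioi_eq_Ioi hak, setIntegral_union Ioc_disjoint_Ioi_same measurableSet_Ioi
      hintIoc hintk]
  have hIoc_nonneg : 0 ≤ ∫ t in Ioc a (k : ℝ), f t :=
    setIntegral_nonneg measurableSet_Ioc fun t ht => hnonneg t ht.1.le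
  have hIoc_le : ∫ t in Ioc a (k : ℝ), f t ≤ f a := calc
    ∫ t in Ioc a (k : ℝ), f t ≤ ∫ _ in Ioc a (k : ℝ), f a :=
      setIntegral_mono_on hintIoc (integrableOn_const (by simp)) measurableSet_Ioc
        fun t ht => hf self_mem_Ici ht.1.le ht.1.le
    _ = (k - a) * f a := by simp [hak]
    _ ≤ f a := mul_le_of_le_one_left (hnonneg a self_mem_Ici) hka
  rw [tsum_ite_le_natCast_eq_tsum_add_ceil (fun n : ℕ => f n), hsplit, abs_le]
  constructor <;> linarith

lemma abs_sum_Icc_floor_sub_integral_le {X : ℝ} (hX : 0 ≤ X) (hf : AntitoneOn f (Ici 0))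
    (hnonneg : ∀ t ∈ Ici 0, 0 ≤ f t) :
    |∑ m ∈ Finset.Icc 1 ⌊X⌋₊, f m - ∫ t in 0..X, f t| ≤ f 0 := by
  set N := ⌊X⌋₊
  have hNX : (N : ℝ) ≤ X := Nat.floor_le hX
  have hXN : X ≤ (N + 1 : ℕ) := by exact_mod_cast (Nat.lt_floor_add_one X).le
  have hint : ∀ {u v : ℝ}, 0 ≤ u → 0 ≤ v → IntervalIntegrable f volume u v := fun hu hv =>
    (hf.mono fun t ht => (le_inf hu hv).trans ht.1).intervalIntegrable
  have hIcc : ∑ m ∈ Finset.Icc 1 N, f m = ∑ i ∈ Finset.range N, f (i + 1 : ℕ) := by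
    rw [Finset.range_eq_Ico, Finset.sum_Ico_add' (fun i : ℕ => f i) 0 N 1]
    rfl
  have hupper : ∑ i ∈ Finset.range N, f (i + 1 : ℕ) ≤ ∫ t in 0..X, f t := by
    have hle := (hf.mono (s₂ := Icc (0 : ℝ) (0 + (N : ℝ))) Icc_subset_Ici_self).sum_le_integral
    have hsub := intervalIntegral.integral_mono_interval le_rfl (Nat.cast_nonneg N) hNX
      (ae_restrict_of_forall_mem measurableSet_Ioc fun t ht => hnonneg t ht.1.le)
      (hint le_rfl hX)
    simp only [zero_add] at hle
    exact hle.trans hsub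
  have hlower : ∫ t in 0..X, f t ≤ f 0 + ∑ i ∈ Finset.range N, f (i + 1 : ℕ) := by
    have hle := (hf.mono (s₂ := Icc (0 : ℝ) (0 + (N + 1 : ℕ))) Icc_subset_Ici_self).integral_le_sum
    have hsub := intervalIntegral.integral_mono_interval le_rfl hX hXN
      (ae_restrict_of_forall_mem measurableSet_Ioc fun t ht => hnonneg t ht.1.le)
      (hint le_rfl (Nat.cast_nonneg _))
    simp only [zero_add, Finset.sum_range_succ', Nat.cast_zero] at hle
    linarith
  rw [hIcc, abs_le]
  constructor <;> linarith [hnonneg 0 self_mem_Ici]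

end SumIntegral

section InverseSquares

lemma sum_range_ite_one_div_sq_le {a : ℝ} (ha : 0 < a) (N : ℕ) :
    ∑ n ∈ Finset.range N, (if a ≤ n then 1 / (n : ℝ) ^ 2 else 0) ≤ 2 / a := by
  obtain ⟨k, hk⟩ := Nat.exists_eq_succ_of_ne_zero (Nat.ceil_pos.2 ha).ne'
  have hset : (Finset.range N).filter (fun n : ℕ => a ≤ n) = Finset.Ioo k N := by
    ext n
    rw [Finset.mem_filter, Finset.mem_range, Finset.mem_Ioo, ← Nat.ceil_le, hk, Nat.succ_le_iff,
      and_comm]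
  have hak : a ≤ k + 1 := by
    have := Nat.le_ceil a
    rw [hk] at this
    exact_mod_cast this
  simp only [← Finset.sum_filter, hset, one_div]
  exact (sum_Ioo_inv_sq_le k N).trans (by gcongr)

lemma summable_ite_one_div_sq (a : ℝ) :
    Summable fun n : ℕ => if a ≤ n then 1 / (n : ℝ) ^ 2 else 0 :=
  summable_ite (Real.summable_one_div_nat_pow.2 one_lt_two) _

lemma tsum_ite_one_div_sq_le {a : ℝ} (ha : 0 < a) :
    ∑' n : ℕ, (if a ≤ n then 1 / (n : ℝ) ^ 2 else 0) ≤ 2 / a :=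
  Real.tsum_le_of_sum_range_le (fun n => by positivity) (sum_range_ite_one_div_sq_le ha)

end InverseSquares

section Dilogarithm

lemma Li2_zero : Li2 0 = 0 := by simp [Li2]

lemma norm_Li2_term_le {z : ℝ} (hz : |z| ≤ 1) (k : ℕ) :
    ‖z ^ (k + 1) / ((k : ℝ) + 1) ^ 2‖ ≤ |z| * (1 / ((k + 1 : ℕ) : ℝ) ^ 2) := by
  rw [norm_div, norm_pow, norm_pow, Real.norm_eq_abs, Real.norm_of_nonneg (by positivity),
    mul_one_div, pow_succ']
  push_cast
  gcongr
  exact mul_le_of_le_one_right (abs_nonneg z) (pow_le_one₀ (abs_nonneg z) hz)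

lemma hasSum_one_div_succ_sq :
    HasSum (fun k : ℕ => 1 / ((k + 1 : ℕ) : ℝ) ^ 2) (π ^ 2 / 6) := by
  simpa using (hasSum_nat_add_iff' (f := fun k : ℕ => 1 / (k : ℝ) ^ 2) 1).2 hasSum_zeta_two

lemma abs_Li2_le {z : ℝ} (hz : |z| ≤ 1) : |Li2 z| ≤ |z| * (π ^ 2 / 6) :=
  tsum_of_norm_bounded (hasSum_one_div_succ_sq.mul_left |z|) (norm_Li2_term_le hz)

lemma continuousOn_Li2 : ContinuousOn Li2 (Icc (-1) 1) := by
  refine continuousOn_tsum (fun k => by fun_prop) hasSum_one_div_succ_sq.summable fun k z hz => ?_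
  have hz' : |z| ≤ 1 := abs_le.2 hz
  exact (norm_Li2_term_le hz' k).trans (mul_le_of_le_one_left (by positivity) hz')

lemma tsum_pow_div_succ {z : ℝ} (hz : |z| < 1) (hz0 : z ≠ 0) :
    ∑' k : ℕ, z ^ k / ((k : ℝ) + 1) = -log (1 - z) / z := by
  rw [← ((hasSum_pow_div_log_of_abs_lt_one hz).div_const z).tsum_eq]
  exact tsum_congr fun k => by
    rw [pow_succ]
    field_simp

lemma hasDerivAt_Li2 {z : ℝ} (hz : |z| < 1) (hz0 : z ≠ 0) :
    HasDerivAt Li2 (-log (1 - z) / z) z := by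
  obtain ⟨ρ, hzρ, hρ⟩ := exists_between hz
  have hρ0 : 0 ≤ ρ := (abs_nonneg z).trans hzρ.le
  have hterm : ∀ (k : ℕ) (w : ℝ),
      HasDerivAt (fun w : ℝ => w ^ (k + 1) / ((k : ℝ) + 1) ^ 2) (w ^ k / ((k : ℝ) + 1)) w := by
    intro k w
    refine ((hasDerivAt_pow (k + 1) w).div_const _).congr_deriv ?_
    rw [Nat.add_sub_cancel, Nat.cast_add_one]
    field_simp
  have hbound : ∀ (k : ℕ) (w : ℝ), w ∈ Metric.ball 0 ρ → ‖w ^ k / ((k : ℝ) + 1)‖ ≤ ρ ^ k := by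
    intro k w hw
    rw [Metric.mem_ball, dist_zero_right] at hw
    rw [norm_div, norm_pow, Real.norm_of_nonneg (by positivity : (0 : ℝ) ≤ k + 1)]
    calc ‖w‖ ^ k / ((k : ℝ) + 1) ≤ ‖w‖ ^ k := div_le_self (by positivity) (by simp)
      _ ≤ ρ ^ k := by gcongr
  rw [← tsum_pow_div_succ hz hz0]
  exact hasDerivAt_tsum_of_isPreconnected (summable_geometric_of_lt_one hρ0 hρ) Metric.isOpen_ball
    (convex_ball _ _).isPreconnected (fun k w _ => hterm k w) hbound
    (y₀ := 0) (by simpa using (abs_nonneg z).trans_lt hzρ) (by simp) (by simpa using hzρ)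

variable {a b c : ℝ}

lemma hasDerivAt_Li2_neg_div {t : ℝ} (hc : 0 < c) (ht : c < t) :
    HasDerivAt (fun t => Li2 (-(c / t))) (log (1 + c / t) / t) t := by
  have ht0 : 0 < t := hc.trans ht
  have hpos : 0 < c / t := div_pos hc ht0
  have hlt : |(-(c / t))| < 1 := by rwa [abs_neg, abs_of_pos hpos, div_lt_one ht0]
  have hinner : HasDerivAt (fun t => -(c / t)) (c / t ^ 2) t := by
    refine ((hasDerivAt_inv ht0.ne').const_mul c).fun_neg.congr_deriv ?_
    field_simp
  refine ((hasDerivAt_Li2 hlt (neg_ne_zero.2 hpos.ne')).comp t hinner).congr_deriv ?_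
  rw [sub_neg_eq_add]
  field_simp

lemma continuousOn_Li2_neg_div (hc : 0 < c) :
    ContinuousOn (fun t => Li2 (-(c / t))) (Ici c) := by
  have hinner : ContinuousOn (fun t => -(c / t)) (Ici c) :=
    (continuousOn_const.div continuousOn_id fun t ht => (hc.trans_le ht).ne').neg
  refine continuousOn_Li2.comp hinner fun t ht => ?_
  have ht0 : 0 < t := hc.trans_le ht
  have hle : c / t ≤ 1 := (div_le_one ht0).2 ht
  have hpos : 0 < c / t := div_pos hc ht0
  constructor <;> linarith

lemma tendsto_Li2_neg_div_atTop (c : ℝ) :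
    Tendsto (fun t => Li2 (-(c / t))) atTop (𝓝 0) := by
  have hinner : Tendsto (fun t : ℝ => -(c / t)) atTop (𝓝 0) := by
    simpa using (tendsto_const_nhds (x := c)).div_atTop tendsto_id |>.neg
  have hLi2 : Tendsto Li2 (𝓝 0) (𝓝 0) := by
    simpa [ContinuousAt, Li2_zero] using
      continuousOn_Li2.continuousAt (Icc_mem_nhds (neg_one_lt_zero (R := ℝ)) one_pos)
  exact hLi2.comp hinner

lemma log_one_add_div_div_nonneg {t : ℝ} (hc : 0 ≤ c) (ht : 0 ≤ t) : 0 ≤ log (1 + c / t) / t :=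
  div_nonneg (log_nonneg (le_add_of_nonneg_right (by positivity))) ht

lemma integrableOn_log_one_add_div_div (hc : 0 < c) (hca : c ≤ a) :
    IntegrableOn (fun t => log (1 + c / t) / t) (Ioi a) :=
  integrableOn_Ioi_deriv_of_nonneg
    ((continuousOn_Li2_neg_div hc a hca).mono (Ici_subset_Ici.2 hca))
    (fun _ ht => hasDerivAt_Li2_neg_div hc (hca.trans_lt ht))
    (fun _ ht => log_one_add_div_div_nonneg hc.le (hc.le.trans (hca.trans (le_of_lt ht))))
    (tendsto_Li2_neg_div_atTop c)

lemma integral_Ioi_log_one_add_div_div (hc : 0 < c) (hca : c ≤ a) :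
    ∫ t in Ioi a, log (1 + c / t) / t = -Li2 (-(c / a)) := by
  rw [integral_Ioi_of_hasDerivAt_of_tendsto
    ((continuousOn_Li2_neg_div hc a hca).mono (Ici_subset_Ici.2 hca))
    (fun _ ht => hasDerivAt_Li2_neg_div hc (hca.trans_lt ht))
    (integrableOn_log_one_add_div_div hc hca) (tendsto_Li2_neg_div_atTop c), zero_sub]

end Dilogarithm

section RowDensity

/-- The continuous approximation, at height `Q' = t`, of the `Q`-sum in `N(R)` with the coprimality
condition removed; there `b = x₁x₂` and `c = x₁y₁R`, the minimum recording which of the two upper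
bounds on `Q` is active. -/
noncomputable def rowDensity (b c t : ℝ) : ℝ := log (1 + min b (c / t)) / t

variable {a b c : ℝ}

lemma rowDensity_nonneg (hb : 0 ≤ b) (hc : 0 ≤ c) {t : ℝ} (ht : 0 ≤ t) : 0 ≤ rowDensity b c t :=
  div_nonneg (log_nonneg (le_add_of_nonneg_right (by positivity))) ht

lemma rowDensity_le_div (hb : 0 ≤ b) (hc : 0 ≤ c) {t : ℝ} (ht : 0 ≤ t) :
    rowDensity b c t ≤ b / t := by
  have hmin : 0 ≤ min b (c / t) := by positivity
  unfold rowDensity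
  gcongr
  linarith [log_le_sub_one_of_pos (by linarith : 0 < 1 + min b (c / t)), min_le_left b (c / t)]

lemma antitoneOn_rowDensity (hb : 0 ≤ b) (hc : 0 ≤ c) : AntitoneOn (rowDensity b c) (Ioi 0) := by
  intro s hs t ht hst
  have hs0 : 0 < s := hs
  have ht0 : 0 < t := ht
  have hmin : 0 ≤ min b (c / t) := by positivity
  have hlog : log (1 + min b (c / t)) ≤ log (1 + min b (c / s)) := by gcongr
  exact div_le_div₀ ((log_nonneg (by linarith)).trans hlog) hlog hs0 hst

lemma eqOn_rowDensity_Ioc (hb : 0 < b) (ha : 0 < a) :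
    EqOn (rowDensity b c) (fun t => log (1 + b) * t⁻¹) (Ioc a (c / b)) := by
  intro t ht
  have hbt : b ≤ c / t := by
    rw [le_div_iff₀ (ha.trans ht.1), mul_comm, ← le_div_iff₀ hb]
    exact ht.2
  rw [rowDensity, min_eq_left hbt, div_eq_mul_inv]

lemma eqOn_rowDensity_Ioi (hb : 0 < b) (hc : 0 ≤ c) :
    EqOn (rowDensity b c) (fun t => log (1 + c / t) / t) (Ioi (c / b)) := by
  intro t ht
  have htb : c / t ≤ b := div_le_of_le_mul₀ ((div_nonneg hc hb.le).trans (le_of_lt ht)) hb.le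
    (by rw [mul_comm]; exact ((div_lt_iff₀ hb).1 ht).le)
  rw [rowDensity, min_eq_right htb]

lemma intervalIntegrable_inv_of_pos (ha : 0 < a) {T : ℝ} (haT : a ≤ T) :
    IntervalIntegrable (fun t : ℝ => t⁻¹) volume a T :=
  intervalIntegrable_inv_iff.2 (Or.inr (notMem_uIcc_of_lt ha (ha.trans_le haT)))

lemma integrableOn_rowDensity_Ioc (ha : 0 < a) (hb : 0 < b) (hac : a * b ≤ c) :
    IntegrableOn (rowDensity b c) (Ioc a (c / b)) := by
  have haT : a ≤ c / b := (le_div_iff₀ hb).2 hac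
  rw [integrableOn_congr_fun (eqOn_rowDensity_Ioc hb ha) measurableSet_Ioc]
  exact ((intervalIntegrable_iff_integrableOn_Ioc_of_le haT).1
    (intervalIntegrable_inv_of_pos ha haT)).const_mul _

lemma integrableOn_rowDensity_Ioi_div (hb : 0 < b) (hb1 : b ≤ 1) (hc : 0 < c) :
    IntegrableOn (rowDensity b c) (Ioi (c / b)) := by
  rw [integrableOn_congr_fun (eqOn_rowDensity_Ioi hb hc.le) measurableSet_Ioi]
  exact integrableOn_log_one_add_div_div hc (le_div_self hc.le hb hb1)

lemma integrableOn_rowDensity_Ioi (ha : 0 < a) (hb : 0 < b) (hb1 : b ≤ 1) (hac : a * b ≤ c) :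
    IntegrableOn (rowDensity b c) (Ioi a) := by
  have hc : 0 < c := (mul_pos ha hb).trans_le hac
  rw [← Ioc_union_Ioi_eq_Ioi ((le_div_iff₀ hb).2 hac)]
  exact (integrableOn_rowDensity_Ioc ha hb hac).union (integrableOn_rowDensity_Ioi_div hb hb1 hc)

lemma integral_Ioi_rowDensity (ha : 0 < a) (hb : 0 < b) (hb1 : b ≤ 1) (hac : a * b ≤ c) :
    ∫ t in Ioi a, rowDensity b c t = log (1 + b) * log (c / (a * b)) - Li2 (-b) := by
  have hc : 0 < c := (mul_pos ha hb).trans_le hac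
  have haT : a ≤ c / b := (le_div_iff₀ hb).2 hac
  have hIoc : ∫ t in Ioc a (c / b), rowDensity b c t = log (1 + b) * log (c / (a * b)) := by
    rw [setIntegral_congr_fun measurableSet_Ioc (eqOn_rowDensity_Ioc hb ha), integral_const_mul,
      ← intervalIntegral.integral_of_le haT, integral_inv_of_pos ha (ha.trans_le haT), div_div,
      mul_comm b a]
  have hIoi : ∫ t in Ioi (c / b), rowDensity b c t = -Li2 (-b) := by
    rw [setIntegral_congr_fun measurableSet_Ioi (eqOn_rowDensity_Ioi hb hc.le),
      integral_Ioi_log_one_add_div_div hc (le_div_self hc.le hb hb1), div_div_cancel₀ hc.ne']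
  rw [← Ioc_union_Ioi_eq_Ioi haT, setIntegral_union Ioc_disjoint_Ioi_same measurableSet_Ioi
    (integrableOn_rowDensity_Ioc ha hb hac) (integrableOn_rowDensity_Ioi_div hb hb1 hc), hIoc,
    hIoi, ← sub_eq_add_neg]

lemma summable_ite_rowDensity (ha : 0 < a) (hb : 0 < b) (hb1 : b ≤ 1) (hac : a * b ≤ c) :
    Summable fun n : ℕ => if a ≤ n then rowDensity b c n else 0 := by
  have hc : 0 ≤ c := (mul_pos ha hb).le.trans hac
  exact summable_ite_le_natCast_of_antitoneOn
    ((antitoneOn_rowDensity hb.le hc).mono (Ici_subset_Ioi.2 ha))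
    (integrableOn_rowDensity_Ioi ha hb hb1 hac)
    fun _ ht => rowDensity_nonneg hb.le hc (ha.le.trans ht)

lemma abs_tsum_ite_rowDensity_sub_le (ha : 0 < a) (hb : 0 < b) (hb1 : b ≤ 1) (hac : a * b ≤ c) :
    |∑' n : ℕ, (if a ≤ n then rowDensity b c n else 0) -
      (log (1 + b) * log (c / (a * b)) - Li2 (-b))| ≤ b / a := by
  have hc : 0 ≤ c := (mul_pos ha hb).le.trans hac
  rw [← integral_Ioi_rowDensity ha hb hb1 hac]
  exact (abs_tsum_ite_le_natCast_sub_integral_le ha.le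
    ((antitoneOn_rowDensity hb.le hc).mono (Ici_subset_Ioi.2 ha))
    (integrableOn_rowDensity_Ioi ha hb hb1 hac)
    fun _ ht => rowDensity_nonneg hb.le hc (ha.le.trans ht)).trans
    (rowDensity_le_div hb.le hc ha.le)

lemma integral_div_mul_add {x s X : ℝ} (hx : 0 ≤ x) (hs : 0 < s) (hX : 0 ≤ X) :
    ∫ t in 0..X, x / (s * (s + x * t)) = log (1 + x * (X / s)) / s := by
  have hpos : ∀ t ∈ uIcc 0 X, 0 < s + x * t := fun t ht => by
    rw [uIcc_of_le hX] at ht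
    exact add_pos_of_pos_of_nonneg hs (mul_nonneg hx ht.1)
  have hderiv : ∀ t ∈ uIcc 0 X,
      HasDerivAt (fun t => log (s + x * t) / s) (x / (s * (s + x * t))) t := fun t ht => by
    have hlin : HasDerivAt (fun t => s + x * t) x t := by
      simpa using ((hasDerivAt_id t).const_mul x).const_add s
    refine ((hlin.log (hpos t ht).ne').div_const s).congr_deriv ?_
    rw [div_div, mul_comm]
  have hint : IntervalIntegrable (fun t => x / (s * (s + x * t))) volume 0 X :=
    (ContinuousOn.div (by fun_prop) (by fun_prop)
      fun t ht => (mul_pos hs (hpos t ht)).ne').intervalIntegrable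
  rw [intervalIntegral.integral_eq_sub_of_hasDerivAt hderiv hint, mul_zero, add_zero, ← sub_div,
    ← log_div (hpos X right_mem_uIcc).ne' hs.ne', add_div, div_self hs.ne', mul_div_assoc]

lemma abs_sum_div_mul_add_sub_log_le {x s X : ℝ} (hx : 0 ≤ x) (hs : 0 < s) (hX : 0 ≤ X) :
    |∑ m ∈ Finset.Icc 1 ⌊X⌋₊, x / (s * (s + x * m)) - log (1 + x * (X / s)) / s| ≤
      x * (1 / s ^ 2) := by
  have hanti : AntitoneOn (fun t => x / (s * (s + x * t))) (Ici 0) := fun u hu v _ huv => by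
    have : 0 ≤ x * u := mul_nonneg hx hu
    dsimp only
    gcongr
  have hnonneg : ∀ t ∈ Ici 0, 0 ≤ x / (s * (s + x * t)) := fun t ht => by
    have : 0 ≤ x * t := mul_nonneg hx ht
    positivity
  have h0 : x / (s * (s + x * 0)) = x * (1 / s ^ 2) := by ring
  rw [← integral_div_mul_add hx hs hX, ← h0]
  exact abs_sum_Icc_floor_sub_integral_le hX hanti hnonneg

end RowDensity

section Moebius

open ArithmeticFunction

lemma sum_divisors_moebius (n : ℕ) :
    ∑ d ∈ n.divisors, (moebius d : ℝ) = if n = 1 then 1 else 0 := by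
  have h : ∑ d ∈ n.divisors, moebius d = (1 : ArithmeticFunction ℤ) n := by
    rw [← coe_mul_zeta_apply, moebius_mul_coe_zeta]
  rw [one_apply] at h
  exact_mod_cast h

lemma ite_gcd_eq_one_eq_sum_moebius {m n D : ℕ} (hm : m ∈ Finset.Icc 1 D) :
    (if Nat.gcd m n = 1 then (1 : ℝ) else 0) =
      ∑ d ∈ Finset.Icc 1 D, if d ∣ n ∧ d ∣ m then (moebius d : ℝ) else 0 := by
  obtain ⟨hm1, hmD⟩ := Finset.mem_Icc.1 hm
  rw [← sum_divisors_moebius, ← Finset.sum_filter]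
  refine Finset.sum_congr ?_ fun _ _ => rfl
  ext d
  simp only [Nat.mem_divisors, Finset.mem_filter, Finset.mem_Icc, Nat.dvd_gcd_iff]
  constructor
  · rintro ⟨⟨hdm, hdn⟩, -⟩
    exact ⟨⟨Nat.pos_of_dvd_of_pos hdm hm1, (Nat.le_of_dvd hm1 hdm).trans hmD⟩, hdn, hdm⟩
  · rintro ⟨-, hdn, hdm⟩
    exact ⟨⟨hdm, hdn⟩, (Nat.gcd_pos_of_pos_left n hm1).ne'⟩

lemma tsum_ite_dvd_eq_tsum_smul {M : Type*} [AddCommMonoid M] [TopologicalSpace M]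
    (F : ℕ × ℕ → M) {d : ℕ} (hd : d ≠ 0) :
    ∑' p : ℕ × ℕ, (if d ∣ p.1 ∧ d ∣ p.2 then F p else 0) = ∑' p, F (d • p) := by
  have hinj : Function.Injective fun p : ℕ × ℕ => d • p := smul_right_injective _ hd
  rw [← hinj.tsum_eq]
  · exact tsum_congr fun p => if_pos ⟨dvd_mul_right _ _, dvd_mul_right _ _⟩
  · intro p hp
    obtain ⟨⟨m, hm⟩, n, hn⟩ : d ∣ p.1 ∧ d ∣ p.2 := by
      by_contra h
      exact hp (if_neg h)
    exact ⟨(m, n), Prod.ext hm.symm hn.symm⟩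

lemma tsum_ite_gcd_eq_one_eq_sum_moebius {F : ℕ × ℕ → ℝ} {D : ℕ} (hF : Summable F)
    (hD : ∀ p, p.2 ∉ Finset.Icc 1 D → F p = 0) :
    ∑' p : ℕ × ℕ, (if Nat.gcd p.2 p.1 = 1 then F p else 0) =
      ∑ d ∈ Finset.Icc 1 D, (moebius d : ℝ) * ∑' p, F (d • p) := by
  have hexpand : ∀ p : ℕ × ℕ, (if Nat.gcd p.2 p.1 = 1 then F p else 0) =
      ∑ d ∈ Finset.Icc 1 D, (moebius d : ℝ) * if d ∣ p.1 ∧ d ∣ p.2 then F p else 0 := by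
    intro p
    by_cases hp : p.2 ∈ Finset.Icc 1 D
    · rw [← mul_boole, ite_gcd_eq_one_eq_sum_moebius hp, Finset.mul_sum]
      refine Finset.sum_congr rfl fun d _ => ?_
      split_ifs <;> ring
    · simp [hD p hp]
  have hsummable : ∀ d : ℕ, Summable fun p : ℕ × ℕ => if d ∣ p.1 ∧ d ∣ p.2 then F p else 0 :=
    fun _ => summable_ite hF _
  rw [tsum_congr hexpand, Summable.tsum_finsetSum fun d _ => (hsummable d).mul_left _]
  refine Finset.sum_congr rfl fun d hd => ?_
  rw [tsum_mul_left, tsum_ite_dvd_eq_tsum_smul F (Nat.one_le_iff_ne_zero.1 (Finset.mem_Icc.1 hd).1)]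

lemma abs_moebius_div_sq_le (d : ℕ) : |(moebius d : ℝ) / (d : ℝ) ^ 2| ≤ 1 / (d : ℝ) ^ 2 := by
  rw [abs_div, abs_of_nonneg (sq_nonneg (d : ℝ))]
  gcongr
  exact_mod_cast abs_moebius_le_one

lemma summable_moebius_div_sq : Summable fun d : ℕ => (moebius d : ℝ) / (d : ℝ) ^ 2 :=
  .of_norm_bounded (Real.summable_one_div_nat_pow.2 one_lt_two) abs_moebius_div_sq_le

lemma tsum_moebius_div_sq : ∑' d : ℕ, (moebius d : ℝ) / (d : ℝ) ^ 2 = 1 / (π ^ 2 / 6) := by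
  have hs : (1 : ℝ) < (2 : ℂ).re := by norm_num
  have hL : LSeries (fun n => ((moebius n : ℤ) : ℂ)) 2 =
      ((∑' d : ℕ, (moebius d : ℝ) / (d : ℝ) ^ 2 : ℝ) : ℂ) := by
    rw [LSeries, Complex.ofReal_tsum]
    refine tsum_congr fun d => ?_
    rcases eq_or_ne d 0 with rfl | hd
    · simp
    · rw [LSeries.term_of_ne_zero hd]
      push_cast
      norm_cast
  have hmul := LSeries_zeta_mul_Lseries_moebius hs
  rw [LSeries_zeta_eq_riemannZeta hs, riemannZeta_two, hL] at hmul
  exact eq_one_div_of_mul_eq_one_right (by exact_mod_cast hmul)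

lemma abs_sum_moebius_div_sq_sub_le {X : ℝ} (hX : 0 < X) :
    |∑ d ∈ Finset.Icc 1 ⌊X⌋₊, (moebius d : ℝ) / (d : ℝ) ^ 2 - 1 / (π ^ 2 / 6)| ≤ 2 / X := by
  set c : ℕ → ℝ := fun d => (moebius d : ℝ) / (d : ℝ) ^ 2
  have htail : ∀ d : ℕ, ‖(if d ∈ Finset.Icc 1 ⌊X⌋₊ then c d else 0) - c d‖ ≤
      if X ≤ d then 1 / (d : ℝ) ^ 2 else 0 := by
    intro d
    split_ifs with hd hXd hXd
    · simp
    · simp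
    · simpa using abs_moebius_div_sq_le d
    · rcases Nat.eq_zero_or_pos d with rfl | hd0
      · simp [c]
      · exact absurd (Finset.mem_Icc.2 ⟨hd0, Nat.le_floor (not_le.1 hXd).le⟩) hd
  have hsum : HasSum (fun d => if d ∈ Finset.Icc 1 ⌊X⌋₊ then c d else 0)
      (∑ d ∈ Finset.Icc 1 ⌊X⌋₊, c d) := by
    rw [Finset.sum_congr rfl fun d hd => (if_pos hd).symm]
    exact hasSum_sum_of_ne_finset_zero fun d hd => if_neg hd
  rw [← tsum_moebius_div_sq, ← (hsum.sub summable_moebius_div_sq.hasSum).tsum_eq]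
  exact (tsum_of_norm_bounded (summable_ite_one_div_sq X).hasSum htail).trans
    (tsum_ite_one_div_sq_le hX)

lemma sum_inv_Icc_floor_le (X : ℝ) : ∑ d ∈ Finset.Icc 1 ⌊X⌋₊, (d : ℝ)⁻¹ ≤ 1 + log⁺ X := by
  rcases lt_or_ge X 1 with hX | hX
  · rw [Nat.floor_eq_zero.2 hX]
    simpa using add_nonneg zero_le_one posLog_nonneg
  · rw [posLog_eq_log (hX.trans (le_abs_self X))]
    have := harmonic_floor_le_one_add_log X hX
    rw [harmonic_eq_sum_Icc] at this
    push_cast at this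
    exact this

lemma abs_sum_moebius_div_sq_mul_sub_le {S : ℕ → ℝ} {A K X : ℝ} (hK : 0 ≤ K) (hX : 0 < X)
    (hS : ∀ d ∈ Finset.Icc 1 ⌊X⌋₊, |S d - A| ≤ K * d) :
    |∑ d ∈ Finset.Icc 1 ⌊X⌋₊, (moebius d : ℝ) / (d : ℝ) ^ 2 * S d - 1 / (π ^ 2 / 6) * A| ≤
      K * (1 + log⁺ X) + 2 / X * |A| := by
  set c : ℕ → ℝ := fun d => (moebius d : ℝ) / (d : ℝ) ^ 2
  have hsplit : ∑ d ∈ Finset.Icc 1 ⌊X⌋₊, c d * S d - 1 / (π ^ 2 / 6) * A =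
      ∑ d ∈ Finset.Icc 1 ⌊X⌋₊, c d * (S d - A) +
        (∑ d ∈ Finset.Icc 1 ⌊X⌋₊, c d - 1 / (π ^ 2 / 6)) * A := by
    simp only [mul_sub, Finset.sum_sub_distrib, ← Finset.sum_mul]
    ring
  have hterm : ∀ d ∈ Finset.Icc 1 ⌊X⌋₊, |c d * (S d - A)| ≤ K * (d : ℝ)⁻¹ := by
    intro d hd
    have hd0 : (0 : ℝ) < d := by exact_mod_cast (Finset.mem_Icc.1 hd).1
    rw [abs_mul]
    calc |c d| * |S d - A| ≤ 1 / (d : ℝ) ^ 2 * (K * d) := by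
          gcongr
          exacts [abs_moebius_div_sq_le d, hS d hd]
      _ = K * (d : ℝ)⁻¹ := by field_simp
  have hmain : |∑ d ∈ Finset.Icc 1 ⌊X⌋₊, c d * (S d - A)| ≤ K * (1 + log⁺ X) := calc
    _ ≤ ∑ d ∈ Finset.Icc 1 ⌊X⌋₊, K * (d : ℝ)⁻¹ :=
      (Finset.abs_sum_le_sum_abs _ _).trans (Finset.sum_le_sum hterm)
    _ ≤ K * (1 + log⁺ X) := by
      rw [← Finset.mul_sum]
      gcongr
      exact sum_inv_Icc_floor_le X
  rw [hsplit]
  refine (abs_add_le _ _).trans (add_le_add hmain ?_)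
  rw [abs_mul]
  gcongr
  exact abs_sum_moebius_div_sq_sub_le hX

end Moebius

section LatticeSum

/-- The summand of `N(R)` at `p = (Q', Q)` without the coprimality condition, extended by zero off
the region of summation. -/
noncomputable def latticeTerm (x1 x2 y1 y2 R : ℝ) (p : ℕ × ℕ) : ℝ :=
  if R / y2 ≤ p.1 ∧ p.2 ∈ Finset.Icc 1 ⌊min (x2 * p.1) (y1 * R)⌋₊ then
    x1 / ((p.1 : ℝ) * ((p.1 : ℝ) + x1 * p.2)) else 0

/-- The limit of `ζ(2) N(R) / 2` as `R → ∞`. -/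
noncomputable def limitConst (x1 x2 y1 y2 : ℝ) : ℝ :=
  log (1 + x1 * x2) * log (y1 * y2 / x2) - Li2 (-(x1 * x2))

variable {x1 x2 y1 y2 R : ℝ}

lemma latticeTerm_nonneg (hx1 : 0 ≤ x1) (p : ℕ × ℕ) : 0 ≤ latticeTerm x1 x2 y1 y2 R p := by
  rw [latticeTerm]
  split_ifs <;> positivity

lemma latticeTerm_eq_zero {p : ℕ × ℕ} (hp : p.2 ∉ Finset.Icc 1 ⌊y1 * R⌋₊) :
    latticeTerm x1 x2 y1 y2 R p = 0 := by
  refine if_neg fun h => hp (Finset.Icc_subset_Icc_right (Nat.floor_mono (min_le_right _ _)) h.2)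

lemma latticeTerm_le (hx1 : 0 ≤ x1) (p : ℕ × ℕ) :
    latticeTerm x1 x2 y1 y2 R p ≤ x1 * (1 / (p.1 : ℝ) ^ 2) := by
  rw [latticeTerm]
  split_ifs with h
  · rcases Nat.eq_zero_or_pos p.1 with h0 | hpos
    · simp [h0]
    · have : (0 : ℝ) < p.1 := by exact_mod_cast hpos
      rw [mul_one_div, sq]
      gcongr
      exact le_add_of_nonneg_right (by positivity)
  · positivity

lemma summable_latticeTerm (hx1 : 0 ≤ x1) : Summable (latticeTerm x1 x2 y1 y2 R) := by
  have hsq : Summable fun n : ℕ => x1 * (1 / (n : ℝ) ^ 2) :=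
    (Real.summable_one_div_nat_pow.2 one_lt_two).mul_left x1
  have hind : Summable fun m : ℕ => if m ∈ Finset.Icc 1 ⌊y1 * R⌋₊ then (1 : ℝ) else 0 :=
    summable_of_ne_finset_zero (s := Finset.Icc 1 ⌊y1 * R⌋₊) fun m hm => if_neg hm
  refine .of_nonneg_of_le (latticeTerm_nonneg hx1) (fun p => ?_)
    (hsq.mul_of_nonneg hind (fun n => by positivity) fun m => by positivity)
  by_cases hp : p.2 ∈ Finset.Icc 1 ⌊y1 * R⌋₊
  · simpa [hp] using latticeTerm_le hx1 p
  · simp [hp, latticeTerm_eq_zero hp]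

lemma latticeTerm_smul {d : ℕ} (hd : d ≠ 0) (p : ℕ × ℕ) :
    latticeTerm x1 x2 y1 y2 R (d • p) =
      1 / (d : ℝ) ^ 2 * latticeTerm x1 x2 y1 y2 (R / d) p := by
  have hd0 : (0 : ℝ) < d := by exact_mod_cast Nat.pos_of_ne_zero hd
  have hrow : R / y2 ≤ ((d * p.1 : ℕ) : ℝ) ↔ R / d / y2 ≤ p.1 := by
    rw [div_right_comm, div_le_iff₀ hd0, Nat.cast_mul, mul_comm]
  have hmin : min (x2 * (d * p.1 : ℕ)) (y1 * R) = d * min (x2 * p.1) (y1 * (R / d)) := by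
    rw [mul_min_of_nonneg _ _ hd0.le]
    push_cast
    congr 1 <;> field_simp
  have hcol : d * p.2 ∈ Finset.Icc 1 ⌊min (x2 * (d * p.1 : ℕ)) (y1 * R)⌋₊ ↔
      p.2 ∈ Finset.Icc 1 ⌊min (x2 * p.1) (y1 * (R / d))⌋₊ := by
    have hone : 1 ≤ d * p.2 ↔ 1 ≤ p.2 := by
      simp [Nat.one_le_iff_ne_zero, hd]
    rw [Finset.mem_Icc, Finset.mem_Icc, hone]
    refine and_congr_right fun hp => ?_
    rw [Nat.le_floor_iff' (mul_ne_zero hd (by omega)), Nat.le_floor_iff' (by omega), hmin,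
      Nat.cast_mul, mul_le_mul_iff_right₀ hd0]
  simp only [latticeTerm, Prod.smul_fst, Prod.smul_snd, smul_eq_mul, hrow, hcol, mul_ite, mul_zero]
  congr 1
  push_cast
  field_simp

lemma tsum_latticeTerm_mul (w : ℕ → ℝ) (n : ℕ) :
    ∑' m, latticeTerm x1 x2 y1 y2 R (n, m) * w m =
      if R / y2 ≤ n then ∑ m ∈ Finset.Icc 1 ⌊min (x2 * n) (y1 * R)⌋₊,
        x1 / ((n : ℝ) * ((n : ℝ) + x1 * m)) * w m else 0 := by
  split_ifs with h
  · rw [tsum_eq_sum (s := Finset.Icc 1 ⌊min (x2 * n) (y1 * R)⌋₊)]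
    · refine Finset.sum_congr rfl fun m hm => ?_
      rw [latticeTerm, if_pos ⟨h, hm⟩]
    · intro m hm
      rw [latticeTerm, if_neg fun hc => hm hc.2, zero_mul]
  · simp [latticeTerm, h]

lemma NN_eq_tsum_latticeTerm (hx1 : 0 ≤ x1) : NN x1 x2 y1 y2 R =
    2 * ∑' p : ℕ × ℕ, if Nat.gcd p.2 p.1 = 1 then latticeTerm x1 x2 y1 y2 R p else 0 := by
  have hsum : Summable fun p : ℕ × ℕ =>
      if Nat.gcd p.2 p.1 = 1 then latticeTerm x1 x2 y1 y2 R p else 0 :=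
    summable_ite (summable_latticeTerm hx1) _
  rw [NN, hsum.tsum_prod]
  congr 1
  refine tsum_congr fun n => ?_
  have hrow := tsum_latticeTerm_mul (x1 := x1) (x2 := x2) (y1 := y1) (y2 := y2) (R := R)
    (fun m => if Nat.gcd m n = 1 then 1 else 0) n
  simp only [mul_boole] at hrow
  exact hrow.symm

lemma NN_eq_sum_moebius (hx1 : 0 ≤ x1) :
    NN x1 x2 y1 y2 R = 2 * ∑ d ∈ Finset.Icc 1 ⌊y1 * R⌋₊,
      (ArithmeticFunction.moebius d : ℝ) / (d : ℝ) ^ 2 *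
        ∑' p, latticeTerm x1 x2 y1 y2 (R / d) p := by
  rw [NN_eq_tsum_latticeTerm hx1, tsum_ite_gcd_eq_one_eq_sum_moebius (summable_latticeTerm hx1)
    fun p hp => latticeTerm_eq_zero hp]
  congr 1
  refine Finset.sum_congr rfl fun d hd => ?_
  have hd0 : d ≠ 0 := Nat.one_le_iff_ne_zero.1 (Finset.mem_Icc.1 hd).1
  rw [tsum_congr (latticeTerm_smul hd0), tsum_mul_left, ← mul_assoc, mul_one_div]

lemma norm_tsum_latticeTerm_row_sub_le (hx1 : 0 < x1) (hx2 : 0 < x2) (hy1 : 0 < y1) (hy2 : 0 < y2)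
    (hR : 0 < R) (n : ℕ) :
    ‖∑' m, latticeTerm x1 x2 y1 y2 R (n, m) -
      (if R / y2 ≤ n then rowDensity (x1 * x2) (x1 * (y1 * R)) n else 0)‖ ≤
      x1 * if R / y2 ≤ n then 1 / (n : ℝ) ^ 2 else 0 := by
  have hrow := tsum_latticeTerm_mul (x1 := x1) (x2 := x2) (y1 := y1) (y2 := y2) (R := R) 1 n
  simp only [Pi.one_apply, mul_one] at hrow
  rw [hrow]
  split_ifs with h
  · have hn : (0 : ℝ) < n := (div_pos hR hy2).trans_le h
    have hmin : x1 * (min (x2 * n) (y1 * R) / n) = min (x1 * x2) (x1 * (y1 * R) / n) := by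
      rw [← min_div_div_right hn.le, mul_min_of_nonneg _ _ hx1.le, mul_div_cancel_right₀ _ hn.ne',
        ← mul_div_assoc]
    rw [rowDensity, ← hmin]
    exact abs_sum_div_mul_add_sub_log_le hx1.le hn (by positivity)
  · simp

lemma abs_tsum_latticeTerm_sub_le (hx1 : 0 < x1) (hx2 : 0 < x2) (hy1 : 0 < y1) (hy2 : 0 < y2)
    (hx : x1 * x2 ≤ 1) (hcase : x2 ≤ y1 * y2) (hR : 0 < R) :
    |∑' p, latticeTerm x1 x2 y1 y2 R p - limitConst x1 x2 y1 y2| ≤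
      x1 * y2 * (2 + x2) / R := by
  set a := R / y2 with ha
  have ha0 : 0 < a := by positivity
  have hac : a * (x1 * x2) ≤ x1 * (y1 * R) := calc
    a * (x1 * x2) ≤ a * (x1 * (y1 * y2)) := by gcongr
    _ = x1 * (y1 * R) := by rw [ha]; field_simp
  have hlimit : log (1 + x1 * x2) * log (x1 * (y1 * R) / (a * (x1 * x2))) - Li2 (-(x1 * x2)) =
      limitConst x1 x2 y1 y2 := by
    rw [limitConst, ha]
    congr 3
    field_simp
  set ψ : ℕ → ℝ := fun n => if a ≤ n then rowDensity (x1 * x2) (x1 * (y1 * R)) n else 0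
  have hψ : |∑' n, ψ n - limitConst x1 x2 y1 y2| ≤ x1 * x2 / a := by
    rw [← hlimit]
    exact abs_tsum_ite_rowDensity_sub_le ha0 (by positivity) hx hac
  have hrows : |∑' p, latticeTerm x1 x2 y1 y2 R p - ∑' n, ψ n| ≤ x1 * (2 / a) := by
    have hlat := summable_latticeTerm (x2 := x2) (y1 := y1) (y2 := y2) (R := R) hx1.le
    rw [hlat.tsum_prod, ← hlat.prod.tsum_sub (summable_ite_rowDensity ha0 (by positivity) hx hac)]
    refine (tsum_of_norm_bounded ((summable_ite_one_div_sq a).mul_left x1).hasSum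
      (norm_tsum_latticeTerm_row_sub_le hx1 hx2 hy1 hy2 hR)).trans ?_
    rw [tsum_mul_left]
    gcongr
    exact tsum_ite_one_div_sq_le ha0
  calc |∑' p, latticeTerm x1 x2 y1 y2 R p - limitConst x1 x2 y1 y2|
      ≤ x1 * (2 / a) + x1 * x2 / a := (abs_sub_le _ _ _).trans (add_le_add hrows hψ)
    _ = x1 * y2 * (2 + x2) / R := by rw [ha]; field_simp

lemma abs_limitConst_le (hx1 : 0 < x1) (hx2 : 0 < x2) (hx : x1 * x2 ≤ 1) (hcase : x2 ≤ y1 * y2) :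
    |limitConst x1 x2 y1 y2| ≤ 2 * (x1 * (y1 * y2)) := by
  have hb : 0 < x1 * x2 := by positivity
  have hu : 1 ≤ y1 * y2 / x2 := (one_le_div hx2).2 hcase
  have hlogs : |log (1 + x1 * x2) * log (y1 * y2 / x2)| ≤ x1 * (y1 * y2 - x2) := by
    rw [abs_of_nonneg (mul_nonneg (log_nonneg (by linarith)) (log_nonneg hu))]
    calc log (1 + x1 * x2) * log (y1 * y2 / x2)
        ≤ (1 + x1 * x2 - 1) * (y1 * y2 / x2 - 1) :=
          mul_le_mul (log_le_sub_one_of_pos (by linarith)) (log_le_sub_one_of_pos (by linarith))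
            (log_nonneg hu) (by linarith)
      _ = x1 * (y1 * y2 - x2) := by field_simp; ring
  have hLi2 : |Li2 (-(x1 * x2))| ≤ x1 * x2 * 2 := by
    have habs : |(-(x1 * x2))| = x1 * x2 := by rw [abs_neg, abs_of_pos hb]
    refine (abs_Li2_le (habs.trans_le hx)).trans ?_
    rw [habs]
    gcongr
    nlinarith [pi_lt_d2, pi_pos]
  calc |limitConst x1 x2 y1 y2| ≤ x1 * (y1 * y2 - x2) + x1 * x2 * 2 :=
        (abs_sub _ _).trans (add_le_add hlogs hLi2)
    _ = x1 * (y1 * y2) + x1 * x2 := by ring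
    _ ≤ 2 * (x1 * (y1 * y2)) := by
        rw [two_mul]
        gcongr

lemma abs_NN_sub_le (hx1 : 0 < x1) (hx2 : 0 < x2) (hy1 : 0 < y1) (hy2 : 0 < y2)
    (hx : x1 * x2 ≤ 1) (hcase : x2 ≤ y1 * y2) (hR : 0 < R) :
    |NN x1 x2 y1 y2 R - 2 / (π ^ 2 / 6) * limitConst x1 x2 y1 y2| ≤
      2 * y2 * ((2 + x2) * (1 + log⁺ (y1 * R)) + 4) * x1 / R := by
  set A := limitConst x1 x2 y1 y2
  have hrows : ∀ d ∈ Finset.Icc 1 ⌊y1 * R⌋₊,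
      |∑' p, latticeTerm x1 x2 y1 y2 (R / d) p - A| ≤ x1 * y2 * (2 + x2) / R * d := by
    intro d hd
    have hd0 : (0 : ℝ) < d := by exact_mod_cast (Finset.mem_Icc.1 hd).1
    refine (abs_tsum_latticeTerm_sub_le hx1 hx2 hy1 hy2 hx hcase (div_pos hR hd0)).trans_eq ?_
    rw [div_div_eq_mul_div, mul_div_right_comm]
  have hmoebius := abs_sum_moebius_div_sq_mul_sub_le (by positivity) (mul_pos hy1 hR) hrows
  have hA : |A| ≤ 2 * (x1 * (y1 * y2)) := abs_limitConst_le hx1 hx2 hx hcase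
  rw [NN_eq_sum_moebius hx1.le, ← mul_one_div 2 (π ^ 2 / 6), mul_assoc, ← mul_sub, abs_mul, abs_two]
  calc _ ≤ 2 * (x1 * y2 * (2 + x2) / R * (1 + log⁺ (y1 * R)) +
          2 / (y1 * R) * (2 * (x1 * (y1 * y2)))) := by
        grw [hmoebius, hA]
    _ = 2 * y2 * ((2 + x2) * (1 + log⁺ (y1 * R)) + 4) * x1 / R := by
        field_simp
        ring

end LatticeSum

theorem N_asymptotic_first_case_general {x1 x2 y1 y2 R : ℝ} (hx1 : 0 < x1) (hx2 : 0 < x2)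
    (hx : x1 * x2 ≤ 1) (hy1 : 0 < y1) (hy2 : 0 < y2) (hcase : x2 ≤ y1 * y2) (hR : 2 ≤ R) :
    |NN x1 x2 y1 y2 R -
      2 / (π ^ 2 / 6) * (log (1 + x1 * x2) * log (y1 * y2 / x2) - Li2 (-(x1 * x2)))| ≤
      2 * y2 * ((2 + x2) * (3 + 2 * log⁺ y1) + 8) * x1 * log R / R := by
  have hlogR : 1 ≤ 2 * log R := by
    linarith [log_le_log two_pos hR, log_two_gt_d9]
  have hposLog : log⁺ (y1 * R) ≤ log⁺ y1 + log R := by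
    rw [← posLog_eq_log (by rw [abs_of_nonneg] <;> linarith : 1 ≤ |R|)]
    exact posLog_mul
  have hfactor : (2 + x2) * (1 + log⁺ (y1 * R)) + 4 ≤
      ((2 + x2) * (3 + 2 * log⁺ y1) + 8) * log R := by
    have hy1log : log⁺ y1 ≤ log⁺ y1 * (2 * log R) := le_mul_of_one_le_right posLog_nonneg hlogR
    have : (2 + x2) * (1 + log⁺ (y1 * R)) ≤ (2 + x2) * ((3 + 2 * log⁺ y1) * log R) := by
      gcongr
      linarith
    linarith
  calc _ ≤ 2 * y2 * ((2 + x2) * (1 + log⁺ (y1 * R)) + 4) * x1 / R :=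
        abs_NN_sub_le hx1 hx2 hy1 hy2 hx hcase (by linarith)
    _ ≤ 2 * y2 * (((2 + x2) * (3 + 2 * log⁺ y1) + 8) * log R) * x1 / R := by gcongr
    _ = _ := by ring

theorem N_asymptotic_first_case (x1 x2 y1 y2 : ℝ)
    (hx1 : 0 < x1) (hx1' : x1 ≤ 1)
    (hx2 : 0 < x2) (hx2' : x2 ≤ 1) (hy1 : 0 < y1) (hy1' : y1 ≤ 1)
    (hy2 : 0 < y2) (hy2' : y2 ≤ 1) (hcase : x2 ≤ y1 * y2) :
    ∃ C : ℝ, 0 < C ∧ ∀ R : ℝ, 2 ≤ R →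
      |NN x1 x2 y1 y2 R -
        2 / (π ^ 2 / 6) *
          (Real.log (1 + x1 * x2) * Real.log (y1 * y2 / x2) - Li2 (-(x1 * x2)))| ≤
        C * x1 * Real.log R / R :=
  ⟨2 * y2 * ((2 + x2) * (3 + 2 * log⁺ y1) + 8),
    by have := posLog_nonneg (x := y1); positivity,
    fun _ hR => N_asymptotic_first_case_general hx1 hx2 (mul_le_one₀ hx1' hx2.le hx2') hy1 hy2
      hcase hR⟩
end
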